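/- arXiv:1201.4075 — 2 statements merged into one kernel-verified Lean document; each statement's English description precedes it below -/
import Mathlib

section
/- Let v, w ∈ ℂ and let K := [v,w] be the closed line segment joining v and w. Then there exists a function in Exp(K) that is frequently hypercyclic for T₁ on Exp(K) if and only if v ≠ w and both v and w are purely imaginary (i.e., K is a non-degenerate closed line segment of the imaginary axis). -/
open Filter Complex

/-- Support function `H_K(z) = sup { Re (z·u) : u ∈ K }` of a set `K ⊆ ℂ`. -/
noncomputable def suppFn (K : Set ℂ) (z : ℂ) : ℝ :=
  sSup ((fun u => (z * u).re) '' K)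

/-- The norm `‖f‖_{K,n} = sup_z |f z| · exp (−H_K z − |z|/n)`. -/
noncomputable def expNorm (K : Set ℂ) (n : ℕ) (f : ℂ → ℂ) : ℝ :=
  sSup (Set.range fun z : ℂ => ‖f z‖ * Real.exp (-(suppFn K z) - ‖z‖ / n))

/-- Membership in `Exp(K)`: `f` is entire and all the norms `‖f‖_{K,n}` are finite. -/
def MemExp (K : Set ℂ) (f : ℂ → ℂ) : Prop :=
  Differentiable ℂ f ∧ ∀ n : ℕ, 0 < n →
    BddAbove (Set.range fun z : ℂ => ‖f z‖ * Real.exp (-(suppFn K z) - ‖z‖ / n))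

open scoped Classical in
/-- Lower density of a set of natural numbers. -/
noncomputable def lowerDensity (A : Set ℕ) : ℝ :=
  liminf (fun N : ℕ =>
    (((Finset.range (N + 1)).filter (fun n => n ∈ A)).card : ℝ) / N) atTop

/-- Lower density of a discrete subset of `ℂ`. -/
noncomputable def ldensC (Λ : Set ℂ) : ℝ :=
  liminf (fun r : ℝ => (Nat.card {z : ℂ // z ∈ Λ ∧ ‖z‖ ≤ r} : ℝ) / r) atTop

/-- `f` is hypercyclic for the translation `T₁` on `Exp(K)`. -/
def HCExp (K : Set ℂ) (f : ℂ → ℂ) : Prop :=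
  MemExp K f ∧ ∀ g : ℂ → ℂ, MemExp K g → ∀ n : ℕ, 0 < n → ∀ ε > (0 : ℝ),
    ∃ k : ℕ, expNorm K n (fun z => f (z + (k : ℂ)) - g z) < ε

/-- `f` is frequently hypercyclic for the translation `T₁` on `Exp(K)`. -/
def FHCExp (K : Set ℂ) (f : ℂ → ℂ) : Prop :=
  MemExp K f ∧ ∀ g : ℂ → ℂ, MemExp K g → ∀ n : ℕ, 0 < n → ∀ ε > (0 : ℝ),
    0 < lowerDensity {k : ℕ | expNorm K n (fun z => f (z + (k : ℂ)) - g z) < ε}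

/-- `f` is hypercyclic (Birkhoff-universal) for `T₁` on `H(ℂ)`. -/
def HCEnt (f : ℂ → ℂ) : Prop :=
  Differentiable ℂ f ∧ ∀ g : ℂ → ℂ, Differentiable ℂ g → ∀ R > (0 : ℝ), ∀ ε > (0 : ℝ),
    ∃ k : ℕ, ∀ z : ℂ, ‖z‖ ≤ R → ‖f (z + (k : ℂ)) - g z‖ < ε

/-- `f` is frequently hypercyclic (frequently Birkhoff-universal) for `T₁` on `H(ℂ)`. -/
def FHCEnt (f : ℂ → ℂ) : Prop :=
  Differentiable ℂ f ∧ ∀ g : ℂ → ℂ, Differentiable ℂ g → ∀ R > (0 : ℝ), ∀ ε > (0 : ℝ),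
    0 < lowerDensity {k : ℕ | ∀ z : ℂ, ‖z‖ ≤ R → ‖f (z + (k : ℂ)) - g z‖ < ε}

/-- `f` is an entire function of (finite) exponential type. -/
def ExpType (f : ℂ → ℂ) : Prop :=
  Differentiable ℂ f ∧ ∃ C τ : ℝ, ∀ z : ℂ, ‖f z‖ ≤ C * Real.exp (τ * ‖z‖)

/-- The indicator function `h_f(θ) = limsup_{r→∞} log |f(r e^{iθ})| / r`. -/
noncomputable def indicatorFn (f : ℂ → ℂ) (θ : ℝ) : ℝ :=
  limsup (fun r : ℝ => Real.log ‖f ((r : ℂ) * Complex.exp (θ * Complex.I))‖ / r) atTop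


lemma exists_factor {U : Set ℂ} (hU : IsOpen U) (S : Finset ℂ) : (∀ a ∈ S, a ∈ U) → ∀ f : ℂ → ℂ,
    DifferentiableOn ℂ f U → (∀ a ∈ S, f a = 0) →
    ∃ g : ℂ → ℂ, DifferentiableOn ℂ g U ∧ ∀ z, f z = (∏ a ∈ S, (z - a)) * g z := by
  classical
  induction S using Finset.induction_on with
  | empty => intro _ f hf _; exact ⟨f, hf, by simp⟩
  | insert a S ha ih =>
    intro hS f hf h0
    have haU : a ∈ U := hS a (by simp)
    have h1 : ∀ z, f z = (z - a) * dslope f a z := by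
      intro z
      have := sub_smul_dslope f a z
      rw [h0 a (by simp), sub_zero, smul_eq_mul] at this
      exact this.symm
    have hd : DifferentiableOn ℂ (dslope f a) U :=
      (Complex.differentiableOn_dslope (hU.mem_nhds haU)).2 hf
    obtain ⟨g, hg, hg2⟩ := ih (fun x hx => hS x (by simp [hx])) (dslope f a) hd (by
      intro x hx
      have h2 := h1 x
      rw [h0 x (by simp [hx])] at h2
      have : x - a ≠ 0 := sub_ne_zero.2 (by rintro rfl; exact ha hx)
      exact (mul_eq_zero.1 h2.symm).resolve_left this)
    refine ⟨g, hg, fun z => ?_⟩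
    rw [Finset.prod_insert ha, h1 z, hg2 z, mul_assoc]

lemma blaschke_bound {U : Set ℂ} (hU : IsOpen U) (hUb : Metric.closedBall (0:ℂ) 1 ⊆ U)
    (f : ℂ → ℂ) (hf : DifferentiableOn ℂ f U) (C : ℝ) (hC : ∀ z, ‖z‖ = 1 → ‖f z‖ ≤ C)
    (S : Finset ℂ) (hS : ∀ a ∈ S, ‖a‖ < 1) (h0 : ∀ a ∈ S, f a = 0) (z : ℂ) (hz : ‖z‖ < 1) :
    ‖f z‖ * ∏ a ∈ S, ‖1 - (starRingEnd ℂ) a * z‖ ≤ C * ∏ a ∈ S, ‖z - a‖ := by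
  obtain ⟨g, hg, hg2⟩ := exists_factor hU S (fun a ha => hUb (by simpa using (hS a ha).le)) f hf h0
  set G : ℂ → ℂ := fun z => g z * ∏ a ∈ S, (1 - (starRingEnd ℂ) a * z) with hG
  have hGd : DifferentiableOn ℂ G U := by
    apply hg.mul
    apply Differentiable.differentiableOn
    fun_prop
  have hb : ∀ z ∈ frontier (Metric.ball (0:ℂ) 1), ‖G z‖ ≤ C := by
    intro z hz
    rw [frontier_ball _ one_ne_zero] at hz
    have hz1 : ‖z‖ = 1 := by simpa using hz
    have : ‖G z‖ = ‖f z‖ := by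
      simp only [hG, hg2 z, norm_mul, norm_prod]
      rw [mul_comm]
      congr 1
      apply Finset.prod_congr rfl
      intro a ha
      have e1 : z * (starRingEnd ℂ) z = 1 := by
        rw [Complex.mul_conj, Complex.normSq_eq_norm_sq, hz1]; simp
      have e2 : (1 - (starRingEnd ℂ) a * z) = z * (starRingEnd ℂ) (z - a) := by
        rw [map_sub, mul_sub, e1]; ring
      rw [e2, norm_mul, hz1, one_mul, Complex.norm_conj]
    rw [this]; exact hC z hz1
  have key := Complex.norm_le_of_forall_mem_frontier_norm_le (Metric.isBounded_ball)
    (DifferentiableOn.diffContOnCl (by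
      rw [closure_ball _ one_ne_zero]; exact hGd.mono hUb)) hb
    (subset_closure (show z ∈ Metric.ball (0:ℂ) 1 by simpa using hz))
  have : ‖f z‖ * ∏ a ∈ S, ‖1 - (starRingEnd ℂ) a * z‖ = (∏ a ∈ S, ‖z - a‖) * ‖G z‖ := by
    simp only [hG, hg2 z, norm_mul, norm_prod]; ring
  rw [this, mul_comm C]
  gcongr

/-- quantitative version of the single factor estimate -/
lemma blaschke_factor (R : ℝ) (hR : 1 ≤ R) (a : ℂ) (ha : ‖a‖ ^ 2 ≤ R * a.re) (κ : ℝ)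
    (hκ : κ * (1 + ‖a‖) ^ 2 ≤ a.re) :
    ‖((1:ℂ) / R - 1) - (a / R - 1)‖ ≤
      Real.exp (-κ / 2) * ‖1 - (starRingEnd ℂ) (a / R - 1) * ((1:ℂ) / R - 1)‖ := by
  have hR0 : 0 < R := by linarith
  have hRC : (R:ℂ) ≠ 0 := by exact_mod_cast hR0.ne'
  have e1 : ((1:ℂ) / R - 1) - (a / R - 1) = (1 - a) / R := by field_simp; ring
  have e2 : 1 - (starRingEnd ℂ) (a / R - 1) * ((1:ℂ) / R - 1)
      = (1 + (starRingEnd ℂ) a * (1 - 1/R)) / R := by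
    simp only [map_sub, map_div₀, Complex.conj_ofReal, map_one]
    field_simp; ring
  rw [e1, e2, norm_div, norm_div, ← mul_div_assoc]
  gcongr
  -- squares
  have h1 : ‖1 - a‖ ^ 2 = (1 - a.re) ^ 2 + a.im ^ 2 := by
    rw [← Complex.normSq_eq_norm_sq, Complex.normSq_apply]; simp; ring
  set t : ℝ := 1 - 1 / R with ht
  have ht0 : 0 ≤ t := by rw [ht, sub_nonneg, div_le_one hR0]; exact hR
  have ht1 : t ≤ 1 := by rw [ht]; have : 0 < 1 / R := by positivity
                         linarith
  have h2 : ‖1 + (starRingEnd ℂ) a * (1 - 1/R)‖ ^ 2 = (1 + t * a.re) ^ 2 + (t * a.im) ^ 2 := by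
    have : (1 : ℂ) - 1 / R = (t : ℂ) := by rw [ht]; push_cast; ring
    rw [this, ← Complex.normSq_eq_norm_sq, Complex.normSq_apply]; simp; ring
  have h3 : ‖a‖ ^ 2 = a.re ^ 2 + a.im ^ 2 := by
    rw [← Complex.normSq_eq_norm_sq, Complex.normSq_apply]; ring
  have hre : 0 ≤ a.re := by
    have : 0 ≤ R * a.re := le_trans (by positivity) ha
    exact nonneg_of_mul_nonneg_right this hR0
  have hare : a.re ≤ ‖a‖ := Complex.re_le_norm a
  set D := (1 + t * a.re) ^ 2 + (t * a.im) ^ 2 with hD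
  have hDle : D ≤ (1 + ‖a‖) ^ 2 := by
    have : D = 1 + 2 * t * a.re + t^2 * ‖a‖^2 := by rw [hD, h3]; ring
    rw [this]
    have : t * a.re ≤ ‖a‖ := by nlinarith [norm_nonneg a]
    have : t ^ 2 * ‖a‖^2 ≤ 1 * ‖a‖^2 := by gcongr; nlinarith
    nlinarith
  have hdiff : a.re ≤ D - ‖1 - a‖ ^ 2 := by
    have e : D - ‖1 - a‖ ^ 2 = (1 + t) * (2 * a.re - (1 - t) * ‖a‖ ^ 2) := by
      rw [hD, h1, h3]; ring
    have h1t : (1 - t) * ‖a‖ ^ 2 ≤ a.re := by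
      have : 1 - t = 1 / R := by rw [ht]; ring
      rw [this, one_div, inv_mul_le_iff₀ hR0]; exact ha
    rw [e]; nlinarith
  have hDnn : 0 ≤ D := by positivity
  have hsq : ‖1 - a‖ ^ 2 ≤ Real.exp (-κ) * D := by
    have h4 : 1 - κ ≤ Real.exp (-κ) := by linarith [Real.add_one_le_exp (-κ)]
    have h5 : κ * D ≤ a.re := by
      rcases le_total κ 0 with h | h
      · nlinarith
      · exact le_trans (by gcongr) hκ
    nlinarith
  have : ‖1 - a‖ ^ 2 ≤ (Real.exp (-κ / 2) * ‖1 + (starRingEnd ℂ) a * (1 - 1/R)‖) ^ 2 := by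
    rw [mul_pow, h2, ← Real.exp_nat_mul]
    convert hsq using 3
    push_cast; ring
  exact le_of_sq_le_sq this (by positivity)

lemma log_growth (ζ : ℂ) (hζ : 0 < ζ.re) (M : ℝ) (hM : ‖ζ‖ ≤ M) :
    ‖ζ‖ ≤ (ζ * ((Real.log M + 1 : ℝ) - Complex.log ζ)).re := by
  have hn : 0 < ‖ζ‖ := norm_pos_iff.2 (by rintro rfl; simp at hζ)
  have e : (ζ * ((Real.log M + 1 : ℝ) - Complex.log ζ)).re
      = ζ.re * (Real.log M + 1 - Real.log ‖ζ‖) + ζ.im * ζ.arg := by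
    rw [Complex.mul_re]
    simp [Complex.log_re, Complex.log_im]
  rw [e]
  have hl : Real.log ‖ζ‖ ≤ Real.log M := Real.log_le_log hn hM
  set θ := ζ.arg with hθ
  have h1 : ζ.re = ‖ζ‖ * Real.cos θ := (Complex.norm_mul_cos_arg ζ).symm
  have h2 : ζ.im = ‖ζ‖ * Real.sin θ := (Complex.norm_mul_sin_arg ζ).symm
  have hθ2 : |θ| ≤ Real.pi / 2 := Complex.abs_arg_le_pi_div_two_iff.2 hζ.le
  have hkey : 1 ≤ Real.cos θ + θ * Real.sin θ := by
    have c1 := Real.one_sub_sq_div_two_le_cos (x := θ)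
    have c2 : 2 / Real.pi * |θ| ≤ Real.sin |θ| := Real.mul_le_sin (abs_nonneg _) hθ2
    have c3 : θ * Real.sin θ = |θ| * Real.sin |θ| := by
      rcases abs_cases θ with ⟨h, _⟩ | ⟨h, _⟩ <;> rw [h]
      rw [Real.sin_neg]; ring
    have c4 : 1 / 2 ≤ 2 / Real.pi := by
      rw [div_le_div_iff₀ (by norm_num) Real.pi_pos]; linarith [Real.pi_le_four]
    have c5 : |θ| ^ 2 = θ ^ 2 := sq_abs θ
    rw [c3]
    have : 1 / 2 * |θ| ≤ Real.sin |θ| := le_trans (by gcongr) c2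
    nlinarith [abs_nonneg θ]
  have : ζ.re ≤ ζ.re * (Real.log M + 1 - Real.log ‖ζ‖) := by nlinarith
  calc ‖ζ‖ ≤ ‖ζ‖ * (Real.cos θ + θ * Real.sin θ) := by nlinarith
    _ = ζ.re + ζ.im * θ := by rw [h1, h2]; ring
    _ ≤ _ := by linarith
open scoped Classical in
lemma dens_bdd (A : Set ℕ) (N : ℕ) :
    (((Finset.range (N + 1)).filter (fun n => n ∈ A)).card : ℝ) / N ≤ 2 := by
  rcases Nat.eq_zero_or_pos N with h | h
  · simp [h]
  · have hN : (1:ℝ) ≤ N := by exact_mod_cast h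
    rw [div_le_iff₀ (by linarith)]
    have : ((Finset.range (N + 1)).filter (fun n => n ∈ A)).card ≤ N + 1 :=
      (Finset.card_filter_le _ _).trans (by simp)
    have h2 : (((Finset.range (N + 1)).filter (fun n => n ∈ A)).card : ℝ) ≤ N + 1 := by
      exact_mod_cast this
    linarith

open scoped Classical in
lemma pos_dens {A : Set ℕ} (h : 0 < lowerDensity A) : ∃ δ > (0:ℝ), ∃ N0 : ℕ, ∀ N ≥ N0,
    δ * N ≤ ((Finset.range (N + 1)).filter (fun n => n ∈ A)).card := by
  have h1 : lowerDensity A / 2 < lowerDensity A := by linarith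
  have := Filter.eventually_lt_of_lt_liminf (f := atTop) (u := fun N : ℕ =>
    (((Finset.range (N + 1)).filter (fun n => n ∈ A)).card : ℝ) / N) h1
    ⟨0, by simp only [eventually_map]; exact Eventually.of_forall fun N => by positivity⟩
  obtain ⟨N0, hN0⟩ := eventually_atTop.1 this
  refine ⟨lowerDensity A / 2, by linarith, N0 + 1, fun N hN => ?_⟩
  have h2 := hN0 N (by omega)
  have hN : (0:ℝ) < N := by exact_mod_cast (by omega : 0 < N)
  rw [lt_div_iff₀ hN] at h2
  exact h2.le

open scoped Classical in
lemma dens_pos {A : Set ℕ} (δ : ℝ) (hδ : 0 < δ) (N0 : ℕ) (h : ∀ N ≥ N0,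
    δ * N ≤ ((Finset.range (N + 1)).filter (fun n => n ∈ A)).card) : 0 < lowerDensity A := by
  refine lt_of_lt_of_le hδ ?_
  apply Filter.le_liminf_of_le
  · exact Filter.isCoboundedUnder_ge_of_le _ (x := 2) (fun N => dens_bdd A N)
  · filter_upwards [eventually_ge_atTop (N0 + 1)] with N hN
    have hN' : (0:ℝ) < N := by exact_mod_cast (by omega : 0 < N)
    rw [le_div_iff₀ hN']
    exact h N (by omega)

lemma dens_infinite {A : Set ℕ} (h : 0 < lowerDensity A) (M : ℕ) : ∃ k ∈ A, M ≤ k := by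
  classical
  obtain ⟨δ, hδ, N0, hN⟩ := pos_dens h
  by_contra hcon
  push Not at hcon
  obtain ⟨n, hn⟩ := exists_nat_gt (M / δ)
  have h1 := hN (max n N0) (le_max_right _ _)
  have h2 : ((Finset.range (max n N0 + 1)).filter (fun n => n ∈ A)).card ≤ M := by
    calc _ ≤ (Finset.range M).card := Finset.card_le_card (by
            intro x hx
            simp only [Finset.mem_filter, Finset.mem_range] at hx ⊢
            exact hcon x hx.2)
      _ = M := by simp
  have h2' : (((Finset.range (max n N0 + 1)).filter (fun n => n ∈ A)).card : ℝ) ≤ M := by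
    exact_mod_cast h2
  rw [div_lt_iff₀ hδ] at hn
  have : (n:ℝ) ≤ ((max n N0 : ℕ) : ℝ) := by exact_mod_cast le_max_left _ _
  nlinarith

open scoped Classical in
lemma harmonic_sum {A : Set ℕ} (h : 0 < lowerDensity A) (k1 : ℕ) : ∃ q : ℕ, 2 ≤ q ∧ ∃ σ > (0:ℝ),
    ∃ c0 : ℝ, ∀ J : ℕ, σ * J - c0 ≤
      ∑ k ∈ (Finset.range (q ^ J + 1)).filter (fun k => k ∈ A ∧ k1 ≤ k), (1:ℝ) / k := by
  obtain ⟨δ, hδ, N0, hN⟩ := pos_dens h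
  obtain ⟨q0, hq0⟩ := exists_nat_gt (4 / δ)
  set q := q0 + 2 with hq
  have hq2 : 2 ≤ q := by omega
  have hδq : 4 ≤ δ * q := by
    rw [div_lt_iff₀ hδ] at hq0
    have : (q0:ℝ) ≤ q := by exact_mod_cast (by omega : q0 ≤ q)
    nlinarith
  set j0 := max N0 k1 with hj0
  have hpow : ∀ J : ℕ, J < q ^ J := fun J => Nat.lt_pow_self (by omega)
  set s : ℕ → ℝ := fun J =>
    ∑ k ∈ (Finset.range (q ^ J + 1)).filter (fun k => k ∈ A ∧ k1 ≤ k), (1:ℝ) / k with hs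
  have hs0 : ∀ J, 0 ≤ s J := fun J => Finset.sum_nonneg (fun i _ => by positivity)
  have step : ∀ J ≥ j0, s J + δ / 2 ≤ s (J + 1) := by
    intro J hJ
    have hmono : q ^ J ≤ q ^ (J+1) := Nat.pow_le_pow_right (by omega) (by omega)
    have hk1 : k1 ≤ q ^ J := le_trans (le_trans (le_max_right _ _) hJ) (hpow J).le
    have hN0 : N0 ≤ q ^ (J + 1) :=
      le_trans (le_trans (le_trans (le_max_left _ _) hJ) (hpow J).le) hmono
    set T := (Finset.range (q ^ (J+1) + 1)).filter (fun k => k ∈ A ∧ q ^ J < k) with hT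
    have hsplit : s J + ∑ k ∈ T, (1:ℝ) / k ≤ s (J + 1) := by
      simp only [hs]
      rw [← Finset.sum_union]
      · apply Finset.sum_le_sum_of_subset_of_nonneg
        · intro x hx
          simp only [hT, Finset.mem_union, Finset.mem_filter, Finset.mem_range] at hx ⊢
          rcases hx with hx | hx
          · exact ⟨by omega, hx.2⟩
          · exact ⟨hx.1, hx.2.1, by omega⟩
        · intros; positivity
      · rw [Finset.disjoint_left]
        intro x hx hx2
        simp only [hT, Finset.mem_filter, Finset.mem_range] at hx hx2
        omega
    have hcard : δ / 2 * (q:ℝ) ^ (J+1) ≤ T.card := by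
      have h1 := hN _ hN0
      have h2 : ((Finset.range (q ^ (J+1) + 1)).filter (fun n => n ∈ A)).card
          ≤ (q ^ J + 1) + T.card := by
        calc _ ≤ (Finset.range (q ^ J + 1) ∪ T).card := Finset.card_le_card (by
                intro x hx
                simp only [hT, Finset.mem_union, Finset.mem_filter, Finset.mem_range] at hx ⊢
                by_cases hxx : x < q ^ J + 1
                · exact Or.inl hxx
                · exact Or.inr ⟨hx.1, hx.2, by omega⟩)
          _ ≤ _ := (Finset.card_union_le _ _).trans (by simp)
      have h2' : (((Finset.range (q ^ (J+1) + 1)).filter (fun n => n ∈ A)).card : ℝ)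
          ≤ ((q:ℝ) ^ J + 1) + T.card := by exact_mod_cast h2
      push_cast at h1
      have h3 : (1:ℝ) ≤ (q:ℝ) ^ J := one_le_pow₀ (by exact_mod_cast (by omega : 1 ≤ q))
      have h4 : 4 * (q:ℝ) ^ J ≤ δ * (q:ℝ) ^ (J + 1) := by
        rw [pow_succ]; nlinarith
      linarith
    have hqp : (0:ℝ) < (q:ℝ) ^ (J+1) := by
      apply pow_pos; exact_mod_cast (by omega : 0 < q)
    have hsum : (T.card : ℝ) * (1 / (q:ℝ)^(J+1)) ≤ ∑ k ∈ T, (1:ℝ) / k := by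
      rw [← nsmul_eq_mul]
      apply Finset.card_nsmul_le_sum
      intro k hk
      simp only [hT, Finset.mem_filter, Finset.mem_range] at hk
      have : (k:ℝ) ≤ (q:ℝ)^(J+1) := by exact_mod_cast (by omega : k ≤ q ^ (J+1))
      have hk0 : (0:ℝ) < k := by exact_mod_cast (by omega : 0 < k)
      exact one_div_le_one_div_of_le hk0 this
    have : δ / 2 ≤ (T.card : ℝ) * (1 / (q:ℝ)^(J+1)) := by
      rw [mul_one_div, le_div_iff₀ hqp]; exact hcard
    linarith
  refine ⟨q, hq2, δ / 2, by linarith, δ / 2 * j0, fun J => ?_⟩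
  rcases le_total J j0 with hJ | hJ
  · have : (J:ℝ) ≤ j0 := by exact_mod_cast hJ
    have := hs0 J
    simp only [hs] at this
    nlinarith
  · change _ ≤ s J
    induction J, hJ using Nat.le_induction with
    | base => have := hs0 j0; linarith
    | succ n hn ih => have := step n hn; push_cast; linarith
lemma half_plane_aux (G : ℂ → ℂ) (hG : Differentiable ℂ G) (C ε : ℝ) (hε : 0 < ε) (hC0 : 0 ≤ C)
    (hC : ∀ ζ : ℂ, 0 < ζ.re → ‖G ζ‖ ≤ C * Real.exp (ε * ‖ζ‖)) (τ : ℝ) (hτ : 0 < τ) (R : ℝ)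
    (hR : 1 ≤ R) (Ks : Finset ℕ) (a : ℕ → ℂ) (hinj : Set.InjOn a Ks)
    (h0 : ∀ k ∈ Ks, G (a k + τ) = 0) (κ : ℕ → ℝ)
    (hpos : ∀ k ∈ Ks, 0 < (a k).re)
    (ha : ∀ k ∈ Ks, ‖a k‖ ^ 2 ≤ R * (a k).re)
    (hκ : ∀ k ∈ Ks, κ k * (1 + ‖a k‖) ^ 2 ≤ (a k).re) :
    ‖G (τ + 1)‖ ≤ C * Real.exp (ε * ((τ + 1) * (Real.log (2 * R + τ) + 1)) - ∑ k ∈ Ks, κ k / 2) := by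
  have hR0 : 0 < R := by linarith
  have hRC : (R:ℂ) ≠ 0 := by exact_mod_cast hR0.ne'
  set M : ℝ := 2 * R + τ with hM
  set ψ : ℂ → ℂ := fun z => (R + τ) + R * z with hψ
  set Φ : ℂ → ℂ := fun ζ => ζ * ((Real.log M + 1 : ℝ) - Complex.log ζ) with hΦ
  set F : ℂ → ℂ := fun z => G (ψ z) * Complex.exp (-(ε * Φ (ψ z))) with hF
  set U : Set ℂ := {z | 0 < (ψ z).re} with hU
  have hψd : Differentiable ℂ ψ := by rw [hψ]; fun_prop
  have hUo : IsOpen U := isOpen_lt continuous_const (Complex.continuous_re.comp hψd.continuous)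
  have hre : ∀ z, (ψ z).re = R + τ + R * z.re := by intro z; simp [hψ]
  have hUb : Metric.closedBall (0:ℂ) 1 ⊆ U := by
    intro z hz
    have hz1 : ‖z‖ ≤ 1 := by simpa using hz
    have : -1 ≤ z.re := by have := Complex.abs_re_le_norm z; have := neg_abs_le z.re; linarith
    show 0 < (ψ z).re
    rw [hre]; nlinarith
  have hΦd : ∀ z ∈ U, DifferentiableAt ℂ (fun z => Φ (ψ z)) z := by
    intro z hz
    have h1 : DifferentiableAt ℂ (fun z => Complex.log (ψ z)) z :=
      (hψd z).clog (Or.inl hz)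
    simp only [hΦ]
    exact (hψd z).mul ((differentiableAt_const _).sub h1)
  have hFd : DifferentiableOn ℂ F U := by
    intro z hz
    apply DifferentiableAt.differentiableWithinAt
    simp only [hF]
    exact ((hG _).comp z (hψd z)).mul (((hΦd z hz).const_mul _).neg.cexp)
  have hFn : ∀ z, ‖F z‖ = ‖G (ψ z)‖ * Real.exp (-(ε * (Φ (ψ z)).re)) := by
    intro z; simp [hF, Complex.norm_exp]
  have hFb : ∀ z, ‖z‖ = 1 → ‖F z‖ ≤ C := by
    intro z hz
    have hzU : z ∈ U := hUb (by simp [hz])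
    have hn : ‖ψ z‖ ≤ M := by
      calc ‖ψ z‖ ≤ ‖((R + τ : ℝ) : ℂ)‖ + ‖(R:ℂ) * z‖ := by
            simp only [hψ]; push_cast; exact norm_add_le _ _
        _ = M := by
            rw [norm_mul, hz, Complex.norm_real, Complex.norm_real, Real.norm_of_nonneg hR0.le,
              Real.norm_of_nonneg (by linarith)]; ring
    have h1 := log_growth (ψ z) hzU M hn
    rw [hFn]
    calc _ ≤ (C * Real.exp (ε * ‖ψ z‖)) * Real.exp (-(ε * (Φ (ψ z)).re)) := by
          gcongr; exact hC _ hzU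
      _ = C * Real.exp (ε * ‖ψ z‖ - ε * (Φ (ψ z)).re) := by
          rw [mul_assoc, ← Real.exp_add]; ring_nf
      _ ≤ C * 1 := by
          gcongr
          rw [Real.exp_le_one_iff]
          have : ‖ψ z‖ ≤ (Φ (ψ z)).re := h1
          nlinarith
      _ = C := mul_one C
  set b : ℕ → ℂ := fun k => a k / R - 1 with hb
  have hbinj : Set.InjOn b Ks := by
    intro k hk l hl hkl
    apply hinj hk hl
    simp only [hb] at hkl
    have : a k / R = a l / R := by linear_combination hkl
    field_simp at this
    exact this
  have hψb : ∀ k, ψ (b k) = a k + τ := by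
    intro k; simp only [hψ, hb]; field_simp; ring
  have hbn : ∀ k ∈ Ks, ‖b k‖ < 1 := by
    intro k hk
    have e : ‖b k‖ ^ 2 = 1 - 2 * (a k).re / R + ‖a k‖ ^ 2 / R ^ 2 := by
      have h3 : ‖a k‖ ^ 2 = (a k).re ^ 2 + (a k).im ^ 2 := by
        rw [← Complex.normSq_eq_norm_sq, Complex.normSq_apply]; ring
      have e1 : (b k).re = (a k).re / R - 1 := by simp [hb]
      have e2 : (b k).im = (a k).im / R := by simp [hb]
      rw [h3, ← Complex.normSq_eq_norm_sq, Complex.normSq_apply, e1, e2]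
      field_simp; ring
    have h1 : ‖a k‖ ^ 2 / R ^ 2 ≤ (a k).re / R := by
      rw [div_le_div_iff₀ (by positivity) hR0]; nlinarith [ha k hk]
    have h2 : 0 < (a k).re / R := div_pos (hpos k hk) hR0
    have h3 : ‖b k‖ ^ 2 < 1 := by
      rw [e]; rw [mul_div_assoc]; linarith
    nlinarith [norm_nonneg (b k)]
  set z0 : ℂ := (1:ℂ) / R - 1 with hz0
  have hψ0 : ψ z0 = τ + 1 := by simp only [hψ, hz0]; field_simp; ring
  have hz0n : ‖z0‖ < 1 := by
    have : z0 = ((1 / R - 1 : ℝ) : ℂ) := by rw [hz0]; push_cast; ring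
    rw [this, Complex.norm_real, Real.norm_eq_abs, abs_lt]
    have h1 : 0 < 1 / R := by positivity
    have h2 : 1 / R ≤ 1 := by rw [div_le_one hR0]; exact hR
    constructor <;> linarith
  have key := blaschke_bound hUo hUb F hFd C hFb (Ks.image b)
    (by intro x hx; obtain ⟨k, hk, rfl⟩ := Finset.mem_image.1 hx; exact hbn k hk)
    (by intro x hx; obtain ⟨k, hk, rfl⟩ := Finset.mem_image.1 hx
        simp only [hF, hψb, h0 k hk, zero_mul]) z0 hz0n
  rw [Finset.prod_image hbinj, Finset.prod_image hbinj] at key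
  set P : ℝ := ∏ k ∈ Ks, ‖1 - (starRingEnd ℂ) (b k) * z0‖ with hP
  have hPpos : 0 < P := by
    apply Finset.prod_pos
    intro k hk
    rw [norm_pos_iff]
    intro h
    have h1 : (starRingEnd ℂ) (b k) * z0 = 1 := by linear_combination -h
    have h2 : ‖b k‖ * ‖z0‖ = 1 := by
      rw [← Complex.norm_conj, ← norm_mul, h1, norm_one]
    nlinarith [hbn k hk, norm_nonneg (b k), norm_nonneg z0]
  have hprod : ∏ k ∈ Ks, ‖z0 - b k‖ ≤ Real.exp (- ∑ k ∈ Ks, κ k / 2) * P := by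
    rw [← Finset.sum_neg_distrib, Real.exp_sum, hP, ← Finset.prod_mul_distrib]
    apply Finset.prod_le_prod
    · intros; positivity
    · intro k hk
      have := blaschke_factor R hR (a k) (ha k hk) (κ k) (hκ k hk)
      rw [← neg_div]
      exact this
  have hFz : ‖F z0‖ ≤ C * Real.exp (- ∑ k ∈ Ks, κ k / 2) := by
    have : ‖F z0‖ * P ≤ (C * Real.exp (- ∑ k ∈ Ks, κ k / 2)) * P := by
      calc _ ≤ _ := key
        _ ≤ C * (Real.exp (- ∑ k ∈ Ks, κ k / 2) * P) := by gcongr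
        _ = _ := by ring
    exact le_of_mul_le_mul_right this hPpos
  rw [hFn, hψ0] at hFz
  have hΦ0 : (Φ (τ + 1)).re ≤ (τ + 1) * (Real.log M + 1) := by
    have e : ((τ:ℂ) + 1) = ((τ + 1 : ℝ) : ℂ) := by push_cast; ring
    have : Φ (τ + 1) = (((τ + 1) * (Real.log M + 1 - Real.log (τ + 1)) : ℝ) : ℂ) := by
      simp only [hΦ]
      rw [e, ← Complex.ofReal_log (by linarith)]
      push_cast; ring
    rw [this, Complex.ofReal_re]
    have : 0 ≤ Real.log (τ + 1) := Real.log_nonneg (by linarith)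
    have : 0 < τ + 1 := by linarith
    gcongr
    linarith
  calc ‖G (τ + 1)‖ = (‖G (τ + 1)‖ * Real.exp (-(ε * (Φ (τ + 1)).re))) * Real.exp (ε * (Φ (τ + 1)).re) := by
        rw [mul_assoc, ← Real.exp_add]; simp
    _ ≤ (C * Real.exp (- ∑ k ∈ Ks, κ k / 2)) * Real.exp (ε * ((τ + 1) * (Real.log M + 1))) := by
        gcongr
    _ = _ := by rw [mul_assoc, ← Real.exp_add]; ring_nf

lemma half_plane_zero (G : ℂ → ℂ) (hG : Differentiable ℂ G)
    (hC : ∀ ε > (0:ℝ), ∃ C : ℝ, 0 ≤ C ∧ ∀ ζ : ℂ, 0 < ζ.re → ‖G ζ‖ ≤ C * Real.exp (ε * ‖ζ‖))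
    (u : ℂ) (hu : 0 < u.re) (A : Set ℕ) (hA : 0 < lowerDensity A)
    (hz : ∀ k ∈ A, ∃ z : ℂ, ‖z - k‖ ≤ 1 / 4 ∧ G (u * z) = 0) (τ : ℝ) (hτ : 0 < τ) :
    G (τ + 1) = 0 := by
  classical
  have hun : 0 < ‖u‖ := lt_of_lt_of_le hu (Complex.re_le_norm u)
  set κ : ℝ := u.re / (8 * ‖u‖ ^ 2) with hκ
  have hκ0 : 0 < κ := by positivity
  choose! ζ hζ1 hζ2 using hz
  obtain ⟨k1, hk1⟩ := exists_nat_ge (max ((‖u‖ / 4 + τ) * 2 / u.re) ((1 + ‖u‖ / 4 + τ) / ‖u‖) + 1)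
  obtain ⟨q, hq, σ, hσ, c0, hsum⟩ := harmonic_sum hA k1
  have hlq : 0 < Real.log q := Real.log_pos (by exact_mod_cast (by omega : 1 < q))
  set ε : ℝ := κ * σ / (4 * ((τ + 1) * Real.log q)) with hε
  have hε0 : 0 < ε := by have : 0 < τ + 1 := by linarith
                         positivity
  obtain ⟨C, hC0, hCb⟩ := hC ε hε0
  set a : ℕ → ℂ := fun k => u * ζ k - τ with ha
  have hest : ∀ k ∈ A, k1 ≤ k → (k:ℝ) / 2 * u.re ≤ (a k).re ∧ 1 + ‖a k‖ ≤ 2 * ‖u‖ * k ∧ (1:ℝ) ≤ k := by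
    intro k hk hkk
    have hkr : (k1:ℝ) ≤ k := by exact_mod_cast hkk
    have b1 : (‖u‖ / 4 + τ) * 2 / u.re ≤ k :=
      by linarith [le_max_left ((‖u‖ / 4 + τ) * 2 / u.re) ((1 + ‖u‖ / 4 + τ) / ‖u‖)]
    have b2 : (1 + ‖u‖ / 4 + τ) / ‖u‖ ≤ k :=
      by linarith [le_max_right ((‖u‖ / 4 + τ) * 2 / u.re) ((1 + ‖u‖ / 4 + τ) / ‖u‖)]
    have b3 : (1:ℝ) ≤ k := by
      have : 0 ≤ (1 + ‖u‖ / 4 + τ) / ‖u‖ := by positivity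
      linarith [le_max_right ((‖u‖ / 4 + τ) * 2 / u.re) ((1 + ‖u‖ / 4 + τ) / ‖u‖)]
    rw [div_le_iff₀ hu] at b1
    rw [div_le_iff₀ hun] at b2
    have e : a k = ((k * u.re - τ : ℝ) : ℂ) + ((k * u.im : ℝ) : ℂ) * I + u * (ζ k - k) := by
      simp only [ha]
      have : u = u.re + u.im * I := (Complex.re_add_im u).symm
      push_cast
      linear_combination (k:ℂ) * this
    have n1 : ‖u * (ζ k - k)‖ ≤ ‖u‖ / 4 := by
      rw [norm_mul]; have := hζ1 k hk; nlinarith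
    refine ⟨?_, ?_, b3⟩
    · have : (a k).re = k * u.re - τ + (u * (ζ k - k)).re := by
        rw [e]; simp
      rw [this]
      have h1 := Complex.abs_re_le_norm (u * (ζ k - k))
      have h2 := neg_abs_le (u * (ζ k - k)).re
      linarith
    · have e2 : a k = u * k + u * (ζ k - k) - τ := by simp only [ha]; ring
      have : ‖a k‖ ≤ ‖u‖ * k + ‖u‖ / 4 + τ := by
        rw [e2]
        calc _ ≤ ‖u * k + u * (ζ k - k)‖ + ‖(τ:ℂ)‖ := norm_sub_le _ _
          _ ≤ ‖u * k‖ + ‖u * (ζ k - k)‖ + ‖(τ:ℂ)‖ := by gcongr; exact norm_add_le _ _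
          _ ≤ ‖u‖ * k + ‖u‖ / 4 + τ := by
            rw [norm_mul u k, Complex.norm_natCast, Complex.norm_real, Real.norm_of_nonneg hτ.le]
            gcongr
      nlinarith
  set c1 : ℝ := 2 / κ + 2 + τ with hc1
  have hc1p : 0 < c1 := by positivity
  have main : ∀ J : ℕ, ‖G (τ + 1)‖ ≤ C * Real.exp ((ε * (τ + 1) * (Real.log c1 + 1) + κ / 2 * c0)
      - κ * σ / 4 * J) := by
    intro J
    set R : ℝ := q ^ J / κ + 1 with hR
    have hqJ : (1:ℝ) ≤ (q:ℝ) ^ J := one_le_pow₀ (by exact_mod_cast (by omega : 1 ≤ q))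
    have hR1 : 1 ≤ R := by rw [hR]; have : 0 < (q:ℝ) ^ J / κ := by positivity
                           linarith
    set Ks := (Finset.range (q ^ J + 1)).filter (fun k => k ∈ A ∧ k1 ≤ k) with hKs
    have hKm : ∀ k ∈ Ks, k ∈ A ∧ k1 ≤ k ∧ (k:ℝ) ≤ q ^ J := by
      intro k hk
      simp only [hKs, Finset.mem_filter, Finset.mem_range] at hk
      exact ⟨hk.2.1, hk.2.2, by exact_mod_cast (by omega : k ≤ q ^ J)⟩
    have h := half_plane_aux G hG C ε hε0 hC0 hCb τ hτ R hR1 Ks a ?_ ?_ (fun k => κ / k) ?_ ?_ ?_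
    · refine h.trans ?_
      have hs := hsum J
      have e1 : ∑ k ∈ Ks, κ / k / 2 = κ / 2 * ∑ k ∈ Ks, (1:ℝ) / k := by
        rw [Finset.mul_sum]; apply Finset.sum_congr rfl; intro k _; ring
      have e2 : κ / 2 * (σ * J - c0) ≤ ∑ k ∈ Ks, κ / k / 2 := by rw [e1]; gcongr
      have e3 : Real.log (2 * R + τ) ≤ Real.log c1 + J * Real.log q := by
        rw [← Real.log_pow, ← Real.log_mul hc1p.ne' (by positivity)]
        apply Real.log_le_log (by linarith)
        rw [hR, hc1]
        have : 2 * ((q:ℝ) ^ J / κ + 1) + τ = 2 / κ * q ^ J + (2 + τ) := by ring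
        rw [this, add_assoc (2 / κ), add_mul]
        nlinarith
      have e4 : ε * ((τ + 1) * (Real.log (2 * R + τ) + 1)) ≤
          ε * ((τ + 1) * ((Real.log c1 + J * Real.log q) + 1)) := by
        have : 0 < τ + 1 := by linarith
        gcongr
      have e5 : ε * ((τ + 1) * Real.log q) = κ * σ / 4 := by
        have : 0 < τ + 1 := by linarith
        rw [hε]; field_simp
      refine mul_le_mul_of_nonneg_left (Real.exp_le_exp.2 ?_) hC0
      have e6 : ε * ((τ + 1) * ((Real.log c1 + J * Real.log q) + 1)) =
        ε * (τ + 1) * (Real.log c1 + 1) + κ * σ / 4 * J := by rw [← e5]; ring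
      linarith
    · intro k hk l hl hkl
      obtain ⟨hk1', -, -⟩ := hKm k hk
      obtain ⟨hl1', -, -⟩ := hKm l hl
      have hu0 : u ≠ 0 := norm_pos_iff.1 hun
      have hzz : ζ k = ζ l := by
        simp only [ha] at hkl
        exact mul_left_cancel₀ hu0 (by linear_combination hkl)
      have hd : ‖(k:ℂ) - l‖ ≤ 1 / 4 + 1 / 4 := by
        calc ‖(k:ℂ) - l‖ = ‖(ζ l - l) - (ζ k - k)‖ := by rw [hzz]; ring_nf
          _ ≤ _ := (norm_sub_le _ _).trans (add_le_add (hζ1 l hl1') (hζ1 k hk1'))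
      have hd2 : |((k:ℤ) - (l:ℤ) : ℤ)| < 1 := by
        have : ‖(k:ℂ) - l‖ = |(((k:ℤ) - (l:ℤ) : ℤ) : ℝ)| := by
          rw [← Real.norm_eq_abs, ← Complex.norm_real]; push_cast; rfl
        rw [this, ← Int.cast_abs] at hd
        have : ((|((k:ℤ) - (l:ℤ) : ℤ)| : ℤ) : ℝ) < (1:ℤ) := by push_cast at hd ⊢; linarith
        exact_mod_cast this
      rw [Int.abs_lt_one_iff] at hd2
      omega
    · intro k hk
      simp only [ha, sub_add_cancel]
      exact hζ2 k (hKm k hk).1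
    · intro k hk
      obtain ⟨h1, h2, h3⟩ := hKm k hk
      obtain ⟨g1, g2, g3⟩ := hest k h1 h2
      have : 0 < (k:ℝ) / 2 * u.re := by positivity
      linarith
    · intro k hk
      obtain ⟨h1, h2, h3⟩ := hKm k hk
      obtain ⟨g1, g2, g3⟩ := hest k h1 h2
      have f1 : ‖a k‖ ^ 2 ≤ (2 * ‖u‖ * k) ^ 2 := by
        gcongr; linarith
      have f2 : (k:ℝ) ≤ R * κ := by
        rw [hR, add_mul, div_mul_cancel₀ _ hκ0.ne']; linarith
      have f3 : (2 * ‖u‖ * k) ^ 2 ≤ R * ((k:ℝ) / 2 * u.re) := by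
        have : u.re = κ * (8 * ‖u‖ ^ 2) := by rw [hκ]; field_simp
        rw [this]
        have : (2 * ‖u‖ * k) ^ 2 = 4 * ‖u‖ ^ 2 * k * k := by ring
        rw [this]
        calc _ ≤ 4 * ‖u‖ ^ 2 * k * (R * κ) := by gcongr
          _ = _ := by ring
      refine f1.trans (f3.trans ?_)
      gcongr
    · intro k hk
      obtain ⟨h1, h2, h3⟩ := hKm k hk
      obtain ⟨g1, g2, g3⟩ := hest k h1 h2
      have : κ / k * (1 + ‖a k‖) ^ 2 ≤ κ / k * (2 * ‖u‖ * k) ^ 2 := by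
        gcongr
      refine this.trans (le_trans (le_of_eq ?_) g1)
      rw [hκ]; field_simp; norm_num
  have hlim : Tendsto (fun J : ℕ => C * Real.exp ((ε * (τ + 1) * (Real.log c1 + 1) + κ / 2 * c0)
      - κ * σ / 4 * J)) atTop (nhds (C * 0)) := by
    apply Tendsto.const_mul
    apply Real.tendsto_exp_atBot.comp
    apply tendsto_atBot_add_const_left (f := fun J : ℕ => -(κ * σ / 4 * (J:ℝ)))
    apply tendsto_neg_atTop_atBot.comp
    exact Tendsto.const_mul_atTop (by positivity) tendsto_natCast_atTop_atTop
  have := ge_of_tendsto' hlim main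
  rw [mul_zero] at this
  exact norm_le_zero_iff.1 this
lemma suppFn_segment (v w z : ℂ) :
    suppFn (segment ℝ v w) z = max (z * v).re (z * w).re := by
  unfold suppFn
  apply IsGreatest.csSup_eq
  constructor
  · rcases le_total (z * v).re (z * w).re with h | h
    · rw [max_eq_right h]; exact ⟨w, right_mem_segment ℝ v w, rfl⟩
    · rw [max_eq_left h]; exact ⟨v, left_mem_segment ℝ v w, rfl⟩
  · rintro _ ⟨u, ⟨a, b, ha, hb, hab, rfl⟩, rfl⟩
    have : (z * (a • v + b • w)).re = a * (z * v).re + b * (z * w).re := by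
      simp [Complex.mul_re]; ring
    simp only [this]
    calc _ ≤ a * max (z * v).re (z * w).re + b * max (z * v).re (z * w).re := by
          gcongr
          · exact le_max_left _ _
          · exact le_max_right _ _
      _ = _ := by rw [← add_mul, hab, one_mul]

lemma MemExp.bound {K : Set ℂ} {f : ℂ → ℂ} (h : MemExp K f) (n : ℕ) (hn : 0 < n) :
    ∃ C : ℝ, 0 ≤ C ∧ ∀ z, ‖f z‖ ≤ C * Real.exp (suppFn K z + ‖z‖ / n) := by
  obtain ⟨C, hC⟩ := h.2 n hn
  refine ⟨max C 0, le_max_right _ _, fun z => ?_⟩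
  have h1 : ‖f z‖ * Real.exp (-(suppFn K z) - ‖z‖ / n) ≤ C := hC ⟨z, rfl⟩
  calc ‖f z‖ = (‖f z‖ * Real.exp (-(suppFn K z) - ‖z‖ / n)) * Real.exp (suppFn K z + ‖z‖ / n) := by
        rw [mul_assoc, ← Real.exp_add]; simp
    _ ≤ _ := by gcongr; exact h1.trans (le_max_left _ _)

lemma term_le_iff (K : Set ℂ) (f : ℂ → ℂ) (n : ℕ) (C : ℝ) (z : ℂ) :
    ‖f z‖ * Real.exp (-(suppFn K z) - ‖z‖ / n) ≤ C ↔
      ‖f z‖ ≤ C * Real.exp (suppFn K z + ‖z‖ / n) := by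
  have : Real.exp (-(suppFn K z) - ‖z‖ / n) = (Real.exp (suppFn K z + ‖z‖ / n))⁻¹ := by
    rw [← Real.exp_neg]; ring_nf
  rw [this, mul_inv_le_iff₀ (Real.exp_pos _)]

lemma memExp_of_bound {K : Set ℂ} {f : ℂ → ℂ} (hf : Differentiable ℂ f)
    (h : ∀ n : ℕ, 0 < n → ∃ C : ℝ, ∀ z, ‖f z‖ ≤ C * Real.exp (suppFn K z + ‖z‖ / n)) :
    MemExp K f := by
  refine ⟨hf, fun n hn => ?_⟩
  obtain ⟨C, hC⟩ := h n hn
  refine ⟨C, ?_⟩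
  rintro _ ⟨z, rfl⟩
  exact (term_le_iff K f n C z).2 (hC z)

lemma expNorm_le {K : Set ℂ} {f : ℂ → ℂ} {n : ℕ} {C : ℝ}
    (h : ∀ z, ‖f z‖ ≤ C * Real.exp (suppFn K z + ‖z‖ / n)) : expNorm K n f ≤ C := by
  apply csSup_le (Set.range_nonempty _)
  rintro _ ⟨z, rfl⟩
  exact (term_le_iff K f n C z).2 (h z)

lemma le_of_expNorm_lt {K : Set ℂ} {f : ℂ → ℂ} (hf : MemExp K f) {n : ℕ} (hn : 0 < n) {ε : ℝ}
    (h : expNorm K n f < ε) (z : ℂ) : ‖f z‖ ≤ ε * Real.exp (suppFn K z + ‖z‖ / n) := by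
  rw [← term_le_iff]
  exact (le_csSup (hf.2 n hn) ⟨z, rfl⟩).trans h.le

lemma suppFn_segment_add_le (v w z : ℂ) (k : ℂ) : suppFn (segment ℝ v w) (z + k) ≤
    suppFn (segment ℝ v w) z + suppFn (segment ℝ v w) k := by
  simp only [suppFn_segment, add_mul, Complex.add_re]
  apply max_le
  · exact add_le_add (le_max_left _ _) (le_max_left _ _)
  · exact add_le_add (le_max_right _ _) (le_max_right _ _)

lemma memExp_shift_sub {v w : ℂ} {f g : ℂ → ℂ} (hf : MemExp (segment ℝ v w) f)
    (hg : MemExp (segment ℝ v w) g) (k : ℕ) :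
    MemExp (segment ℝ v w) (fun z => f (z + (k : ℂ)) - g z) := by
  refine memExp_of_bound ?_ fun n hn => ?_
  · have h1 := hf.1
    have h2 := hg.1
    fun_prop
  · obtain ⟨C, hC0, hC⟩ := hf.bound n hn
    obtain ⟨D, hD0, hD⟩ := hg.bound n hn
    set H := suppFn (segment ℝ v w) with hH
    refine ⟨C * Real.exp (H k + k / n) + D, fun z => ?_⟩
    calc ‖f (z + k) - g z‖ ≤ ‖f (z + k)‖ + ‖g z‖ := norm_sub_le _ _
      _ ≤ C * Real.exp (H (z + k) + ‖z + k‖ / n) + D * Real.exp (H z + ‖z‖ / n) :=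
          add_le_add (hC _) (hD _)
      _ ≤ C * Real.exp ((H k + k / n) + (H z + ‖z‖ / n)) + D * Real.exp (H z + ‖z‖ / n) := by
          gcongr C * Real.exp ?_ + _
          have h1 := suppFn_segment_add_le v w z k
          have h2 : ‖z + k‖ / n ≤ ‖z‖ / n + k / n := by
            rw [← add_div]
            gcongr
            exact (norm_add_le _ _).trans (by simp)
          rw [← hH] at h1
          linarith
      _ = _ := by rw [Real.exp_add (H k + k / n)]; ring

lemma memExp_exp (v w : ℂ) : MemExp (segment ℝ v w) (fun z => Complex.exp (w * z)) := by
  refine memExp_of_bound (by fun_prop) fun n hn => ⟨1, fun z => ?_⟩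
  rw [Complex.norm_exp, one_mul, suppFn_segment]
  gcongr
  have := le_max_right (z * v).re (z * w).re
  rw [mul_comm w z]
  have : 0 ≤ ‖z‖ / n := by positivity
  linarith

lemma memExp_mul_exp (v w : ℂ) : MemExp (segment ℝ v w) (fun z => z * Complex.exp (w * z)) := by
  refine memExp_of_bound (by fun_prop) fun n hn => ⟨n, fun z => ?_⟩
  have hn' : (0:ℝ) < n := by exact_mod_cast hn
  rw [norm_mul, Complex.norm_exp, suppFn_segment, Real.exp_add]
  have h1 : (w * z).re ≤ max (z * v).re (z * w).re := by
    rw [mul_comm w z]; exact le_max_right (z * v).re (z * w).re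
  have h2 : ‖z‖ ≤ n * Real.exp (‖z‖ / n) := by
    have := Real.add_one_le_exp (‖z‖ / n)
    calc ‖z‖ = n * (‖z‖ / n) := by field_simp
      _ ≤ _ := by gcongr; linarith
  calc _ ≤ (n * Real.exp (‖z‖ / n)) * Real.exp (max (z * v).re (z * w).re) := by gcongr
    _ = _ := by ring

/-- vertical segments off the imaginary axis -/
lemma vertical_case (v w : ℂ) (hvw : v.re = w.re) (f : ℂ → ℂ) (hf : FHCExp (segment ℝ v w) f) :
    w.re = 0 := by
  obtain ⟨hfm, hfh⟩ := hf
  set K := segment ℝ v w with hK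
  set a := w.re with ha
  have hH0 : suppFn K 0 = 0 := by rw [hK, suppFn_segment]; simp
  have hHk : ∀ (z : ℂ) (x : ℝ), suppFn K (z + x) = suppFn K z + x * a := by
    intro z x
    rw [hK, suppFn_segment, suppFn_segment]
    simp only [add_mul, Complex.add_re]
    simp only [Complex.re_ofReal_mul, hvw]
    rw [max_add_add_right]
  by_contra hne
  have hEx := memExp_exp v w
  obtain ⟨n, hn⟩ := exists_nat_gt (2 / |a|)
  have hapos : 0 < |a| := abs_pos.2 hne
  have hn0 : 0 < n := by
    have : (0:ℝ) < n := lt_trans (by positivity) hn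
    exact_mod_cast this
  have hn0' : (0:ℝ) < n := by exact_mod_cast hn0
  have hna : 1 / (n:ℝ) ≤ |a| / 2 := by
    rw [div_lt_iff₀ hapos] at hn
    rw [div_le_div_iff₀ hn0' (by norm_num)]; linarith
  have hinf : ∀ M : ℕ, ∃ k ≥ M, 1 / 2 ≤ ‖f k‖ := by
    intro M
    have h1 := hfh _ hEx 1 one_pos (1/2) (by norm_num)
    obtain ⟨k, hk, hkM⟩ := dens_infinite h1 M
    have h2 := le_of_expNorm_lt (memExp_shift_sub hfm hEx k) one_pos hk 0
    refine ⟨k, hkM, ?_⟩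
    simp only [zero_add, mul_zero, Complex.exp_zero, ← hK, hH0] at h2
    simp only [norm_zero, zero_div, Real.exp_zero, mul_one] at h2
    have h3 : ‖(1:ℂ)‖ ≤ ‖(1:ℂ) - f k‖ + ‖f k‖ := by
      calc _ = ‖((1:ℂ) - f k) + f k‖ := by ring_nf
        _ ≤ _ := norm_add_le _ _
    rw [norm_sub_rev, norm_one] at h3
    linarith
  have hdecay : Tendsto (fun k : ℕ => Real.exp (-(|a| / 2 * k))) atTop (nhds 0) := by
    apply Real.tendsto_exp_atBot.comp
    apply tendsto_neg_atTop_atBot.comp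
    exact Tendsto.const_mul_atTop (by positivity) tendsto_natCast_atTop_atTop
  rcases lt_or_gt_of_ne hne with hneg | hpos
  · obtain ⟨C, hC0, hC⟩ := hfm.bound n hn0
    have hlim : Tendsto (fun k : ℕ => C * Real.exp (-(|a| / 2 * k))) atTop (nhds (C * 0)) :=
      hdecay.const_mul C
    rw [mul_zero] at hlim
    obtain ⟨M, hM⟩ := eventually_atTop.1 (hlim.eventually_lt_const (by norm_num : (0:ℝ) < 1/2))
    obtain ⟨k, hk, hk2⟩ := hinf M
    have h1 := hM k hk
    have h2 := hC k
    have h3 := hHk 0 k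
    rw [zero_add, hH0, zero_add] at h3
    have h3' : suppFn K (k:ℂ) = k * a := by exact_mod_cast h3
    rw [h3', Complex.norm_natCast] at h2
    have h4 : (k:ℝ) * a + k / n ≤ -(|a| / 2 * k) := by
      have : (k:ℝ) / n = k * (1 / n) := by ring
      rw [this, abs_of_neg hneg] at *
      have hk0 : (0:ℝ) ≤ k := by positivity
      nlinarith
    have h5 : C * Real.exp (k * a + k / n) ≤ C * Real.exp (-(|a| / 2 * k)) := by gcongr
    linarith
  · have hz : ∀ z, f z = 0 := by
      intro z
      have hm0 : MemExp K (fun _ => (0:ℂ)) := memExp_of_bound (by fun_prop) fun n _ => ⟨0, by simp⟩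
      have hb : ∀ M : ℕ, ∃ k ≥ M, ‖f z‖ ≤ Real.exp (suppFn K z + ‖z‖ / n) * Real.exp (-(|a| / 2 * k)) := by
        intro M
        have h1 := hfh _ hm0 n hn0 1 one_pos
        obtain ⟨k, hk, hkM⟩ := dens_infinite h1 M
        refine ⟨k, hkM, ?_⟩
        have h2 := le_of_expNorm_lt (memExp_shift_sub hfm hm0 k) hn0 hk (z - k)
        simp only [sub_add_cancel, sub_zero, one_mul, ← hK] at h2
        refine h2.trans ?_
        rw [← Real.exp_add]
        apply Real.exp_le_exp.2
        have h3 := hHk z (-(k:ℝ))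
        have h3' : suppFn K (z - k) = suppFn K z + -(k:ℝ) * a := by
          rw [← h3]; push_cast; rw [sub_eq_add_neg]
        have h4 : ‖z - k‖ / n ≤ ‖z‖ / n + k * (1 / n) := by
          calc _ ≤ (‖z‖ + k) / n := by
                gcongr; exact (norm_sub_le _ _).trans (by simp)
            _ = _ := by ring
        rw [h3']
        rw [abs_of_pos hpos] at *
        have hk0 : (0:ℝ) ≤ k := by positivity
        nlinarith
      have hlim := hdecay.const_mul (Real.exp (suppFn K z + ‖z‖ / n))
      rw [mul_zero] at hlim
      by_contra hfz
      obtain ⟨M, hM⟩ := eventually_atTop.1 (hlim.eventually_lt_const (norm_pos_iff.2 hfz))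
      obtain ⟨k, hk, hk2⟩ := hb M
      have := hM k hk
      linarith
    obtain ⟨k, _, hk⟩ := hinf 0
    rw [hz, norm_zero] at hk
    norm_num at hk

/-- if one of the end points dominates on a half plane containing the positive axis -/
lemma dominated_case (v w u : ℂ) (hu : 0 < u.re) (hd : ∀ z : ℂ, 0 < (u * z).re →
    (z * v).re ≤ (z * w).re) (f : ℂ → ℂ) (hf : FHCExp (segment ℝ v w) f) : False := by
  obtain ⟨hfm, hfh⟩ := hf
  set K := segment ℝ v w with hK
  have hu0 : u ≠ 0 := by rintro rfl; simp at hu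
  set G : ℂ → ℂ := fun ζ => f (ζ / u) * Complex.exp (-(w * (ζ / u))) with hG
  have hfd := hfm.1
  have hGd : Differentiable ℂ G := by rw [hG]; fun_prop
  have hun : 0 < ‖u‖ := norm_pos_iff.2 hu0
  have hGb : ∀ ε > (0:ℝ), ∃ C : ℝ, 0 ≤ C ∧ ∀ ζ : ℂ, 0 < ζ.re → ‖G ζ‖ ≤ C * Real.exp (ε * ‖ζ‖) := by
    intro ε hε
    obtain ⟨n, hn⟩ := exists_nat_gt (1 / (ε * ‖u‖))
    have hn0 : (0:ℝ) < n := lt_trans (by positivity) hn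
    obtain ⟨C, hC0, hC⟩ := hfm.bound n (by exact_mod_cast hn0)
    refine ⟨C, hC0, fun ζ hζ => ?_⟩
    have e : u * (ζ / u) = ζ := by field_simp
    have h1 := hd (ζ / u) (by rw [e]; exact hζ)
    have h2 := hC (ζ / u)
    rw [hK, suppFn_segment, max_eq_right h1] at h2
    simp only [hG, norm_mul, Complex.norm_exp]
    calc _ ≤ (C * Real.exp ((ζ / u * w).re + ‖ζ / u‖ / n)) * Real.exp (-(w * (ζ / u))).re := by gcongr
      _ = C * Real.exp (‖ζ / u‖ / n) := by
          rw [mul_assoc, ← Real.exp_add, Complex.neg_re, mul_comm w]; ring_nf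
      _ ≤ _ := by
          gcongr
          rw [norm_div, div_div, div_le_iff₀ (by positivity)]
          rw [div_lt_iff₀ (by positivity)] at hn
          nlinarith [norm_nonneg ζ]
  set g : ℂ → ℂ := fun z => z * Complex.exp (w * z) with hg
  have hgm : MemExp K g := memExp_mul_exp v w
  set m : ℝ := (1 / 4) * Real.exp (-(‖w‖ / 4)) with hm
  have hm0 : 0 < m := by positivity
  set B : ℝ := Real.exp ((‖v‖ + ‖w‖) + 1) with hB
  have hB0 : 0 < B := Real.exp_pos _
  set ε' : ℝ := m / (4 * B) with hε'
  have hε0 : 0 < ε' := by positivity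
  have hdens := hfh g hgm 1 one_pos ε' hε0
  set A := {k : ℕ | expNorm K 1 (fun z => f (z + (k : ℂ)) - g z) < ε'} with hA
  have hzero : ∀ k ∈ A, ∃ z : ℂ, ‖z - k‖ ≤ 1 / 4 ∧ G (u * z) = 0 := by
    intro k hk
    have hle : ∀ z : ℂ, ‖z‖ ≤ 1 / 4 → ‖f (z + k) - g z‖ ≤ m / 4 := by
      intro z hz
      have h1 := le_of_expNorm_lt (memExp_shift_sub hfm hgm k) one_pos hk z
      refine h1.trans ?_
      have h2 : Real.exp (suppFn K z + ‖z‖ / (1:ℕ)) ≤ B := by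
        rw [hB]
        gcongr
        · rw [hK, suppFn_segment]
          apply max_le
          · have := Complex.re_le_norm (z * v)
            rw [norm_mul] at this
            nlinarith [norm_nonneg v, norm_nonneg w]
          · have := Complex.re_le_norm (z * w)
            rw [norm_mul] at this
            nlinarith [norm_nonneg v, norm_nonneg w]
        · simp; linarith
      calc _ ≤ ε' * B := by gcongr
        _ = m / 4 := by rw [hε']; field_simp
    by_contra hcon
    push Not at hcon
    have hne : ∀ z : ℂ, ‖z‖ ≤ 1 / 4 → f (z + k) ≠ 0 := by
      intro z hz h0
      refine hcon (z + k) (by simpa using hz) ?_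
      have : u * (z + k) / u = z + k := by field_simp
      simp only [hG, this, h0, zero_mul]
    -- apply the maximum principle to the inverse
    have hinv : DifferentiableOn ℂ (fun z => (f (z + k))⁻¹) (Metric.closedBall 0 (1/4)) := by
      intro z hz
      apply DifferentiableAt.differentiableWithinAt
      have h1 : DifferentiableAt ℂ (fun z => f (z + k)) z := by fun_prop
      exact h1.inv (hne z (by simpa using hz))
    have hfr : ∀ z ∈ frontier (Metric.ball (0:ℂ) (1/4)), ‖(f (z + k))⁻¹‖ ≤ (m * (3/4))⁻¹ := by
      intro z hz
      rw [frontier_ball _ (by norm_num)] at hz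
      have hz1 : ‖z‖ = 1 / 4 := by simpa using hz
      rw [norm_inv]
      apply inv_anti₀ (by positivity)
      have h1 : m ≤ ‖g z‖ := by
        simp only [hg, norm_mul, Complex.norm_exp, hz1, hm]
        gcongr
        have h1 := Complex.abs_re_le_norm (w * z)
        rw [norm_mul, hz1] at h1
        have := neg_abs_le (w * z).re
        linarith
      have h2 := hle z hz1.le
      have h3 : ‖g z‖ ≤ ‖f (z + k)‖ + ‖f (z + k) - g z‖ := by
        calc ‖g z‖ = ‖f (z + k) - (f (z + k) - g z)‖ := by ring_nf
          _ ≤ _ := norm_sub_le _ _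
      linarith
    have h0 := Complex.norm_le_of_forall_mem_frontier_norm_le (Metric.isBounded_ball)
      (DifferentiableOn.diffContOnCl (by rw [closure_ball _ (by norm_num)]; exact hinv)) hfr
      (subset_closure (show (0:ℂ) ∈ Metric.ball (0:ℂ) (1/4) by simp))
    rw [norm_inv, inv_le_inv₀ (norm_pos_iff.2 (hne 0 (by simp))) (by positivity)] at h0
    have h1 := hle 0 (by simp)
    simp only [hg, zero_mul, sub_zero] at h1
    linarith
  have hGz := half_plane_zero G hGd hGb u hu A hdens hzero
  have hG0 : ∀ ζ, G ζ = 0 := by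
    have han : AnalyticOnNhd ℂ G Set.univ := fun z _ => hGd.analyticAt z
    have hfreq : ∃ᶠ z in nhdsWithin (2:ℂ) {2}ᶜ, G z = 0 := by
      have ht : Tendsto (fun n : ℕ => ((1 + 1 / ((n:ℝ) + 1) : ℝ) : ℂ) + 1) atTop (nhdsWithin (2:ℂ) {2}ᶜ) := by
        apply tendsto_nhdsWithin_iff.2 ⟨?_, ?_⟩
        · have h1 : Tendsto (fun n : ℕ => (1 + 1 / ((n:ℝ) + 1) : ℝ)) atTop (nhds (1 + 0)) :=
            tendsto_const_nhds.add tendsto_one_div_add_atTop_nhds_zero_nat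
          have h2 := ((Complex.continuous_ofReal.tendsto _).comp h1).add_const 1
          have h4 : ((1 + 0 : ℝ) : ℂ) + 1 = 2 := by push_cast; norm_num
          rw [h4] at h2
          exact h2
        · refine Eventually.of_forall fun n => ?_
          have : (0:ℝ) < 1 / ((n:ℝ) + 1) := by positivity
          intro h
          have h3 := congrArg Complex.re (Set.mem_singleton_iff.1 h)
          simp only [Complex.add_re, Complex.ofReal_re, Complex.one_re, Complex.re_ofNat] at h3
          linarith
      apply ht.frequently
      apply Frequently.of_forall
      intro n
      exact hGz _ (by positivity)
    have := han.eqOn_zero_of_preconnected_of_frequently_eq_zero isPreconnected_univ (Set.mem_univ (2:ℂ)) hfreq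
    intro ζ; exact this (Set.mem_univ ζ)
  obtain ⟨k, hk, -⟩ := dens_infinite (hfh _ (memExp_exp v w) 1 one_pos (1/2) (by norm_num)) 0
  have h2 := le_of_expNorm_lt (memExp_shift_sub hfm (memExp_exp v w) k) one_pos hk 0
  have hfk : f k = 0 := by
    have h3 := hG0 (u * k)
    have : u * k / u = (k:ℂ) := by field_simp
    simp only [hG, this] at h3
    exact (mul_eq_zero.1 h3).resolve_right (Complex.exp_ne_zero _)
  rw [suppFn_segment] at h2
  simp [hfk] at h2
  norm_num at h2

lemma forward_dir (v w : ℂ) (h : ∃ f : ℂ → ℂ, FHCExp (segment ℝ v w) f) :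
    v ≠ w ∧ v.re = 0 ∧ w.re = 0 := by
  obtain ⟨f, hf⟩ := h
  by_cases hvw : v = w
  · exact (dominated_case v w 1 (by simp) (fun z _ => by rw [hvw]) f hf).elim
  have key : ∀ v w z : ℂ, 0 < ((w - v) * z).re → (z * v).re ≤ (z * w).re := by
    intro v w z hz
    rw [sub_mul, Complex.sub_re, mul_comm w, mul_comm v] at hz
    linarith
  rcases lt_trichotomy v.re w.re with h | h | h
  · exact (dominated_case v w (w - v) (by simpa using h) (key v w) f hf).elim
  · have := vertical_case v w h f hf
    exact ⟨hvw, by rw [h, this], this⟩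
  · rw [segment_symm] at hf
    exact (dominated_case w v (v - w) (by simpa using h) (key w v) f hf).elim

lemma norm_cexp_le (z : ℂ) : ‖Complex.exp (z * I)‖ ≤ Real.exp |z.im| := by
  rw [Complex.norm_exp]; simp; exact neg_le_abs _

lemma norm_csin_le (z : ℂ) : ‖Complex.sin z‖ ≤ Real.exp |z.im| := by
  have h1 := norm_cexp_le z
  have h2 := norm_cexp_le (-z)
  rw [Complex.neg_im, abs_neg] at h2
  rw [Complex.sin, norm_div, norm_mul, Complex.norm_I, mul_one, Complex.norm_ofNat]
  have := norm_sub_le (Complex.exp (-z * I)) (Complex.exp (z * I))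
  linarith

lemma norm_ccos_le (z : ℂ) : ‖Complex.cos z‖ ≤ Real.exp |z.im| := by
  have h1 := norm_cexp_le z
  have h2 := norm_cexp_le (-z)
  rw [Complex.neg_im, abs_neg] at h2
  rw [Complex.cos, norm_div, Complex.norm_ofNat]
  have := norm_add_le (Complex.exp (z * I)) (Complex.exp (-z * I))
  linarith

/-- The entire function `sin z / z`. -/
noncomputable def csinc : ℂ → ℂ := dslope Complex.sin 0

lemma csinc_diff : Differentiable ℂ csinc := by
  rw [← differentiableOn_univ]
  exact (Complex.differentiableOn_dslope Filter.univ_mem).2 Complex.differentiable_sin.differentiableOn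

lemma mul_csinc (z : ℂ) : z * csinc z = Complex.sin z := by
  have := sub_smul_dslope Complex.sin 0 z
  simpa [csinc] using this

lemma csinc_zero : csinc 0 = 1 := by
  simp [csinc, dslope_same]

lemma norm_mul_csinc (z : ℂ) : ‖z‖ * ‖csinc z‖ ≤ Real.exp |z.im| := by
  rw [← norm_mul, mul_csinc]; exact norm_csin_le z

lemma norm_csinc_le (z : ℂ) : ‖csinc z‖ ≤ Real.exp |z.im| := by
  by_cases hz : z = 0
  · rw [hz, csinc_zero]; simp
  have hconv : Convex ℝ {w : ℂ | |w.im| ≤ |z.im|} := by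
    have : {w : ℂ | |w.im| ≤ |z.im|} = Complex.imLm ⁻¹' (Set.Icc (-|z.im|) |z.im|) := by
      ext w; simp [abs_le]
    rw [this]
    exact (convex_Icc _ _).linear_preimage _
  have h := Convex.norm_image_sub_le_of_norm_deriv_le (f := Complex.sin) (C := Real.exp |z.im|)
    (fun x _ => Complex.differentiable_sin x) (by
      intro x hx
      rw [Complex.deriv_sin]
      exact (norm_ccos_le x).trans (Real.exp_le_exp.2 hx)) hconv
      (show (0:ℂ) ∈ {w : ℂ | |w.im| ≤ |z.im|} by simp) (show z ∈ {w : ℂ | |w.im| ≤ |z.im|} by simp)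
  rw [Complex.sin_zero, sub_zero, sub_zero, ← mul_csinc, norm_mul, mul_comm] at h
  exact le_of_mul_le_mul_right h (norm_pos_iff.2 hz)

lemma sin_circle_lower (N : ℕ) (ζ : ℂ) (h : ‖ζ‖ = N + 1 / 2) :
    Real.exp (Real.pi * |ζ.im|) ≤ 3 * ‖Complex.sin (Real.pi * ζ)‖ := by
  set x := ζ.re
  set y := ζ.im
  have hxy : x ^ 2 + y ^ 2 = (N + 1 / 2 : ℝ) ^ 2 := by
    rw [← h, ← Complex.normSq_eq_norm_sq, Complex.normSq_apply]; ring
  have hs : ‖Complex.sin (Real.pi * ζ)‖ ^ 2 =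
      Real.cosh (Real.pi * y) ^ 2 - Real.cos (Real.pi * x) ^ 2 := by
    have e : (Real.pi:ℂ) * ζ = (Real.pi * x : ℝ) + (Real.pi * y : ℝ) * I := by
      have : ζ = x + y * I := (Complex.re_add_im ζ).symm
      push_cast
      linear_combination (Real.pi:ℂ) * this
    have e2 : Complex.sin (Real.pi * ζ) =
        ((Real.sin (Real.pi * x) * Real.cosh (Real.pi * y) : ℝ) : ℂ) +
        ((Real.cos (Real.pi * x) * Real.sinh (Real.pi * y) : ℝ) : ℂ) * I := by
      rw [e, Complex.sin_add_mul_I]; push_cast; ring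
    rw [e2, ← Complex.normSq_eq_norm_sq, Complex.normSq_add_mul_I]
    have h1 := Real.sin_sq_add_cos_sq (Real.pi * x)
    have h2 := Real.cosh_sq (Real.pi * y)
    rw [mul_pow, mul_pow, Real.sin_sq, h2]; ring
  have hcosh : Real.exp (Real.pi * |y|) ≤ 2 * Real.cosh (Real.pi * y) := by
    have : Real.cosh (Real.pi * y) = Real.cosh (Real.pi * |y|) := by
      rw [← Real.cosh_abs, abs_mul, abs_of_pos Real.pi_pos]
    rw [this, Real.cosh_eq]
    have := Real.exp_pos (-(Real.pi * |y|))
    linarith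
  have hc1 : 1 + (Real.pi * y) ^ 2 ≤ Real.cosh (Real.pi * y) ^ 2 := by
    rw [Real.cosh_sq]
    have : (Real.pi * y) ^ 2 ≤ Real.sinh (Real.pi * y) ^ 2 := by
      rw [sq_le_sq, Real.abs_sinh]
      exact Real.self_le_sinh_iff.2 (abs_nonneg _)
    linarith
  have hkey : Real.cos (Real.pi * x) ^ 2 ≤ 1 / 2 * Real.cosh (Real.pi * y) ^ 2 := by
    by_cases hx : |x| ≤ N + 1 / 4
    · have hN : (0:ℝ) ≤ N := by positivity
      have hy : 1 / 8 ≤ y ^ 2 := by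
        have : x ^ 2 ≤ (N + 1 / 4 : ℝ) ^ 2 := by rw [← sq_abs]; gcongr
        nlinarith
      have hp : 9 ≤ Real.pi ^ 2 := by nlinarith [Real.pi_gt_three]
      have : 1 ≤ (Real.pi * y) ^ 2 := by rw [mul_pow]; nlinarith
      have := Real.cos_sq_le_one (Real.pi * x)
      linarith
    · push Not at hx
      have hx2 : |x| ≤ N + 1 / 2 := by rw [← h]; exact Complex.abs_re_le_norm ζ
      have e1 : Real.cos (Real.pi * x) ^ 2 = Real.sin (Real.pi * (N + 1 / 2 - |x|)) ^ 2 := by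
        have : Real.cos (Real.pi * x) = Real.cos (Real.pi * |x|) := by
          rw [← Real.cos_abs, abs_mul, abs_of_pos Real.pi_pos]
        rw [this]
        have : Real.pi * (N + 1 / 2 - |x|) = (Real.pi / 2 - Real.pi * |x|) + N * Real.pi := by ring
        rw [this, Real.sin_add_nat_mul_pi, Real.sin_pi_div_two_sub, mul_pow, ← pow_mul, mul_comm N 2,
          pow_mul]
        norm_num
      have h4 : 0 ≤ Real.pi * (N + 1 / 2 - |x|) := mul_nonneg Real.pi_pos.le (by linarith)
      have h5 : Real.pi * (N + 1 / 2 - |x|) ≤ Real.pi / 4 := by nlinarith [Real.pi_pos]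
      have h6 : Real.sin (Real.pi * (N + 1 / 2 - |x|)) ≤ Real.sin (Real.pi / 4) :=
        Real.sin_le_sin_of_le_of_le_pi_div_two (by linarith [Real.pi_pos]) (by linarith [Real.pi_pos]) h5
      have h7 : 0 ≤ Real.sin (Real.pi * (N + 1 / 2 - |x|)) :=
        Real.sin_nonneg_of_nonneg_of_le_pi h4 (by linarith [Real.pi_pos])
      have h8 : Real.sin (Real.pi * (N + 1 / 2 - |x|)) ^ 2 ≤ 1 / 2 := by
        calc _ ≤ Real.sin (Real.pi / 4) ^ 2 := by gcongr
          _ = 1 / 2 := by rw [Real.sin_pi_div_four, div_pow, Real.sq_sqrt (by norm_num)]; norm_num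
      rw [e1]
      nlinarith [sq_nonneg (Real.pi * y)]
  have : Real.exp (Real.pi * |y|) ^ 2 ≤ (3 * ‖Complex.sin (Real.pi * ζ)‖) ^ 2 := by
    rw [mul_pow, hs]
    have : Real.exp (Real.pi * |y|) ^ 2 ≤ (2 * Real.cosh (Real.pi * y)) ^ 2 := by gcongr
    nlinarith
  exact le_of_sq_le_sq this (by positivity)

/-- Truncated cardinal series. -/
noncomputable def cardSum (F : ℂ → ℂ) (N : ℕ) (z : ℂ) : ℂ :=
  ∑ k ∈ Finset.Icc (-(N:ℤ)) N, F k * csinc (Real.pi * (z - k))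

lemma cardSum_diff (F : ℂ → ℂ) (N : ℕ) : Differentiable ℂ (cardSum F N) := by
  unfold cardSum
  refine Differentiable.fun_sum fun k _ => ?_
  exact (csinc_diff.comp (by fun_prop)).const_mul _

lemma sin_pi_int (m : ℤ) : Complex.sin (Real.pi * m) = 0 := by
  rw [mul_comm]; exact_mod_cast Complex.sin_int_mul_pi m

lemma csinc_int (m k : ℤ) (h : m ≠ k) : csinc (Real.pi * ((m:ℂ) - k)) = 0 := by
  have h1 := mul_csinc (Real.pi * ((m:ℂ) - k))
  have h2 := sin_pi_int (m - k)
  push_cast at h2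
  rw [h2] at h1
  rcases mul_eq_zero.1 h1 with h3 | h3
  · exfalso
    rcases mul_eq_zero.1 h3 with h4 | h4
    · exact Real.pi_ne_zero (by exact_mod_cast h4)
    · rw [sub_eq_zero] at h4; exact h (by exact_mod_cast h4)
  · exact h3

lemma cardSum_int (F : ℂ → ℂ) (N : ℕ) (m : ℤ) (hm : m ∈ Finset.Icc (-(N:ℤ)) N) :
    cardSum F N m = F m := by
  unfold cardSum
  rw [Finset.sum_eq_single_of_mem m hm]
  · simp [csinc_zero]
  · intro k _ hk
    rw [csinc_int m k hk.symm, mul_zero]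

lemma sin_sub_int (k : ℤ) : ∃ e : ℂ, ∀ ζ : ℂ,
    Complex.sin (Real.pi * (ζ - k)) = e * Complex.sin (Real.pi * ζ) := by
  refine ⟨Complex.cos (Real.pi * k), fun ζ => ?_⟩
  rw [mul_sub, Complex.sin_sub, sin_pi_int]; ring

lemma int_mem_ball (N : ℕ) (R : ℝ) (hR : (N:ℝ) < R) (k : ℤ) (hk : k ∈ Finset.Icc (-(N:ℤ)) N) : (k:ℂ) ∈ Metric.ball (0:ℂ) R := by
  rw [Finset.mem_Icc] at hk
  rw [mem_ball_zero_iff, Complex.norm_intCast]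
  refine lt_of_le_of_lt ?_ hR
  exact_mod_cast abs_le.2 hk

lemma int_of_sin_zero (N : ℕ) (a : ℂ) (ha : ‖a‖ < N + 1) (h : Complex.sin (Real.pi * a) = 0) :
    ∃ k ∈ Finset.Icc (-(N:ℤ)) N, a = k := by
  rw [Complex.sin_eq_zero_iff] at h
  obtain ⟨k, hk⟩ := h
  have hp : (Real.pi : ℂ) ≠ 0 := by exact_mod_cast Real.pi_ne_zero
  have e : a = k := by
    apply mul_left_cancel₀ hp; rw [hk]; ring
  refine ⟨k, ?_, e⟩
  rw [e, Complex.norm_intCast] at ha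
  have : |k| < (N:ℤ) + 1 := by exact_mod_cast ha
  rw [Finset.mem_Icc]
  have := abs_lt.1 this
  omega

lemma circ_two (R : ℝ) (a z : ℂ) (ha : a ∈ Metric.ball (0:ℂ) R) (hz : z ∈ Metric.ball (0:ℂ) R)
    (h : z ≠ a) : (∮ ζ in C(0, R), (ζ - z)⁻¹ * (ζ - a)⁻¹) = 0 := by
  have hR : 0 ≤ R := dist_nonneg.trans (le_of_lt ha)
  have hne : ∀ b ∈ Metric.ball (0:ℂ) R, ∀ ζ ∈ Metric.sphere (0:ℂ) R, ζ - b ≠ 0 := by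
    intro b hb ζ hζ e
    rw [sub_eq_zero] at e
    rw [← e, mem_ball_zero_iff] at hb
    rw [mem_sphere_zero_iff_norm] at hζ
    linarith
  have hCint : ∀ b ∈ Metric.ball (0:ℂ) R, CircleIntegrable (fun ζ => (ζ - b)⁻¹) 0 R := by
    intro b hb
    refine ContinuousOn.circleIntegrable hR ?_
    exact ContinuousOn.inv₀ (by fun_prop) (hne b hb)
  have : (∮ ζ in C(0, R), (ζ - z)⁻¹ * (ζ - a)⁻¹) =
      ∮ ζ in C(0, R), (z - a)⁻¹ * ((ζ - z)⁻¹ - (ζ - a)⁻¹) := by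
    refine circleIntegral.integral_congr hR fun ζ hζ => ?_
    have h1 := hne a ha ζ hζ
    have h2 := hne z hz ζ hζ
    have h3 : z - a ≠ 0 := sub_ne_zero.2 h
    field_simp
    ring
  rw [this, circleIntegral.integral_const_mul, circleIntegral.integral_sub (hCint z hz) (hCint a ha),
    circleIntegral.integral_sub_inv_of_mem_ball hz, circleIntegral.integral_sub_inv_of_mem_ball ha]
  simp

lemma cardSum_error (F : ℂ → ℂ) (hF : Differentiable ℂ F) (N : ℕ) (B : ℝ)
    (hB : ∀ ζ : ℂ, ‖ζ‖ = N + 1 / 2 → ‖F ζ‖ ≤ B * ‖Complex.sin (Real.pi * ζ)‖)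
    (z : ℂ) (hz : ‖z‖ ≤ (N + 1 / 2) / 2) :
    ‖F z - cardSum F N z‖ ≤ 2 * B * Real.exp (Real.pi * |z.im|) := by
  classical
  set R : ℝ := N + 1 / 2 with hRdef
  have hN0 : (0:ℝ) ≤ N := by positivity
  have hR : 0 < R := by positivity
  have hsin_ne : ∀ ζ : ℂ, ‖ζ‖ = R → Complex.sin (Real.pi * ζ) ≠ 0 := by
    intro ζ hζ e
    have := sin_circle_lower N ζ hζ
    rw [e, norm_zero, mul_zero] at this
    exact absurd this (not_le.2 (Real.exp_pos _))
  have hB0 : 0 ≤ B := by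
    have h1 := hB (R:ℂ) (by rw [Complex.norm_real, Real.norm_of_nonneg hR.le])
    have h2 : 0 < ‖Complex.sin (Real.pi * (R:ℂ))‖ :=
      norm_pos_iff.2 (hsin_ne R (by rw [Complex.norm_real, Real.norm_of_nonneg hR.le]))
    exact nonneg_of_mul_nonneg_left ((norm_nonneg _).trans h1) h2
  by_cases hzk : ∃ k ∈ Finset.Icc (-(N:ℤ)) N, z = k
  · obtain ⟨k, hk, rfl⟩ := hzk
    rw [cardSum_int F N k hk, sub_self, norm_zero]
    positivity
  push Not at hzk
  have hzR : z ∈ Metric.ball (0:ℂ) R := by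
    rw [mem_ball_zero_iff]; linarith
  set S : Finset ℂ := (Finset.Icc (-(N:ℤ)) N).image (fun k : ℤ => (k:ℂ)) with hS
  have hSmem : ∀ a, a ∈ S ↔ ∃ k ∈ Finset.Icc (-(N:ℤ)) N, (k:ℂ) = a := by
    intro a; rw [hS, Finset.mem_image]
  have hSU : ∀ a ∈ S, a ∈ Metric.ball (0:ℂ) (N + 1) := by
    intro a ha
    obtain ⟨k, hk, rfl⟩ := (hSmem a).1 ha
    exact int_mem_ball N _ (by linarith) k hk
  obtain ⟨g, hg, hDg⟩ := exists_factor Metric.isOpen_ball S hSU (fun z => F z - cardSum F N z)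
    (hF.sub (cardSum_diff F N)).differentiableOn (by
      intro a ha
      obtain ⟨k, hk, rfl⟩ := (hSmem a).1 ha
      simp [cardSum_int F N k hk])
  have hsd : Differentiable ℂ (fun z : ℂ => Complex.sin (Real.pi * z)) := by fun_prop
  obtain ⟨s, hs, hss⟩ := exists_factor Metric.isOpen_ball S hSU
    (fun z => Complex.sin (Real.pi * z)) hsd.differentiableOn (by
      intro a ha
      obtain ⟨k, hk, rfl⟩ := (hSmem a).1 ha
      exact sin_pi_int k)
  have hs0 : ∀ a ∈ Metric.ball (0:ℂ) (N + 1), s a ≠ 0 := by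
    intro a ha e
    have h0 : Complex.sin (Real.pi * a) = 0 := by
      have := hss a
      rw [this, e, mul_zero]
    have hPa : ∏ b ∈ S, (a - b) = 0 := by
      obtain ⟨k, hk, hak⟩ := int_of_sin_zero N a (by simpa using ha) h0
      exact Finset.prod_eq_zero ((hSmem a).2 ⟨k, hk, hak.symm⟩) (sub_self a)
    have hsda : DifferentiableAt ℂ s a := hs.differentiableAt (Metric.isOpen_ball.mem_nhds ha)
    have hPd : DifferentiableAt ℂ (fun z => ∏ b ∈ S, (z - b)) a := by fun_prop
    have d1 := hPd.hasDerivAt.mul hsda.hasDerivAt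
    rw [e, hPa, mul_zero, zero_mul, add_zero] at d1
    have d2 : HasDerivAt (fun z : ℂ => Complex.sin (Real.pi * z))
        (Complex.cos (Real.pi * a) * (Real.pi * 1)) a :=
      ((hasDerivAt_id a).const_mul (Real.pi:ℂ)).csin
    have e3 : (fun z : ℂ => Complex.sin (Real.pi * z)) = (fun z => ∏ b ∈ S, (z - b)) * s :=
      funext hss
    rw [e3] at d2
    have := d2.unique d1
    rw [mul_one, mul_eq_zero] at this
    rcases this with h | h
    · have := Complex.sin_sq_add_cos_sq (Real.pi * a)
      rw [h, h0] at this
      norm_num at this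
    · exact Real.pi_ne_zero (by exact_mod_cast h)
  set E : ℂ → ℂ := fun z => g z / s z with hE
  have hEd : DifferentiableOn ℂ E (Metric.closedBall 0 R) := by
    have hsub : Metric.closedBall (0:ℂ) R ⊆ Metric.ball 0 (N + 1) :=
      Metric.closedBall_subset_ball (by rw [hRdef]; linarith)
    exact (hg.mono hsub).div (hs.mono hsub) (fun a ha => hs0 a (hsub ha))
  have hDE : ∀ a ∈ Metric.closedBall (0:ℂ) R, F a - cardSum F N a = Complex.sin (Real.pi * a) * E a := by
    intro a ha
    have hsub : Metric.closedBall (0:ℂ) R ⊆ Metric.ball 0 (N + 1) :=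
      Metric.closedBall_subset_ball (by rw [hRdef]; linarith)
    have h1 := hDg a
    have h2 := hss a
    rw [h1, h2, hE]
    have := hs0 a (hsub ha)
    field_simp
  have hC := hEd.circleIntegral_sub_inv_smul hzR
  choose e he using sin_sub_int
  have hkb : ∀ k ∈ Finset.Icc (-(N:ℤ)) N, (k:ℂ) ∈ Metric.ball (0:ℂ) R :=
    fun k hk => int_mem_ball N _ (by rw [hRdef]; linarith) k hk
  have hne : ∀ b ∈ Metric.ball (0:ℂ) R, ∀ ζ ∈ Metric.sphere (0:ℂ) R, ζ - b ≠ 0 := by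
    intro b hb ζ hζ e
    rw [sub_eq_zero] at e
    rw [← e, mem_ball_zero_iff] at hb
    rw [mem_sphere_zero_iff_norm] at hζ
    linarith
  have hpi : (Real.pi : ℂ) ≠ 0 := by exact_mod_cast Real.pi_ne_zero
  have hcong : (∮ ζ in C(0, R), (ζ - z)⁻¹ • E ζ) =
      ∮ ζ in C(0, R), ((ζ - z)⁻¹ * (F ζ / Complex.sin (Real.pi * ζ)) -
        ∑ k ∈ Finset.Icc (-(N:ℤ)) N, (F k * e k / Real.pi) * ((ζ - z)⁻¹ * (ζ - k)⁻¹)) := by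
    refine circleIntegral.integral_congr hR.le fun ζ hζ => ?_
    have hs1 := hsin_ne ζ (by simpa using hζ)
    have h1 := hDE ζ (Metric.sphere_subset_closedBall hζ)
    have h2 : E ζ = F ζ / Complex.sin (Real.pi * ζ) - cardSum F N ζ / Complex.sin (Real.pi * ζ) := by
      rw [← sub_div, h1]; field_simp
    have h3 : cardSum F N ζ / Complex.sin (Real.pi * ζ) =
        ∑ k ∈ Finset.Icc (-(N:ℤ)) N, (F k * e k / Real.pi) * (ζ - k)⁻¹ := by
      unfold cardSum
      rw [Finset.sum_div]
      refine Finset.sum_congr rfl fun k hk => ?_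
      have h4 := hne k (hkb k hk) ζ hζ
      have h5 := mul_csinc (Real.pi * (ζ - k))
      rw [he k ζ] at h5
      have h6 : csinc (Real.pi * (ζ - k)) = e k * Complex.sin (Real.pi * ζ) / (Real.pi * (ζ - k)) := by
        rw [← h5]; field_simp
      rw [h6]; field_simp
    simp only [smul_eq_mul]
    rw [h2, h3, mul_sub, Finset.mul_sum]
    congr 1
    exact Finset.sum_congr rfl fun k _ => by ring
  have hi1 : CircleIntegrable (fun ζ => (ζ - z)⁻¹ * (F ζ / Complex.sin (Real.pi * ζ))) 0 R := by
    refine ContinuousOn.circleIntegrable hR.le ?_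
    refine ContinuousOn.mul (ContinuousOn.inv₀ (by fun_prop) (hne z hzR)) ?_
    exact hF.continuous.continuousOn.div hsd.continuous.continuousOn
      fun ζ hζ => hsin_ne ζ (by simpa using hζ)
  have hi2 : ∀ k ∈ Finset.Icc (-(N:ℤ)) N, CircleIntegrable
      (fun ζ => (F k * e k / Real.pi) * ((ζ - z)⁻¹ * (ζ - k)⁻¹)) 0 R := by
    intro k hk
    refine ContinuousOn.circleIntegrable hR.le ?_
    refine continuousOn_const.mul (ContinuousOn.mul (ContinuousOn.inv₀ (by fun_prop) (hne z hzR)) ?_)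
    exact ContinuousOn.inv₀ (by fun_prop) (hne k (hkb k hk))
  have hi3 : CircleIntegrable (fun ζ => ∑ k ∈ Finset.Icc (-(N:ℤ)) N,
      (F k * e k / Real.pi) * ((ζ - z)⁻¹ * (ζ - k)⁻¹)) 0 R := CircleIntegrable.fun_sum _ hi2
  rw [hcong, circleIntegral.integral_sub hi1 hi3, circleIntegral.integral_fun_sum hi2] at hC
  have hz0 : ∑ k ∈ Finset.Icc (-(N:ℤ)) N, (∮ ζ in C(0, R),
      (F k * e k / Real.pi) * ((ζ - z)⁻¹ * (ζ - k)⁻¹)) = 0 := by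
    refine Finset.sum_eq_zero fun k hk => ?_
    rw [circleIntegral.integral_const_mul, circ_two R k z (hkb k hk) hzR (hzk k hk), mul_zero]
  rw [hz0, sub_zero] at hC
  have hbd : ‖∮ ζ in C(0, R), (ζ - z)⁻¹ * (F ζ / Complex.sin (Real.pi * ζ))‖ ≤
      2 * Real.pi * R * (2 / R * B) := by
    refine circleIntegral.norm_integral_le_of_norm_le_const hR.le fun ζ hζ => ?_
    have hζ' : ‖ζ‖ = R := by simpa using hζ
    have hs1 := norm_pos_iff.2 (hsin_ne ζ hζ')
    rw [norm_mul, norm_inv, norm_div]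
    have h1 : R / 2 ≤ ‖ζ - z‖ := by
      have := norm_sub_norm_le ζ z
      linarith
    have h2 : ‖ζ - z‖⁻¹ ≤ 2 / R := by
      rw [← inv_div]; exact inv_anti₀ (by positivity) h1
    have h3 : ‖F ζ‖ / ‖Complex.sin (Real.pi * ζ)‖ ≤ B := by
      rw [div_le_iff₀ hs1]; exact hB ζ hζ'
    gcongr
  rw [hC, norm_smul] at hbd
  have hn : ‖(2 * Real.pi * I : ℂ)‖ = 2 * Real.pi := by
    simp [Real.pi_pos.le]
  rw [hn] at hbd
  have hEz : ‖E z‖ ≤ 2 * B := by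
    have h2 : 2 * Real.pi * R * (2 / R * B) = 2 * Real.pi * (2 * B) := by field_simp
    rw [h2] at hbd
    exact le_of_mul_le_mul_left hbd (by positivity)
  rw [hDE z (Metric.ball_subset_closedBall hzR), norm_mul, mul_comm]
  have hsz : ‖Complex.sin (Real.pi * z)‖ ≤ Real.exp (Real.pi * |z.im|) := by
    have := norm_csin_le (Real.pi * z)
    rwa [Complex.im_ofReal_mul, abs_mul, abs_of_pos Real.pi_pos] at this
  gcongr

lemma norm_exp_neg_sq (δ : ℝ) (z : ℂ) :
    ‖Complex.exp (-(δ:ℂ) * z ^ 2)‖ = Real.exp (-δ * (z.re ^ 2 - z.im ^ 2)) := by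
  rw [Complex.norm_exp]
  congr 1
  have : -(δ:ℂ) * z ^ 2 = ((-δ : ℝ) : ℂ) * z ^ 2 := by push_cast; ring
  rw [this, Complex.re_ofReal_mul, pow_two z, Complex.mul_re]; ring

lemma tail_unif {ι : Type*} (l : Filter ι) (F : ι → ℂ → ℂ) (f : ℂ → ℂ) (C b ε' ε : ℝ)
    (hε : ε' < ε)
    (h1 : ∀ᶠ j in l, ∀ z, ‖F j z - f z‖ ≤ C * Real.exp (b * |z.im| + ε' * ‖z‖))
    (h2 : ∀ r δ : ℝ, 0 < δ → ∀ᶠ j in l, ∀ z, ‖z‖ ≤ r → ‖F j z - f z‖ ≤ δ)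
    (hb : 0 ≤ b) (hε0 : 0 ≤ ε)
    (δ : ℝ) (hδ : 0 < δ) :
    ∀ᶠ j in l, ∀ z, ‖F j z - f z‖ ≤ δ * Real.exp (b * |z.im| + ε * ‖z‖) := by
  filter_upwards [h1, h2 (|C| / (δ * (ε - ε'))) δ hδ] with j hj1 hj2 z
  by_cases hz : ‖z‖ ≤ |C| / (δ * (ε - ε'))
  · refine (hj2 z hz).trans ?_
    have : 1 ≤ Real.exp (b * |z.im| + ε * ‖z‖) := Real.one_le_exp (by positivity)
    nlinarith
  · push Not at hz
    refine (hj1 z).trans ?_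
    have hpos : 0 < δ * (ε - ε') := mul_pos hδ (by linarith)
    rw [div_lt_iff₀ hpos] at hz
    have h3 : (ε - ε') * ‖z‖ ≤ Real.exp ((ε - ε') * ‖z‖) := by
      have := Real.add_one_le_exp ((ε - ε') * ‖z‖); linarith
    have h4 : C ≤ δ * Real.exp ((ε - ε') * ‖z‖) := by
      calc C ≤ |C| := le_abs_self _
        _ ≤ δ * ((ε - ε') * ‖z‖) := by linarith
        _ ≤ _ := by gcongr
    calc C * Real.exp (b * |z.im| + ε' * ‖z‖)
        ≤ δ * Real.exp ((ε - ε') * ‖z‖) * Real.exp (b * |z.im| + ε' * ‖z‖) := by gcongr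
      _ = δ * Real.exp (b * |z.im| + ε * ‖z‖) := by
        rw [mul_assoc, ← Real.exp_add]; ring_nf

lemma cardSum_bound (F : ℂ → ℂ) (N : ℕ) (M : ℝ)
    (hF : ∀ k ∈ Finset.Icc (-(N:ℤ)) N, ‖F k‖ ≤ M) (z : ℂ) :
    ‖cardSum F N z‖ ≤ (2 * N + 1) * M * Real.exp (Real.pi * |z.im|) := by
  unfold cardSum
  refine (norm_sum_le _ _).trans ?_
  have hc : ((Finset.Icc (-(N:ℤ)) N).card : ℝ) = 2 * N + 1 := by
    rw [Int.card_Icc]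
    have : ((N:ℤ) + 1 - -(N:ℤ)).toNat = 2 * N + 1 := by omega
    rw [this]; push_cast; ring
  rw [← hc, mul_assoc, ← nsmul_eq_mul]
  refine Finset.sum_le_card_nsmul _ _ _ fun k hk => ?_
  rw [norm_mul]
  have h1 : ‖csinc (Real.pi * (z - k))‖ ≤ Real.exp (Real.pi * |z.im|) := by
    have := norm_csinc_le (Real.pi * (z - k))
    rwa [Complex.im_ofReal_mul, abs_mul, abs_of_pos Real.pi_pos, Complex.sub_im, Complex.intCast_im,
      sub_zero] at this
  have := hF k hk
  have h0 : 0 ≤ M := (norm_nonneg _).trans this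
  gcongr

lemma interp (f : ℂ → ℂ) (hf : Differentiable ℂ f) (ρ : ℝ) (hρ0 : 0 ≤ ρ) (hρ : ρ < Real.pi)
    (hb : ∀ ε > (0:ℝ), ∃ C : ℝ, ∀ z, ‖f z‖ ≤ C * Real.exp (ρ * |z.im| + ε * ‖z‖))
    (ε₀ : ℝ) (hε₀ : 0 < ε₀) :
    ∃ T : ℕ → ℂ → ℂ, (∀ N, Differentiable ℂ (T N) ∧ ∃ C : ℝ, ∀ z, ‖T N z‖ ≤ C * Real.exp (Real.pi * |z.im|)) ∧
      (∃ C : ℝ, ∀ N z, ‖T N z‖ ≤ C * Real.exp (Real.pi * |z.im| + ε₀ * ‖z‖)) ∧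
      ∀ r δ : ℝ, 0 < δ → ∀ᶠ N in atTop, ∀ z, ‖z‖ ≤ r → ‖T N z - f z‖ ≤ δ := by
  set η : ℝ := min ((Real.pi - ρ) / 2) (ε₀ / 2) with hη
  have hη0 : 0 < η := lt_min (by linarith) (by linarith)
  have hη1 : 2 * η ≤ Real.pi - ρ := by have := min_le_left ((Real.pi - ρ) / 2) (ε₀ / 2); linarith
  have hη2 : 2 * η ≤ ε₀ := by have := min_le_right ((Real.pi - ρ) / 2) (ε₀ / 2); linarith
  obtain ⟨C, hC⟩ := hb (η / 2) (by positivity)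
  have hC0 : 0 ≤ C := by
    have := hC 0
    simp at this
    exact (norm_nonneg _).trans this
  have hRpos : ∀ N : ℕ, (0:ℝ) < N + 1 / 2 := fun N => by positivity
  set F : ℕ → ℂ → ℂ := fun N z => f z * Complex.exp (-((η / (N + 1 / 2) : ℝ) : ℂ) * z ^ 2) with hF
  have hFd : ∀ N, Differentiable ℂ (F N) := by
    intro N
    refine hf.mul ?_
    fun_prop
  have hFn : ∀ N z, ‖F N z‖ = ‖f z‖ * Real.exp (-(η / (N + 1 / 2)) * (z.re ^ 2 - z.im ^ 2)) := by
    intro N z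
    rw [hF]
    simp only
    rw [norm_mul, norm_exp_neg_sq]
  have hFk : ∀ N : ℕ, ∀ k ∈ Finset.Icc (-(N:ℤ)) N, ‖F N k‖ ≤ C * Real.exp (η / 2 * (N + 1 / 2)) := by
    intro N k hk
    rw [hFn]
    have h1 := hC k
    simp only [Complex.intCast_im, abs_zero, mul_zero, zero_add, Complex.norm_intCast] at h1
    have h2 : |(k:ℝ)| ≤ N + 1 / 2 := by
      have : |k| ≤ (N:ℤ) := abs_le.2 (Finset.mem_Icc.1 hk)
      have : |(k:ℝ)| ≤ N := by exact_mod_cast this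
      linarith
    have h3 : Real.exp (-(η / (N + 1 / 2)) * ((k:ℂ).re ^ 2 - (k:ℂ).im ^ 2)) ≤ 1 := by
      rw [Real.exp_le_one_iff]
      simp only [Complex.intCast_im, Complex.intCast_re]
      have : 0 ≤ η / (N + 1 / 2) * (k:ℝ) ^ 2 := by have := hRpos N; positivity
      linarith
    calc ‖f k‖ * _ ≤ ‖f k‖ * 1 := by gcongr
      _ ≤ C * Real.exp (η / 2 * |(k:ℝ)|) := by rw [mul_one]; exact h1
      _ ≤ _ := by gcongr
  have hTN : ∀ N z, ‖cardSum (F N) N z‖ ≤ (2 * N + 1) * (C * Real.exp (η / 2 * (N + 1 / 2))) *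
      Real.exp (Real.pi * |z.im|) := fun N z => cardSum_bound (F N) N _ (hFk N) z
  have herr : ∀ (N : ℕ) (z : ℂ), ‖z‖ ≤ (N + 1 / 2) / 2 → ‖F N z - cardSum (F N) N z‖ ≤
      2 * (3 * C * Real.exp (-(η / 2) * (N + 1 / 2))) * Real.exp (Real.pi * |z.im|) := by
    intro N z hz
    refine cardSum_error (F N) (hFd N) N _ (fun ζ hζ => ?_) z hz
    have h1 := sin_circle_lower N ζ hζ
    rw [hFn]
    have hR := hRpos N
    have hxy : ζ.re ^ 2 + ζ.im ^ 2 = (N + 1 / 2 : ℝ) ^ 2 := by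
      rw [← hζ, ← Complex.normSq_eq_norm_sq, Complex.normSq_apply]; ring
    have hy : |ζ.im| ≤ N + 1 / 2 := by rw [← hζ]; exact Complex.abs_im_le_norm ζ
    have h2 : -(η / (N + 1 / 2)) * (ζ.re ^ 2 - ζ.im ^ 2) ≤ -η * (N + 1 / 2) + 2 * η * |ζ.im| := by
      have : ζ.re ^ 2 - ζ.im ^ 2 = (N + 1 / 2 : ℝ) ^ 2 - 2 * ζ.im ^ 2 := by linarith
      rw [this]
      have h4 : -(η / (N + 1 / 2)) * ((N + 1 / 2 : ℝ) ^ 2 - 2 * ζ.im ^ 2) =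
        -η * (N + 1 / 2) + 2 * η * (ζ.im ^ 2 / (N + 1 / 2)) := by field_simp; ring
      rw [h4]
      have h5 : ζ.im ^ 2 / (N + 1 / 2) ≤ |ζ.im| := by
        rw [div_le_iff₀ hR, ← sq_abs, pow_two]; gcongr
      gcongr
    have h3 := hC ζ
    rw [hζ] at h3
    calc _ ≤ C * Real.exp (ρ * |ζ.im| + η / 2 * (N + 1 / 2)) *
          Real.exp (-η * (N + 1 / 2) + 2 * η * |ζ.im|) := by gcongr
      _ = C * (Real.exp (-(η / 2) * (N + 1 / 2)) * Real.exp ((ρ + 2 * η) * |ζ.im|)) := by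
        rw [mul_assoc, ← Real.exp_add, ← Real.exp_add]; ring_nf
      _ ≤ C * (Real.exp (-(η / 2) * (N + 1 / 2)) * Real.exp (Real.pi * |ζ.im|)) := by
        gcongr; linarith
      _ ≤ C * (Real.exp (-(η / 2) * (N + 1 / 2)) * (3 * ‖Complex.sin (Real.pi * ζ)‖)) := by gcongr
      _ = _ := by ring
  refine ⟨fun N => cardSum (F N) N, fun N => ⟨cardSum_diff _ _, _, hTN N⟩, ⟨C * (7 + 4 / η), ?_⟩, ?_⟩
  · intro N z
    have hR := hRpos N
    by_cases hz : ‖z‖ ≤ (N + 1 / 2) / 2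
    · have h1 := herr N z hz
      have h2 : ‖F N z‖ ≤ C * Real.exp (Real.pi * |z.im| + ε₀ * ‖z‖) := by
        rw [hFn]
        have h3 : -(η / (N + 1 / 2)) * (z.re ^ 2 - z.im ^ 2) ≤ η / 2 * ‖z‖ := by
          have hn : z.re ^ 2 + z.im ^ 2 = ‖z‖ ^ 2 := by
            rw [← Complex.normSq_eq_norm_sq, Complex.normSq_apply]; ring
          have h4 : -(η / (N + 1 / 2)) * (z.re ^ 2 - z.im ^ 2) ≤ (η / (N + 1 / 2)) * ‖z‖ ^ 2 := by
            rw [← hn]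
            have : 0 ≤ η / (N + 1 / 2) * z.re ^ 2 := by positivity
            nlinarith
          refine h4.trans ?_
          calc η / (N + 1 / 2) * ‖z‖ ^ 2 = η / (N + 1 / 2) * ‖z‖ * ‖z‖ := by ring
            _ ≤ η / (N + 1 / 2) * ((N + 1 / 2) / 2) * ‖z‖ := by gcongr
            _ = _ := by field_simp
        calc _ ≤ C * Real.exp (ρ * |z.im| + η / 2 * ‖z‖) * Real.exp (η / 2 * ‖z‖) := by
              gcongr; exact hC z
          _ = C * Real.exp (ρ * |z.im| + η * ‖z‖) := by
              rw [mul_assoc, ← Real.exp_add]; ring_nf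
          _ ≤ _ := by gcongr; linarith
      have h3 : Real.exp (-(η / 2) * (N + 1 / 2)) ≤ 1 := by
        rw [Real.exp_le_one_iff]
        have : 0 ≤ η / 2 * (N + 1 / 2) := by positivity
        linarith
      have h4 : Real.exp (Real.pi * |z.im|) ≤ Real.exp (Real.pi * |z.im| + ε₀ * ‖z‖) :=
        Real.exp_le_exp.2 (by have : 0 ≤ ε₀ * ‖z‖ := by positivity
                              linarith)
      have h5 : ‖cardSum (F N) N z‖ ≤ ‖F N z‖ + ‖F N z - cardSum (F N) N z‖ := by
        have := norm_sub_le (F N z) (F N z - cardSum (F N) N z)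
        rwa [sub_sub_cancel] at this
      calc _ ≤ _ := h5
        _ ≤ C * Real.exp (Real.pi * |z.im| + ε₀ * ‖z‖) +
          2 * (3 * C * 1) * Real.exp (Real.pi * |z.im| + ε₀ * ‖z‖) := by
            refine add_le_add h2 (h1.trans ?_)
            gcongr
        _ = C * 7 * Real.exp (Real.pi * |z.im| + ε₀ * ‖z‖) := by ring
        _ ≤ _ := by
          gcongr
          have : 0 ≤ 4 / η := by positivity
          linarith
    · push Not at hz
      have h1 := hTN N z
      have h2 : (2 * (N:ℝ) + 1) ≤ 4 / η * Real.exp (η * ‖z‖) := by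
        have h3 := Real.add_one_le_exp (η * ‖z‖)
        rw [div_mul_eq_mul_div, le_div_iff₀ hη0]
        nlinarith
      have h3 : Real.exp (η / 2 * (N + 1 / 2)) ≤ Real.exp (η * ‖z‖) := by
        apply Real.exp_le_exp.2; nlinarith
      calc _ ≤ _ := h1
        _ ≤ (4 / η * Real.exp (η * ‖z‖)) * (C * Real.exp (η * ‖z‖)) * Real.exp (Real.pi * |z.im|) := by
          gcongr
        _ = C * (4 / η) * (Real.exp (η * ‖z‖) * (Real.exp (η * ‖z‖) * Real.exp (Real.pi * |z.im|))) := by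
          ring
        _ = C * (4 / η) * Real.exp (Real.pi * |z.im| + 2 * η * ‖z‖) := by
          rw [← Real.exp_add, ← Real.exp_add]; ring_nf
        _ ≤ C * (7 + 4 / η) * Real.exp (Real.pi * |z.im| + ε₀ * ‖z‖) := by
          gcongr; linarith
  · intro r δ hδ
    set M : ℝ := C * Real.exp (ρ * |r| + η / 2 * |r|)
    set A : ℝ := M * (2 * (η * r ^ 2)) + 2 * (3 * C * (2 / η)) * Real.exp (Real.pi * |r|) with hA
    have hlim : Tendsto (fun N : ℕ => ((N:ℝ) + 1 / 2)) atTop atTop :=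
      tendsto_atTop_add_const_right _ _ tendsto_natCast_atTop_atTop
    filter_upwards [hlim.eventually_ge_atTop (2 * |r|), hlim.eventually_ge_atTop (η * r ^ 2),
      hlim.eventually_ge_atTop (A / δ)] with N h1 h2 h3 z hz
    have hR := hRpos N
    have hzr : ‖z‖ ≤ |r| := hz.trans (le_abs_self r)
    have hyr : |z.im| ≤ |r| := (Complex.abs_im_le_norm z).trans hzr
    have e1 := herr N z (by linarith)
    have e2 : Real.exp (-(η / 2) * (N + 1 / 2)) ≤ (2 / η) / (N + 1 / 2) := by
      rw [neg_mul, Real.exp_neg]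
      have h4 := Real.add_one_le_exp (η / 2 * (N + 1 / 2))
      have : (2 / η) / (N + 1 / 2) = (η / 2 * (N + 1 / 2))⁻¹ := by field_simp
      rw [this]
      exact inv_anti₀ (by positivity) (by linarith)
    have e3 : ‖F N z - f z‖ ≤ M * (2 * (η * r ^ 2)) / (N + 1 / 2) := by
      have : F N z - f z = f z * (Complex.exp (-((η / (N + 1 / 2) : ℝ) : ℂ) * z ^ 2) - 1) := by
        simp only [hF]; ring
      rw [this, norm_mul]
      have hfz : ‖f z‖ ≤ M := (hC z).trans (by simp only [M]; gcongr)
      have hn : ‖-((η / (N + 1 / 2) : ℝ) : ℂ) * z ^ 2‖ ≤ η * r ^ 2 / (N + 1 / 2) := by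
        rw [norm_mul, norm_neg, Complex.norm_real, Real.norm_of_nonneg (by positivity), norm_pow,
          ← sq_abs r]
        calc η / (N + 1 / 2) * ‖z‖ ^ 2 ≤ η / (N + 1 / 2) * |r| ^ 2 := by gcongr
          _ = _ := by ring
      have := Complex.norm_exp_sub_one_le (x := -((η / (N + 1 / 2) : ℝ) : ℂ) * z ^ 2)
        (hn.trans (by rw [div_le_one hR]; exact h2))
      have hM : 0 ≤ M := (norm_nonneg _).trans hfz
      calc _ ≤ M * (2 * (η * r ^ 2 / (N + 1 / 2))) := by
            gcongr
            exact this.trans (by gcongr)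
        _ = _ := by ring
    have e4 : ‖F N z - cardSum (F N) N z‖ ≤
        2 * (3 * C * (2 / η)) * Real.exp (Real.pi * |r|) / (N + 1 / 2) := by
      refine e1.trans ?_
      calc _ ≤ 2 * (3 * C * ((2 / η) / (N + 1 / 2))) * Real.exp (Real.pi * |r|) := by
            gcongr
        _ = _ := by ring
    have e5 : cardSum (F N) N z - f z = (F N z - f z) - (F N z - cardSum (F N) N z) := by ring
    rw [e5]
    calc _ ≤ _ := norm_sub_le _ _
      _ ≤ _ := add_le_add e3 e4
      _ = A / (N + 1 / 2) := by rw [← add_div]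
      _ ≤ δ := by
        rw [div_le_iff₀ hR]
        rw [div_le_iff₀ hδ] at h3
        linarith

lemma norm_csinc_real (κ : ℝ) (hκ : 0 ≤ κ) (z : ℂ) :
    ‖csinc (κ * z) ^ 4‖ ≤ Real.exp (4 * κ * |z.im|) := by
  have h := norm_csinc_le (κ * z)
  rw [Complex.im_ofReal_mul, abs_mul, abs_of_nonneg hκ] at h
  rw [norm_pow]
  calc _ ≤ Real.exp (κ * |z.im|) ^ 4 := by gcongr
    _ = _ := by rw [← Real.exp_nat_mul]; push_cast; ring_nf

lemma norm_csinc_real' (κ : ℝ) (hκ : 0 < κ) (z : ℂ) :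
    ‖z‖ ^ 4 * ‖csinc (κ * z) ^ 4‖ ≤ (κ⁻¹) ^ 4 * Real.exp (4 * κ * |z.im|) := by
  have h := norm_mul_csinc (κ * z)
  rw [Complex.im_ofReal_mul, abs_mul, abs_of_pos hκ, norm_mul, Complex.norm_real,
    Real.norm_of_nonneg hκ.le] at h
  rw [norm_pow]
  calc _ = (κ⁻¹) ^ 4 * (κ * ‖z‖ * ‖csinc (κ * z)‖) ^ 4 := by field_simp
    _ ≤ (κ⁻¹) ^ 4 * Real.exp (κ * |z.im|) ^ 4 := by gcongr
    _ = _ := by rw [← Real.exp_nat_mul]; push_cast; ring_nf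

lemma density_one (b : ℝ) (hb : 0 < b) (f : ℂ → ℂ) (hf : Differentiable ℂ f)
    (hfb : ∀ ε > (0:ℝ), ∃ C : ℝ, ∀ z, ‖f z‖ ≤ C * Real.exp (b * |z.im| + ε * ‖z‖))
    (ε₀ : ℝ) (hε₀ : 0 < ε₀) (δ : ℝ) (hδ : 0 < δ) :
    ∃ μ : ℝ, 0 < μ ∧ μ < 1 ∧ ∀ z : ℂ, ‖f ((μ ^ 2 : ℝ) * z) * csinc (((1 - μ) * b / 4 : ℝ) * z) ^ 4 - f z‖
      ≤ δ * Real.exp (b * |z.im| + ε₀ * ‖z‖) := by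
  obtain ⟨C, hC⟩ := hfb (ε₀ / 2) (by positivity)
  have hC0 : 0 ≤ C := by
    have := hC 0
    simp at this
    exact (norm_nonneg _).trans this
  set F : ℝ → ℂ → ℂ := fun μ z => f ((μ ^ 2 : ℝ) * z) * csinc (((1 - μ) * b / 4 : ℝ) * z) ^ 4 with hF
  have hI : ∀ᶠ μ in nhdsWithin (1:ℝ) (Set.Iio 1), 0 < μ ∧ μ < 1 := by
    have h1 : ∀ᶠ μ in nhdsWithin (1:ℝ) (Set.Iio 1), 0 < μ :=
      nhdsWithin_le_nhds (lt_mem_nhds (by norm_num))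
    exact h1.and self_mem_nhdsWithin
  have hcont : Continuous (fun p : ℝ × ℂ => F p.1 p.2) := by
    have := hf.continuous
    have := csinc_diff.continuous
    simp only [hF]
    fun_prop
  have key := tail_unif (nhdsWithin (1:ℝ) (Set.Iio 1)) F f (2 * C) b (ε₀ / 2) ε₀ (by linarith)
    (by
      filter_upwards [hI] with μ hμ z
      have h1 := hC ((μ ^ 2 : ℝ) * z)
      rw [Complex.im_ofReal_mul, norm_mul, Complex.norm_real, Real.norm_of_nonneg (by positivity),
        abs_mul, abs_of_nonneg (sq_nonneg μ)] at h1
      have h2 := norm_csinc_real ((1 - μ) * b / 4) (by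
        have : 0 < 1 - μ := by linarith
        positivity) z
      have h3 := hC z
      have hμ2 : μ ^ 2 ≤ μ := by nlinarith
      have h4 : ‖F μ z‖ ≤ C * Real.exp (b * |z.im| + ε₀ / 2 * ‖z‖) := by
        simp only [hF]
        rw [norm_mul]
        calc _ ≤ C * Real.exp (b * (μ ^ 2 * |z.im|) + ε₀ / 2 * (μ ^ 2 * ‖z‖)) *
              Real.exp (4 * ((1 - μ) * b / 4) * |z.im|) := by gcongr
          _ = C * Real.exp (b * (μ ^ 2 + 1 - μ) * |z.im| + ε₀ / 2 * (μ ^ 2 * ‖z‖)) := by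
            rw [mul_assoc, ← Real.exp_add]; ring_nf
          _ ≤ C * Real.exp (b * 1 * |z.im| + ε₀ / 2 * (1 * ‖z‖)) := by
            gcongr <;> linarith
          _ = _ := by ring_nf
      calc _ ≤ _ := norm_sub_le _ _
        _ ≤ _ := add_le_add h4 h3
        _ = _ := by ring)
    (by
      intro r δ hδ
      have hcp : CompactSpace (Metric.closedBall (0:ℂ) r) :=
        isCompact_iff_compactSpace.1 (isCompact_closedBall 0 r)
      have ht := Continuous.tendstoUniformly (fun (μ : ℝ) (z : Metric.closedBall (0:ℂ) r) => F μ z)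
        (by
          have : Continuous (fun p : ℝ × Metric.closedBall (0:ℂ) r => (p.1, (p.2 : ℂ))) := by fun_prop
          exact hcont.comp this) 1
      rw [Metric.tendstoUniformly_iff] at ht
      filter_upwards [nhdsWithin_le_nhds (ht δ hδ)] with μ hμ z hz
      have := hμ ⟨z, by simpa using hz⟩
      simp only [hF] at this
      rw [dist_eq_norm, norm_sub_rev] at this
      simp only [hF]
      simp [csinc_zero] at this
      simpa using this.le)
    hb.le hε₀.le δ hδ
  obtain ⟨μ, ⟨h1, h2⟩, h3⟩ := (hI.and key).exists
  exact ⟨μ, h1, h2, h3⟩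

lemma density (b : ℝ) (hb : 0 < b) (f : ℂ → ℂ) (hf : Differentiable ℂ f)
    (hfb : ∀ ε > (0:ℝ), ∃ C : ℝ, ∀ z, ‖f z‖ ≤ C * Real.exp (b * |z.im| + ε * ‖z‖))
    (ε₀ : ℝ) (hε₀ : 0 < ε₀) (δ : ℝ) (hδ : 0 < δ) :
    ∃ G : ℂ → ℂ, Differentiable ℂ G ∧ (∃ C : ℝ, (∀ z, ‖G z‖ ≤ C * Real.exp (b * |z.im|)) ∧
      ∀ z, ‖z‖ ^ 4 * ‖G z‖ ≤ C * Real.exp (b * |z.im|)) ∧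
      ∀ z, ‖G z - f z‖ ≤ δ * Real.exp (b * |z.im| + ε₀ * ‖z‖) := by
  obtain ⟨μ, hμ0, hμ1, hμ⟩ := density_one b hb f hf hfb ε₀ hε₀ (δ / 2) (by positivity)
  have hpi := Real.pi_pos
  set s : ℝ := μ * Real.pi / b with hs
  have hs0 : 0 < s := by positivity
  set σ : ℝ := μ * b / Real.pi with hσ
  have hσ0 : 0 < σ := by positivity
  have hsσ : s * σ = μ ^ 2 := by rw [hs, hσ]; field_simp
  set κ : ℝ := (1 - μ) * b / 4 with hκ
  have hκ0 : 0 < κ := by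
    have : 0 < 1 - μ := by linarith
    positivity
  have hσpi : Real.pi * σ = μ * b := by rw [hσ]; field_simp
  obtain ⟨T, hT1, ⟨C1, hT2⟩, hT3⟩ := interp (fun z => f (s * z)) (hf.comp (by fun_prop)) (μ * Real.pi) (by positivity)
    (by nlinarith) (by
      intro ε hε
      obtain ⟨C, hC⟩ := hfb (ε / s) (by positivity)
      refine ⟨C, fun z => (hC (s * z)).trans (le_of_eq ?_)⟩
      rw [Complex.im_ofReal_mul, norm_mul, Complex.norm_real, Real.norm_of_nonneg hs0.le, abs_mul,
        abs_of_pos hs0]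
      congr 2
      have : b * s = μ * Real.pi := by rw [hs]; field_simp
      rw [← mul_assoc, this]
      field_simp) (ε₀ / 2 / σ) (by positivity)
  obtain ⟨C2, hC2⟩ := hfb (ε₀ / 2) (by positivity)
  have hC20 : 0 ≤ C2 := by
    have := hC2 0
    simp at this
    exact (norm_nonneg _).trans this
  obtain ⟨C3, hC3⟩ : ∃ C3, ∀ z, ‖f ((μ ^ 2 : ℝ) * z)‖ ≤ C3 * Real.exp (μ * b * |z.im| + ε₀ / 2 * ‖z‖) := by
    refine ⟨C2, fun z => (hC2 _).trans ?_⟩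
    rw [Complex.im_ofReal_mul, norm_mul, Complex.norm_real, Real.norm_of_nonneg (sq_nonneg μ), abs_mul,
        abs_of_nonneg (sq_nonneg μ)]
    have h1 : μ ^ 2 ≤ μ := by nlinarith
    have h2 : μ ^ 2 ≤ 1 := by nlinarith
    have h3 : b * (μ ^ 2 * |z.im|) ≤ μ * b * |z.im| := by
      have : b * (μ ^ 2 * |z.im|) ≤ b * (μ * |z.im|) := by gcongr
      linarith
    have h4 : μ ^ 2 * ‖z‖ ≤ ‖z‖ := mul_le_of_le_one_left (norm_nonneg z) h2
    gcongr
  have key := tail_unif atTop (fun N z => T N (σ * z)) (fun z => f ((μ ^ 2 : ℝ) * z)) (C1 + C3) (μ * b)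
    (ε₀ / 2) ε₀ (by linarith)
    (by
      refine Eventually.of_forall fun N z => ?_
      have h1 := hT2 N (σ * z)
      rw [Complex.im_ofReal_mul, norm_mul, Complex.norm_real, Real.norm_of_nonneg hσ0.le, abs_mul,
        abs_of_pos hσ0, ← mul_assoc, hσpi, ← mul_assoc, div_mul_cancel₀ _ hσ0.ne'] at h1
      calc _ ≤ _ := norm_sub_le _ _
        _ ≤ _ := add_le_add h1 (hC3 z)
        _ = _ := by ring)
    (by
      intro r δ hδ
      filter_upwards [hT3 (σ * r) δ hδ] with N hN z hz
      have := hN (σ * z) (by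
        rw [norm_mul, Complex.norm_real, Real.norm_of_nonneg hσ0.le]; gcongr)
      rwa [← mul_assoc, ← Complex.ofReal_mul, hsσ] at this)
    (by positivity) hε₀.le (δ / 2) (by positivity)
  obtain ⟨N, hN⟩ := key.exists
  obtain ⟨hTd, C, hC⟩ := hT1 N
  have hC0 : 0 ≤ C := by
    have := hC 0
    simp at this
    exact (norm_nonneg _).trans this
  have hTb : ∀ z, ‖T N (σ * z)‖ ≤ C * Real.exp (μ * b * |z.im|) := by
    intro z
    have := hC (σ * z)
    rwa [Complex.im_ofReal_mul, abs_mul, abs_of_pos hσ0, ← mul_assoc, hσpi] at this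
  have h4κ : ∀ z : ℂ, μ * b * |z.im| + 4 * κ * |z.im| = b * |z.im| := by
    intro z; rw [hκ]; ring
  refine ⟨fun z => T N (σ * z) * csinc (κ * z) ^ 4, ?_, ⟨C * (1 + (κ⁻¹) ^ 4), ?_, ?_⟩, ?_⟩
  · exact (hTd.comp (by fun_prop)).mul ((csinc_diff.comp (by fun_prop)).pow 4)
  · intro z
    rw [norm_mul]
    calc _ ≤ C * Real.exp (μ * b * |z.im|) * Real.exp (4 * κ * |z.im|) := by
          gcongr
          · exact hTb z
          · exact norm_csinc_real κ hκ0.le z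
      _ = C * 1 * Real.exp (b * |z.im|) := by rw [mul_assoc, ← Real.exp_add, h4κ, mul_one]
      _ ≤ _ := by
        gcongr
        have : 0 ≤ (κ⁻¹) ^ 4 := by positivity
        linarith
  · intro z
    rw [norm_mul]
    calc _ = ‖T N (σ * z)‖ * (‖z‖ ^ 4 * ‖csinc (κ * z) ^ 4‖) := by ring
      _ ≤ C * Real.exp (μ * b * |z.im|) * ((κ⁻¹) ^ 4 * Real.exp (4 * κ * |z.im|)) := by
          exact mul_le_mul (hTb z) (norm_csinc_real' κ hκ0 z) (by positivity) (by positivity)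
      _ = C * (κ⁻¹) ^ 4 * (Real.exp (μ * b * |z.im|) * Real.exp (4 * κ * |z.im|)) := by ring
      _ = C * (κ⁻¹) ^ 4 * Real.exp (b * |z.im|) := by rw [← Real.exp_add, h4κ]
      _ ≤ _ := by
        gcongr
        linarith
  · intro z
    have e : T N (σ * z) * csinc (κ * z) ^ 4 - f z =
      (T N (σ * z) - f ((μ ^ 2 : ℝ) * z)) * csinc (κ * z) ^ 4 +
      (f ((μ ^ 2 : ℝ) * z) * csinc (κ * z) ^ 4 - f z) := by ring
    rw [e]
    refine (norm_add_le _ _).trans ?_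
    have h1 := hμ z
    rw [norm_mul]
    have h2 : ‖T N (σ * z) - f ((μ ^ 2 : ℝ) * z)‖ * ‖csinc (κ * z) ^ 4‖ ≤
        δ / 2 * Real.exp (b * |z.im| + ε₀ * ‖z‖) := by
      calc _ ≤ δ / 2 * Real.exp (μ * b * |z.im| + ε₀ * ‖z‖) * Real.exp (4 * κ * |z.im|) := by
            gcongr
            · exact hN z
            · exact norm_csinc_real κ hκ0.le z
        _ = _ := by
          rw [mul_assoc, ← Real.exp_add, ← h4κ]; ring_nf
    linarith

/-- Continuous maps satisfying the basic decay estimates with constant `m`. -/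
def decayClass (b : ℝ) (m : ℕ) : Set C(ℂ, ℂ) :=
  {G | Differentiable ℂ G ∧ (∀ z, ‖G z‖ ≤ m * Real.exp (b * |z.im|)) ∧
      ∀ z, ‖z‖ ^ 4 * ‖G z‖ ≤ m * Real.exp (b * |z.im|)}

lemma countable_dense (b : ℝ) (hb : 0 < b) :
    ∃ (e : ℕ → ℂ → ℂ) (C : ℕ → ℕ), (∀ i, Differentiable ℂ (e i) ∧
      (∀ z, ‖e i z‖ ≤ C i * Real.exp (b * |z.im|)) ∧
      ∀ z, ‖z‖ ^ 4 * ‖e i z‖ ≤ C i * Real.exp (b * |z.im|)) ∧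
    ∀ f : ℂ → ℂ, Differentiable ℂ f →
    (∀ ε > (0:ℝ), ∃ C : ℝ, ∀ z, ‖f z‖ ≤ C * Real.exp (b * |z.im| + ε * ‖z‖)) →
    ∀ ε₀ > (0:ℝ), ∀ δ > (0:ℝ), ∃ i, ∀ z, ‖e i z - f z‖ ≤ δ * Real.exp (b * |z.im| + ε₀ * ‖z‖) := by
  have hne : ∀ m, Nonempty (decayClass b m) := by
    intro m
    refine ⟨⟨0, ?_, ?_, ?_⟩⟩
    · exact differentiable_const (0:ℂ)
    · intro z; simp; positivity
    · intro z; simp; positivity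
  let d : ∀ m, ℕ → decayClass b m := fun m => TopologicalSpace.denseSeq (decayClass b m)
  refine ⟨fun i => (d i.unpair.1 i.unpair.2 : C(ℂ, ℂ)), fun i => i.unpair.1, fun i => ?_, ?_⟩
  · exact (d i.unpair.1 i.unpair.2).2
  intro f hf hfb ε₀ hε₀ δ hδ
  obtain ⟨G, hGd, ⟨C, hC1, hC2⟩, hGf⟩ := density b hb f hf hfb ε₀ hε₀ (δ / 2) (by positivity)
  obtain ⟨m, hm⟩ := exists_nat_ge C
  let G' : decayClass b m := ⟨⟨G, hGd.continuous⟩, hGd, fun z => (hC1 z).trans (by gcongr),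
    fun z => (hC2 z).trans (by gcongr)⟩
  have key := tail_unif (nhds G') (fun (H : decayClass b m) z => (H : C(ℂ, ℂ)) z) G (2 * m) b 0 ε₀ hε₀
    (by
      refine Eventually.of_forall fun H z => ?_
      have h1 := H.2.2.1 z
      have h2 := G'.2.2.1 z
      calc _ ≤ _ := norm_sub_le _ _
        _ ≤ _ := add_le_add h1 h2
        _ = _ := by ring_nf)
    (by
      intro r δ hδ
      have h1 : Tendsto (fun H : decayClass b m => (H : C(ℂ, ℂ))) (nhds G') (nhds (G' : C(ℂ, ℂ))) :=
        continuous_subtype_val.tendsto G'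
      rw [ContinuousMap.tendsto_iff_forall_isCompact_tendstoUniformlyOn] at h1
      have h2 := h1 (Metric.closedBall 0 r) (isCompact_closedBall 0 r)
      rw [Metric.tendstoUniformlyOn_iff] at h2
      filter_upwards [h2 δ hδ] with H hH z hz
      have := hH z (by simpa using hz)
      rw [dist_eq_norm, norm_sub_rev] at this
      exact this.le)
    hb.le hε₀.le (δ / 2) (by positivity)
  obtain ⟨H, ⟨i, rfl⟩, hH1⟩ :=
    (TopologicalSpace.denseRange_denseSeq (decayClass b m)).inter_nhds_nonempty key
  refine ⟨Nat.pair m i, fun z => ?_⟩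
  suffices hs : ∀ p : ℕ × ℕ, p = (m, i) → ‖(d p.1 p.2 : C(ℂ, ℂ)) z - f z‖ ≤
      δ * Real.exp (b * |z.im| + ε₀ * ‖z‖) from hs _ (Nat.unpair_pair m i)
  rintro _ rfl
  have h1 := hH1 z
  have h2 := hGf z
  calc _ = ‖((d m i : C(ℂ, ℂ)) z - G z) + (G z - f z)‖ := by rw [sub_add_sub_cancel]
    _ ≤ _ := norm_add_le _ _
    _ ≤ _ := add_le_add h1 h2
    _ = _ := by ring

/-- The level of an index (2-adic valuation of the successor). -/
def lev (j : ℕ) : ℕ := padicValNat 2 (j + 1)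

/-- Positions of the building blocks. -/
def pp : ℕ → ℕ
  | 0 => 1
  | (j + 1) => pp j + (lev j + 1) + (lev (j + 1) + 1)

lemma pp_succ (j : ℕ) : pp (j + 1) = pp j + (lev j + 1) + (lev (j + 1) + 1) := rfl

lemma pp_formula (j : ℕ) : pp j + lev j + 1 = 2 * (padicValNat 2 (j + 1).factorial + (j + 1)) := by
  induction j with
  | zero => simp [pp, lev]
  | succ j ih =>
    rw [pp_succ, Nat.factorial_succ (j + 1), padicValNat.mul (by omega) (Nat.factorial_ne_zero _)]
    change _ = 2 * (lev (j + 1) + _ + _)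
    omega

lemma pp_le (j : ℕ) : pp j ≤ 4 * (j + 1) := by
  have h := pp_formula j
  have h2 := sub_one_mul_padicValNat_factorial (p := 2) (j + 1)
  omega

lemma pp_strictMono : StrictMono pp := strictMono_nat_of_lt_succ fun j => by rw [pp_succ]; omega

lemma pp_ge (j : ℕ) : lev j + 1 ≤ pp j ∧ j + 1 ≤ pp j := by
  induction j with
  | zero => simp [pp, lev]
  | succ j ih => rw [pp_succ]; omega

lemma pp_sep (i k : ℕ) : pp i + (lev i + 1) ≤ pp (i + k + 1) ∧
    pp i + (lev (i + k + 1) + 1) ≤ pp (i + k + 1) ∧ pp i + (k + 1) ≤ pp (i + k + 1) := by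
  induction k with
  | zero => rw [add_zero, pp_succ]; omega
  | succ k ih => rw [← add_assoc i k 1, pp_succ (i + k + 1)]; omega

lemma pp_four_lt (i j : ℕ) (h : i < j) :
    ((lev i : ℝ) + 1) * (lev j + 1) * ((j : ℝ) - i) ^ 2 ≤ ((pp j : ℝ) - pp i) ^ 4 := by
  obtain ⟨k, rfl⟩ : ∃ k, j = i + k + 1 := ⟨j - i - 1, by omega⟩
  obtain ⟨h1, h2, h3⟩ := pp_sep i k
  have h1' : (lev i : ℝ) + 1 ≤ (pp (i + k + 1) : ℝ) - pp i := by
    have : (pp i : ℝ) + (lev i + 1) ≤ pp (i + k + 1) := by exact_mod_cast h1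
    linarith
  have h2' : (lev (i + k + 1) : ℝ) + 1 ≤ (pp (i + k + 1) : ℝ) - pp i := by
    have : (pp i : ℝ) + (lev (i + k + 1) + 1) ≤ pp (i + k + 1) := by exact_mod_cast h2
    linarith
  have h3' : ((i + k + 1 : ℕ) : ℝ) - i ≤ (pp (i + k + 1) : ℝ) - pp i := by
    have : (pp i : ℝ) + (k + 1) ≤ pp (i + k + 1) := by exact_mod_cast h3
    push_cast
    linarith
  have h4 : 0 ≤ ((i + k + 1 : ℕ) : ℝ) - i := by push_cast; linarith [(Nat.cast_nonneg k : (0:ℝ) ≤ k)]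
  have h5 : 0 ≤ (pp (i + k + 1) : ℝ) - pp i := h4.trans h3'
  have h6 := mul_nonneg h5 h5
  calc _ ≤ ((pp (i + k + 1) : ℝ) - pp i) * ((pp (i + k + 1) : ℝ) - pp i) *
        ((pp (i + k + 1) : ℝ) - pp i) ^ 2 := by gcongr
    _ = _ := by ring

lemma pp_four (i j : ℕ) (h : i ≠ j) :
    ((lev i : ℝ) + 1) * (lev j + 1) * ((j : ℝ) - i) ^ 2 ≤ ((pp j : ℝ) - pp i) ^ 4 := by
  rcases lt_or_gt_of_ne h with h | h
  · exact pp_four_lt i j h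
  · have := pp_four_lt j i h
    calc _ = ((lev j : ℝ) + 1) * (lev i + 1) * ((i : ℝ) - j) ^ 2 := by ring
      _ ≤ _ := this
      _ = _ := by ring

lemma pp_four_zero (j : ℕ) :
    ((lev j : ℝ) + 1) * ((j : ℝ) + 1) ^ 2 ≤ (pp j : ℝ) ^ 4 := by
  have h1 : (lev j : ℝ) + 1 ≤ pp j := by exact_mod_cast (pp_ge j).1
  have h2 : (j : ℝ) + 1 ≤ pp j := by exact_mod_cast (pp_ge j).2
  have h3 : (1:ℝ) ≤ pp j := by
    have : (0:ℝ) ≤ j := by positivity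
    linarith
  calc _ ≤ (pp j : ℝ) * (pp j) ^ 2 := by gcongr
    _ = (pp j : ℝ) ^ 3 := by ring
    _ ≤ _ := pow_le_pow_right₀ h3 (by norm_num)

lemma dens_lev (l : ℕ) (A : Set ℕ) (hA : ∀ j, lev j = l → pp j ∈ A) : 0 < lowerDensity A := by
  classical
  have hlev : ∀ m, lev (2 ^ l * (2 * m + 1) - 1) = l := by
    intro m
    unfold lev
    have h0 : 0 < 2 ^ l * (2 * m + 1) := by positivity
    rw [Nat.sub_add_cancel h0, padicValNat.mul (by positivity) (by omega), padicValNat.prime_pow,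
      padicValNat.eq_zero_of_not_dvd (by omega), add_zero]
  refine dens_pos (1 / 2 ^ (l + 4)) (by positivity) (2 ^ (l + 4)) fun N hN => ?_
  set M := N / 2 ^ (l + 3) with hM
  have hcard : M ≤ ((Finset.range (N + 1)).filter (fun n => n ∈ A)).card := by
    have hinj : Set.InjOn (fun m => pp (2 ^ l * (2 * m + 1) - 1)) (Finset.range M) := by
      intro a _ b _ hab
      have h := pp_strictMono.injective hab
      have ha0 : 0 < 2 ^ l * (2 * a + 1) := by positivity
      have hb0 : 0 < 2 ^ l * (2 * b + 1) := by positivity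
      have h2 : 2 ^ l * (2 * a + 1) = 2 ^ l * (2 * b + 1) := by omega
      have := Nat.eq_of_mul_eq_mul_left (by positivity) h2
      omega
    rw [← Finset.card_range M, ← Finset.card_image_of_injOn hinj]
    apply Finset.card_le_card
    intro x hx
    rw [Finset.mem_image] at hx
    obtain ⟨m, hm, rfl⟩ := hx
    rw [Finset.mem_range] at hm
    rw [Finset.mem_filter, Finset.mem_range]
    refine ⟨?_, hA _ (hlev m)⟩
    have h1 := pp_le (2 ^ l * (2 * m + 1) - 1)
    have h0 : 0 < 2 ^ l * (2 * m + 1) := by positivity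
    rw [Nat.sub_add_cancel h0] at h1
    have h2 : 2 ^ (l + 3) * M ≤ N := Nat.mul_div_le _ _
    have h3 : 2 ^ l * (2 * m + 1) ≤ 2 ^ l * (2 * M) := Nat.mul_le_mul_left _ (by omega)
    have h4 : 2 ^ (l + 3) * M = 4 * (2 ^ l * (2 * M)) := by ring
    omega
  have h1 : (N:ℝ) / 2 ^ (l + 3) - 1 ≤ M := by
    have := Nat.lt_div_mul_add (a := N) (b := 2 ^ (l + 3)) (by positivity)
    rw [← hM] at this
    have h2 : (N:ℝ) < M * 2 ^ (l + 3) + 2 ^ (l + 3) := by exact_mod_cast this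
    rw [sub_le_iff_le_add, div_le_iff₀ (by positivity)]
    linarith
  have h2 : (1:ℝ) ≤ N / 2 ^ (l + 4) := by
    rw [le_div_iff₀ (by positivity), one_mul]
    exact_mod_cast hN
  have h3 : (N:ℝ) / 2 ^ (l + 3) = 2 * (N / 2 ^ (l + 4)) := by
    rw [pow_succ 2 (l + 3)]; field_simp
  calc (1:ℝ) / 2 ^ (l + 4) * N = N / 2 ^ (l + 4) := by ring
    _ ≤ M := by linarith
    _ ≤ _ := by exact_mod_cast hcard

lemma shift_bound (h : ℝ → ℝ) (G : ℂ → ℂ) (C : ℝ) (h1 : ∀ z, ‖G z‖ ≤ C * Real.exp (h z.im))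
    (h2 : ∀ z, ‖z‖ ^ 4 * ‖G z‖ ≤ C * Real.exp (h z.im)) (n : ℕ) (hn : 0 < n) (d : ℝ) (hd : d ≠ 0)
    (z : ℂ) : ‖G (z + d)‖ ≤ 384 * n ^ 4 * (C / d ^ 4) * Real.exp (h z.im + ‖z‖ / n) := by
  have hn1 : (1:ℝ) ≤ n := by exact_mod_cast hn
  have e1 := h1 (z + d)
  have e2 := h2 (z + d)
  have him : (z + d).im = z.im := by simp
  rw [him] at e1 e2
  have hC : 0 ≤ C := nonneg_of_mul_nonneg_left ((norm_nonneg _).trans e1) (Real.exp_pos _)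
  have hd4 : 0 < d ^ 4 := by positivity
  have hn4 : (1:ℝ) ≤ n ^ 4 := one_le_pow₀ hn1
  rw [Real.exp_add]
  have hE : 1 ≤ Real.exp (‖z‖ / n) := Real.one_le_exp (by positivity)
  by_cases hz : |d| / 2 ≤ ‖z + d‖
  · have e3 : d ^ 4 / 16 * ‖G (z + d)‖ ≤ C * Real.exp (h z.im) := by
      refine le_trans ?_ e2
      gcongr
      calc d ^ 4 / 16 = (|d| / 2) ^ 4 := by
            rw [div_pow, ← abs_pow, abs_of_pos hd4]; norm_num
        _ ≤ _ := by gcongr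
    calc ‖G (z + d)‖ = 16 * (d ^ 4 / 16 * ‖G (z + d)‖) / d ^ 4 := by field_simp
      _ ≤ 16 * (C * Real.exp (h z.im)) / d ^ 4 := by gcongr
      _ = 16 * 1 * (C / d ^ 4) * (Real.exp (h z.im) * 1) := by ring
      _ ≤ 384 * n ^ 4 * (C / d ^ 4) * (Real.exp (h z.im) * Real.exp (‖z‖ / n)) := by
        gcongr
        norm_num
  · push Not at hz
    have hz2 : |d| / 2 ≤ ‖z‖ := by
      have := norm_sub_le (z + d) z
      rw [add_sub_cancel_left, Complex.norm_real, Real.norm_eq_abs] at this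
      linarith
    have e3 : (‖z‖ / n) ^ 4 / (Nat.factorial 4 : ℝ) ≤ Real.exp (‖z‖ / n) :=
      Real.pow_div_factorial_le_exp _ (by positivity) 4
    have e4 : d ^ 4 ≤ 384 * n ^ 4 * Real.exp (‖z‖ / n) := by
      have h5 : d ^ 4 / 16 ≤ ‖z‖ ^ 4 := by
        calc d ^ 4 / 16 = (|d| / 2) ^ 4 := by
              rw [div_pow, ← abs_pow, abs_of_pos hd4]; norm_num
          _ ≤ _ := by gcongr
      have h6 : ‖z‖ ^ 4 = 24 * n ^ 4 * ((‖z‖ / n) ^ 4 / (Nat.factorial 4 : ℝ)) := by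
        have : (Nat.factorial 4 : ℝ) = 24 := by norm_num [Nat.factorial]
        rw [this]; field_simp
      have h7 : ‖z‖ ^ 4 ≤ 24 * n ^ 4 * Real.exp (‖z‖ / n) := by rw [h6]; gcongr
      linarith
    calc _ ≤ _ := e1
      _ = (C / d ^ 4) * Real.exp (h z.im) * d ^ 4 := by field_simp
      _ ≤ (C / d ^ 4) * Real.exp (h z.im) * (384 * n ^ 4 * Real.exp (‖z‖ / n)) := by gcongr
      _ = _ := by ring

lemma construct (h : ℝ → ℝ) (hc : Continuous h) (G : ℕ → ℂ → ℂ) (hGd : ∀ l, Differentiable ℂ (G l))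
    (h1 : ∀ l z, ‖G l z‖ ≤ ((l : ℝ) + 1) * Real.exp (h z.im))
    (h2 : ∀ l z, ‖z‖ ^ 4 * ‖G l z‖ ≤ ((l : ℝ) + 1) * Real.exp (h z.im)) :
    ∃ f : ℂ → ℂ, Differentiable ℂ f ∧
      (∀ n : ℕ, 0 < n → ∃ C : ℝ, ∀ z, ‖f z‖ ≤ C * Real.exp (h z.im + ‖z‖ / n)) ∧
      ∀ n : ℕ, 0 < n → ∃ S : ℝ, ∀ j z,
        ‖f (z + pp j) - G (lev j) z‖ ≤ S / ((lev j : ℝ) + 1) * Real.exp (h z.im + ‖z‖ / n) := by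
  set u : ℕ → ℂ → ℂ := fun j z => G (lev j) (z - pp j) with hu
  have hsum1 : Summable (fun j : ℕ => 1 / ((j:ℝ) + 1) ^ 2) := by
    have := (summable_nat_add_iff 1).2 (Real.summable_one_div_nat_pow.2 (by norm_num : 1 < 2))
    simpa using this
  have hb : ∀ n : ℕ, 0 < n → ∀ j z, ‖u j z‖ ≤
      1 / ((j:ℝ) + 1) ^ 2 * (384 * n ^ 4 * Real.exp (h z.im + ‖z‖ / n)) := by
    intro n hn j z
    have hpos : (0:ℝ) < pp j := by
      have := (pp_ge j).2
      exact_mod_cast (by omega : 0 < pp j)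
    have e := shift_bound h (G (lev j)) _ (h1 _) (h2 _) n hn (-(pp j : ℝ)) (by linarith) z
    have e2 : u j z = G (lev j) (z + ((-(pp j : ℝ) : ℝ) : ℂ)) := by
      simp only [hu]; congr 1; push_cast; ring
    rw [e2]
    refine e.trans ?_
    have e3 : ((lev j : ℝ) + 1) / (-(pp j : ℝ)) ^ 4 ≤ 1 / ((j:ℝ) + 1) ^ 2 := by
      rw [show (-(pp j : ℝ)) ^ 4 = (pp j : ℝ) ^ 4 by ring]
      rw [div_le_div_iff₀ (by positivity) (by positivity), one_mul]
      exact pp_four_zero j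
    calc _ ≤ 384 * n ^ 4 * (1 / ((j:ℝ) + 1) ^ 2) * Real.exp (h z.im + ‖z‖ / n) := by gcongr
      _ = _ := by ring
  have hus : ∀ z, Summable (fun j => ‖u j z‖) := fun z =>
    Summable.of_nonneg_of_le (fun _ => norm_nonneg _) (fun j => hb 1 one_pos j z) (hsum1.mul_right _)
  refine ⟨fun z => ∑' j, u j z, ?_, ?_, ?_⟩
  · intro z₀
    obtain ⟨M, hM⟩ := (isCompact_Icc (a := -(‖z₀‖ + 1)) (b := ‖z₀‖ + 1)).bddAbove_image hc.continuousOn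
    have hd : DifferentiableOn ℂ (fun z => ∑' j, u j z) (Metric.ball 0 (‖z₀‖ + 1)) := by
      refine differentiableOn_tsum_of_summable_norm
        (hsum1.mul_right (384 * ((1:ℕ):ℝ) ^ 4 * Real.exp (M + (‖z₀‖ + 1) / ((1:ℕ):ℝ)))) ?_
        Metric.isOpen_ball ?_
      · intro j
        exact ((hGd _).comp (by fun_prop)).differentiableOn
      · intro j z hz
        rw [mem_ball_zero_iff] at hz
        refine (hb 1 one_pos j z).trans ?_
        have : h z.im ≤ M := hM ⟨z.im, abs_le.1 ((Complex.abs_im_le_norm z).trans hz.le), rfl⟩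
        gcongr
    exact hd.differentiableAt (Metric.isOpen_ball.mem_nhds (by simp))
  · intro n hn
    refine ⟨(∑' j : ℕ, 1 / ((j:ℝ) + 1) ^ 2) * (384 * n ^ 4), fun z => ?_⟩
    refine (norm_tsum_le_tsum_norm (hus z)).trans ?_
    rw [mul_assoc, ← tsum_mul_right]
    exact (hus z).tsum_le_tsum (fun j => hb n hn j z) (hsum1.mul_right _)
  · intro n hn
    have hsZ : Summable (fun m : ℤ => 1 / (m:ℝ) ^ 2) :=
      Real.summable_one_div_int_pow.2 (by norm_num)
    refine ⟨384 * n ^ 4 * ∑' m : ℤ, 1 / (m:ℝ) ^ 2, fun j₀ z => ?_⟩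
    have hinj : Function.Injective (fun j : ℕ => (j:ℤ) - j₀) := by
      intro a b hab
      simp only at hab
      omega
    have hsJ := hsZ.comp_injective hinj
    have hle := tsum_comp_le_tsum_of_inj hsZ (fun m => by positivity) hinj
    set E : ℝ := 384 * n ^ 4 / ((lev j₀ : ℝ) + 1) * Real.exp (h z.im + ‖z‖ / n) with hE
    have hE0 : 0 ≤ E := by positivity
    have hS : Summable (fun j => u j (z + pp j₀)) := (hus _).of_norm
    have hj0 : u j₀ (z + pp j₀) = G (lev j₀) z := by simp [hu]
    have hsplit := hS.tsum_eq_add_tsum_ite j₀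
    rw [hj0] at hsplit
    simp only
    rw [hsplit, add_sub_cancel_left]
    have hterm : ∀ j, ‖if j = j₀ then 0 else u j (z + pp j₀)‖ ≤
        ((fun m : ℤ => 1 / (m:ℝ) ^ 2) ∘ (fun j : ℕ => (j:ℤ) - j₀)) j * E := by
      intro j
      split_ifs with hj
      · rw [norm_zero]
        simp only [Function.comp]
        positivity
      · have hd : (pp j₀ : ℝ) - pp j ≠ 0 := by
          rw [sub_ne_zero]
          intro e
          exact hj (pp_strictMono.injective (by exact_mod_cast e.symm))
        have e := shift_bound h (G (lev j)) _ (h1 _) (h2 _) n hn ((pp j₀ : ℝ) - pp j) hd z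
        have e2 : u j (z + pp j₀) = G (lev j) (z + (((pp j₀ : ℝ) - pp j : ℝ) : ℂ)) := by
          simp only [hu]; congr 1; push_cast; ring
        rw [e2]
        refine e.trans ?_
        have hjj : (0:ℝ) < ((j:ℝ) - j₀) ^ 2 := by
          have : (j:ℝ) - j₀ ≠ 0 := by
            rw [sub_ne_zero]; exact_mod_cast hj
          positivity
        have e3 : ((lev j : ℝ) + 1) / ((pp j₀ : ℝ) - pp j) ^ 4 ≤
            1 / (((lev j₀ : ℝ) + 1) * ((j:ℝ) - j₀) ^ 2) := by
          rw [div_le_div_iff₀ (by positivity) (by positivity), one_mul]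
          have := pp_four j j₀ hj
          calc _ = ((lev j : ℝ) + 1) * (lev j₀ + 1) * ((j₀ : ℝ) - j) ^ 2 := by ring
            _ ≤ _ := this
        calc _ ≤ 384 * n ^ 4 * (1 / (((lev j₀ : ℝ) + 1) * ((j:ℝ) - j₀) ^ 2)) *
              Real.exp (h z.im + ‖z‖ / n) := by gcongr
          _ = 1 / ((j:ℝ) - j₀) ^ 2 * E := by
            rw [hE]; field_simp
          _ = _ := by simp [Function.comp]
    have hs2 : Summable (fun j => ‖if j = j₀ then 0 else u j (z + pp j₀)‖) :=
      Summable.of_nonneg_of_le (fun _ => norm_nonneg _) hterm (hsJ.mul_right E)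
    calc _ ≤ _ := norm_tsum_le_tsum_norm hs2
      _ ≤ _ := hs2.tsum_le_tsum hterm (hsJ.mul_right E)
      _ = _ := tsum_mul_right
      _ ≤ (∑' m : ℤ, 1 / (m:ℝ) ^ 2) * E := by gcongr
      _ = _ := by rw [hE]; ring

lemma reverse_dir (v w : ℂ) (hvw : v ≠ w) (hv : v.re = 0) (hw : w.re = 0) :
    ∃ f : ℂ → ℂ, FHCExp (segment ℝ v w) f := by
  set c : ℝ := (v.im + w.im) / 2 with hc
  set b : ℝ := |v.im - w.im| / 2 with hbdef
  have hb : 0 < b := by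
    have : v.im - w.im ≠ 0 := by
      rw [sub_ne_zero]
      intro e
      exact hvw (Complex.ext (hv.trans hw.symm) e)
    positivity
  set h : ℝ → ℝ := fun y => -c * y + b * |y| with hh
  have hsupp : ∀ z : ℂ, suppFn (segment ℝ v w) z = h z.im := by
    intro z
    rw [suppFn_segment, Complex.mul_re, Complex.mul_re, hv, hw, max_def']
    simp only [hh, hc, hbdef]
    rw [div_mul_eq_mul_div, ← abs_mul]
    split_ifs with hle
    · rw [abs_of_nonpos (by linarith)]; ring
    · rw [abs_of_nonneg (by linarith)]; ring
  have hφ : ∀ s : ℝ, ∀ z : ℂ, ‖Complex.exp ((s * I : ℂ) * z)‖ = Real.exp (-s * z.im) := by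
    intro s z
    rw [Complex.norm_exp]
    congr 1
    simp [Complex.mul_re]
  have hφd : ∀ s : ℝ, Differentiable ℂ (fun z : ℂ => Complex.exp ((s * I : ℂ) * z)) := by
    intro s; fun_prop
  obtain ⟨e, C, he, hdense⟩ := countable_dense b hb
  set G : ℕ → ℂ → ℂ := fun l z => if C l.unpair.1 ≤ l then
    Complex.exp ((c * I : ℂ) * z) * e l.unpair.1 z else 0 with hG
  have hexp : ∀ z : ℂ, Real.exp (h z.im) = Real.exp (-c * z.im) * Real.exp (b * |z.im|) := by
    intro z; rw [← Real.exp_add]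
  obtain ⟨f, hfd, hf1, hf2⟩ := construct h (by simp only [hh]; fun_prop) G
    (by
      intro l
      by_cases hl : C l.unpair.1 ≤ l
      · simp only [hG, if_pos hl]
        exact (hφd c).mul (he _).1
      · simp only [hG, if_neg hl]
        exact differentiable_const _)
    (by
      intro l z
      by_cases hl : C l.unpair.1 ≤ l
      · simp only [hG, if_pos hl]
        have hl' : (C l.unpair.1 : ℝ) ≤ l + 1 := by exact_mod_cast hl.trans (Nat.le_succ l)
        rw [norm_mul, hφ, hexp]
        calc _ ≤ Real.exp (-c * z.im) * (C l.unpair.1 * Real.exp (b * |z.im|)) := by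
              gcongr; exact (he _).2.1 z
          _ ≤ Real.exp (-c * z.im) * (((l:ℝ) + 1) * Real.exp (b * |z.im|)) := by gcongr
          _ = _ := by ring
      · simp only [hG, if_neg hl]
        rw [norm_zero]; positivity)
    (by
      intro l z
      by_cases hl : C l.unpair.1 ≤ l
      · simp only [hG, if_pos hl]
        have hl' : (C l.unpair.1 : ℝ) ≤ l + 1 := by exact_mod_cast hl.trans (Nat.le_succ l)
        rw [norm_mul, hφ, hexp]
        calc _ = Real.exp (-c * z.im) * (‖z‖ ^ 4 * ‖e l.unpair.1 z‖) := by ring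
          _ ≤ Real.exp (-c * z.im) * (C l.unpair.1 * Real.exp (b * |z.im|)) := by
              refine mul_le_mul_of_nonneg_left ?_ (Real.exp_pos _).le
              exact (he _).2.2 z
          _ ≤ Real.exp (-c * z.im) * (((l:ℝ) + 1) * Real.exp (b * |z.im|)) := by gcongr
          _ = _ := by ring
      · simp only [hG, if_neg hl]
        rw [norm_zero, mul_zero]; positivity)
  refine ⟨f, memExp_of_bound hfd (fun n hn => ?_), fun g hg n hn ε hε => ?_⟩
  · simp only [hsupp]; exact hf1 n hn
  have hn0 : (0:ℝ) < n := by exact_mod_cast hn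
  obtain ⟨i, hi⟩ := hdense (fun z => Complex.exp (((-c : ℝ) * I : ℂ) * z) * g z) ((hφd (-c)).mul hg.1)
    (by
      intro δ hδ
      obtain ⟨m, hm⟩ := exists_nat_gt (1 / δ)
      have hm0 : 0 < (m:ℝ) := lt_trans (by positivity) hm
      obtain ⟨D, hD0, hD⟩ := hg.bound m (by exact_mod_cast hm0)
      refine ⟨D, fun z => ?_⟩
      rw [norm_mul, hφ]
      have h3 := hD z
      rw [hsupp] at h3
      have h4 : ‖z‖ / m ≤ δ * ‖z‖ := by
        rw [div_eq_inv_mul]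
        gcongr
        rw [inv_le_comm₀ hm0 hδ, ← one_div]; exact hm.le
      calc _ ≤ Real.exp (-(-c) * z.im) * (D * Real.exp (h z.im + ‖z‖ / m)) := by gcongr
        _ = D * Real.exp (b * |z.im| + ‖z‖ / m) := by
          rw [mul_left_comm, ← Real.exp_add]; simp only [hh]; ring_nf
        _ ≤ _ := by gcongr)
    (1 / n) (by positivity) (ε / 4) (by positivity)
  obtain ⟨S, hS⟩ := hf2 n hn
  obtain ⟨m, hm⟩ := exists_nat_ge (max (C i : ℝ) (|S| / (ε / 4)))
  set l := Nat.pair i m with hl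
  have hml : m ≤ l := Nat.right_le_pair i m
  have hml' : (m:ℝ) ≤ l := by exact_mod_cast hml
  have hun : l.unpair.1 = i := by rw [hl, Nat.unpair_pair]
  have hCl : C l.unpair.1 ≤ l := by
    rw [hun]
    have : (C i : ℝ) ≤ m := (le_max_left _ _).trans hm
    exact le_trans (by exact_mod_cast this) hml
  have hSl : S / ((l:ℝ) + 1) ≤ ε / 4 := by
    have : |S| / (ε / 4) ≤ m := (le_max_right _ _).trans hm
    rw [div_le_iff₀ (by positivity)] at this ⊢
    have h5 := le_abs_self S
    nlinarith
  refine dens_lev l _ fun j hj => ?_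
  refine lt_of_le_of_lt (expNorm_le (C := ε / 2) fun z => ?_) (by linarith)
  rw [hsupp]
  have e1 := hS j z
  rw [hj] at e1
  have e2 : ‖G l z - g z‖ ≤ ε / 4 * Real.exp (h z.im + ‖z‖ / n) := by
    have h6 := hi z
    simp only [hG, if_pos hCl]
    rw [hun]
    have e3 : Complex.exp ((c * I : ℂ) * z) * e i z - g z = Complex.exp ((c * I : ℂ) * z) *
        (e i z - Complex.exp (((-c : ℝ) * I : ℂ) * z) * g z) := by
      rw [mul_sub, ← mul_assoc, ← Complex.exp_add]
      have : (c * I : ℂ) * z + ((-c : ℝ) * I : ℂ) * z = 0 := by push_cast; ring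
      rw [this, Complex.exp_zero, one_mul]
    rw [e3, norm_mul, hφ]
    calc _ ≤ Real.exp (-c * z.im) * (ε / 4 * Real.exp (b * |z.im| + 1 / n * ‖z‖)) := by gcongr
      _ = _ := by
        rw [mul_left_comm, ← Real.exp_add]; simp only [hh]; ring_nf
  calc _ = ‖(f (z + pp j) - G l z) + (G l z - g z)‖ := by rw [sub_add_sub_cancel]
    _ ≤ _ := norm_add_le _ _
    _ ≤ S / ((l:ℝ) + 1) * Real.exp (h z.im + ‖z‖ / n) + ε / 4 * Real.exp (h z.im + ‖z‖ / n) :=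
      add_le_add e1 e2
    _ ≤ ε / 4 * Real.exp (h z.im + ‖z‖ / n) + ε / 4 * Real.exp (h z.im + ‖z‖ / n) := by gcongr
    _ = _ := by ring

/-- **Theorem 1.** For `K = [v,w]`, `FHC(T₁, Exp(K)) ≠ ∅` iff `K` is a non-degenerate
closed line segment of the imaginary axis. -/
theorem stmt0 (v w : ℂ) :
    (∃ f : ℂ → ℂ, FHCExp (segment ℝ v w) f) ↔ (v ≠ w ∧ v.re = 0 ∧ w.re = 0) :=
  ⟨forward_dir v w, fun h => reverse_dir v w h.1 h.2.1 h.2.2⟩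
end

section
/- Let q : [0,∞) → [1,∞) be a function with q(r) → ∞ as r → ∞, and let K ⊆ ℂ be a compact convex set containing two distinct purely imaginary points. Then there exists a function f ∈ Exp(K) that is hypercyclic for T₁ on Exp(K) and satisfies sup_{x∈ℝ} |f(x)|/q(|x|) < ∞, i.e., |f(x)| = O(q(|x|)) on the real axis. -/
open Filter Complex

abbrev LInf : Type := lp (fun _ : ℂ => ℂ) ⊤

noncomputable def evL (z : ℂ) : LInf →L[ℂ] ℂ :=
  LinearMap.mkContinuous
    { toFun := fun F => F z
      map_add' := fun _ _ => rfl
      map_smul' := fun _ _ => rfl } 1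
    (fun F => by
      rw [one_mul]
      exact lp.norm_apply_le_norm ENNReal.top_ne_zero F z)

lemma evL_apply (z : ℂ) (F : LInf) : evL z F = F z := rfl

open Classical in
noncomputable def toL (φ : ℂ → ℂ) : LInf :=
  if h : Memℓp (E := fun _ : ℂ => ℂ) φ ⊤ then ⟨φ, h⟩ else 0

lemma toL_apply {φ : ℂ → ℂ} {M : ℝ} (h : ∀ z, ‖φ z‖ ≤ M) (z : ℂ) : toL φ z = φ z := by
  have h' : Memℓp (E := fun _ : ℂ => ℂ) φ ⊤ :=
    memℓp_infty ⟨M, by rintro _ ⟨z, rfl⟩; exact h z⟩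
  unfold toL
  rw [dif_pos h']

lemma second_order {φ : ℂ → ℂ} {c : ℂ} {r M : ℝ} (hr : 0 < r)
    (hd : DifferentiableOn ℂ φ (Metric.ball c r)) (hM : ∀ s ∈ Metric.ball c r, ‖φ s‖ ≤ M)
    {s : ℂ} (hs : s ∈ Metric.ball c r) :
    ‖φ s - φ c - (s - c) * deriv φ c‖ ≤ ((2 * ((2 * M + 1) / r) + 1) / r) * ‖s - c‖ ^ 2 ∧
      ‖deriv φ c‖ ≤ (2 * M + 1) / r := by
  have hc : c ∈ Metric.ball c r := Metric.mem_ball_self hr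
  have key : ∀ (ψ : ℂ → ℂ) (B : ℝ), DifferentiableOn ℂ ψ (Metric.ball c r) →
      (∀ s ∈ Metric.ball c r, ‖ψ s‖ ≤ B) → ∀ s ∈ Metric.ball c r,
      ‖dslope ψ c s‖ ≤ (2 * B + 1) / r := by
    intro ψ B h1 h2 s hs
    refine Complex.norm_dslope_le_div_of_mapsTo_ball h1 ?_ hs
    intro t ht
    rw [mem_closedBall_iff_norm]
    have := norm_sub_le (ψ t) (ψ c)
    have := h2 t ht
    have := h2 c hc
    linarith
  have h1 := key φ M hd hM
  have hd1 : DifferentiableOn ℂ (dslope φ c) (Metric.ball c r) :=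
    (Complex.differentiableOn_dslope (Metric.isOpen_ball.mem_nhds hc)).2 hd
  have h2 := key _ _ hd1 h1 s hs
  constructor
  · have e1 := sub_smul_dslope φ c s
    have e2 := sub_smul_dslope (dslope φ c) c s
    rw [dslope_same φ c] at e2
    simp only [smul_eq_mul] at e1 e2
    have : φ s - φ c - (s - c) * deriv φ c = (s - c) ^ 2 * dslope (dslope φ c) c s := by
      rw [← e1]
      linear_combination -(s - c) * e2
    rw [this, norm_mul, norm_pow, mul_comm]
    gcongr
  · have := h1 c hc
    rwa [dslope_same] at this

lemma diffOn_LInf {U : Set ℂ} (hU : IsOpen U) {F : ℂ → LInf} {M : ℝ}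
    (hd : ∀ z, DifferentiableOn ℂ (fun s => F s z) U) (hM : ∀ s ∈ U, ‖F s‖ ≤ M) :
    DifferentiableOn ℂ F U := by
  intro c hc
  obtain ⟨r, hr, hball⟩ := Metric.isOpen_iff.1 hU c hc
  have hM' : ∀ z, ∀ s ∈ Metric.ball c r, ‖F s z‖ ≤ M := fun z s hs =>
    (lp.norm_apply_le_norm ENNReal.top_ne_zero (F s) z).trans (hM s (hball hs))
  have key := fun z s (hs : s ∈ Metric.ball c r) =>
    second_order hr ((hd z).mono hball) (hM' z) hs
  have hD : ∀ z, toL (fun z => deriv (fun s => F s z) c) z = deriv (fun s => F s z) c :=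
    toL_apply (fun z => (key z c (Metric.mem_ball_self hr)).2)
  have hM0 : 0 ≤ M := (norm_nonneg _).trans (hM c hc)
  have : HasDerivAt F (toL (fun z => deriv (fun s => F s z) c)) c := by
    rw [hasDerivAt_iff_isLittleO]
    have hO : (fun s => F s - F c - (s - c) • toL (fun z => deriv (fun s => F s z) c))
        =O[nhds c] fun s => (s - c) ^ 2 := by
      refine Asymptotics.IsBigO.of_bound ((2 * ((2 * M + 1) / r) + 1) / r) ?_
      filter_upwards [Metric.ball_mem_nhds c hr] with s hs
      rw [norm_pow]
      refine lp.norm_le_of_forall_le (by positivity) (fun z => ?_)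
      have := (key z s hs).1
      simp only [lp.coeFn_sub, lp.coeFn_smul, Pi.sub_apply, Pi.smul_apply, hD, smul_eq_mul]
      exact this
    refine hO.trans_isLittleO ?_
    have h2 : (fun s : ℂ => (s - c) ^ 2) = fun s => (s - c) * (s - c) := by
      ext s; ring
    rw [h2]
    have h3 : (fun s : ℂ => s - c) =o[nhds c] fun _ => (1 : ℂ) := by
      rw [Asymptotics.isLittleO_one_iff]
      have : Tendsto (fun s : ℂ => s - c) (nhds c) (nhds (c - c)) :=
        (continuous_id.sub continuous_const).tendsto c
      simpa using this
    simpa using h3.mul_isBigO (Asymptotics.isBigO_refl (fun s : ℂ => s - c) (nhds c))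
  exact this.differentiableAt.differentiableWithinAt

lemma clm_iteratedDeriv {E G : Type*} [NormedAddCommGroup E] [NormedSpace ℂ E] [CompleteSpace E]
    [NormedAddCommGroup G] [NormedSpace ℂ G]
    (L : E →L[ℂ] G) {F : ℂ → E} {x : ℂ} (hF : AnalyticAt ℂ F x) (m : ℕ) :
    iteratedDeriv m (fun s => L (F s)) x = L (iteratedDeriv m F x) := by
  rw [iteratedDeriv_eq_iteratedFDeriv, iteratedDeriv_eq_iteratedFDeriv]
  have := L.iteratedFDeriv_comp_left (i := m) (n := m) (hF.contDiffAt) le_rfl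
  rw [show (fun s => L (F s)) = L ∘ F from rfl, this]
  rfl

lemma mem_of_freq {V : Submodule ℂ LInf} (hV : IsClosed (V : Set LInf)) {F : ℂ → LInf} {U : Set ℂ}
  (hU : IsPreconnected U) (hF : AnalyticOnNhd ℂ F U) {c : ℂ} (hc : c ∈ U)
    (h : ∃ᶠ s in nhdsWithin c {c}ᶜ, F s ∈ V) : ∀ s ∈ U, F s ∈ V := by
  have hA : AnalyticOnNhd ℂ (fun s => V.mkQL (F s)) U :=
    fun s hs => (V.mkQL.analyticAt _).comp (hF s hs)
  intro s hs
  have := hA.eqOn_zero_of_preconnected_of_frequently_eq_zero hU hc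
    (h.mono fun t ht => by simpa using ht) hs
  simpa using this

lemma mem_of_iter {V : Submodule ℂ LInf} (hV : IsClosed (V : Set LInf)) {F : ℂ → LInf} {U : Set ℂ}
  (hU : IsPreconnected U) (hF : AnalyticOnNhd ℂ F U) {c : ℂ} (hc : c ∈ U)
    (h : ∀ m, iteratedDeriv m F c ∈ V) : ∀ s ∈ U, F s ∈ V := by
  have hA : AnalyticOnNhd ℂ (fun s => V.mkQL (F s)) U :=
    fun s hs => (V.mkQL.analyticAt _).comp (hF s hs)
  have htop : analyticOrderAt (fun s => V.mkQL (F s)) c = ⊤ := by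
    rw [ENat.eq_top_iff_forall_ge]
    intro m
    rw [natCast_le_analyticOrderAt_iff_iteratedDeriv_eq_zero (hA c hc)]
    intro i _
    rw [clm_iteratedDeriv _ (hF c hc)]
    simpa using h i
  rw [analyticOrderAt_eq_top] at htop
  intro s hs
  have := hA.eqOn_zero_of_preconnected_of_eventuallyEq_zero hU hc htop hs
  simpa using this

lemma iter_mem {V : Submodule ℂ LInf} (hV : IsClosed (V : Set LInf)) {F : ℂ → LInf} {U : Set ℂ}
  (hF : AnalyticOnNhd ℂ F U) {c : ℂ} (hc : c ∈ U)
    (hUo : IsOpen U) (h : ∀ s ∈ U, F s ∈ V) (m : ℕ) : iteratedDeriv m F c ∈ V := by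
  have h0 : (fun s => V.mkQL (F s)) =ᶠ[nhds c] fun _ => 0 := by
    filter_upwards [hUo.mem_nhds hc] with s hs
    simpa using h s hs
  have h1 := h0.iteratedDeriv_eq m
  rw [clm_iteratedDeriv _ (hF c hc)] at h1
  have : V.mkQL (iteratedDeriv m F c) = 0 := by
    rw [h1]; simp
  simpa using this

lemma re_le_supp {K : Set ℂ} (hK : IsCompact K) {p : ℂ} (hp : p ∈ K) (z : ℂ) :
    (z * p).re ≤ suppFn K z := by
  refine le_csSup ?_ ⟨p, hp, rfl⟩
  exact (hK.image (by fun_prop)).bddAbove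

lemma supp_le {K : Set ℂ} {p : ℂ} (hp : p ∈ K) {z : ℂ} {B : ℝ}
    (h : ∀ x ∈ K, (z * x).re ≤ B) : suppFn K z ≤ B := by
  refine csSup_le ⟨_, p, hp, rfl⟩ ?_
  rintro _ ⟨x, hx, rfl⟩
  exact h x hx

lemma re_mul_le (a b : ℂ) : (a * b).re ≤ ‖a‖ * ‖b‖ := by
  rw [← norm_mul]; exact Complex.re_le_norm _

lemma supp_le_add {K : Set ℂ} (hK : IsCompact K) {p : ℂ} (hp : p ∈ K) {R : ℝ}
    (hR : ∀ x ∈ K, ‖x‖ ≤ R) (z y : ℂ) : suppFn K z ≤ suppFn K y + R * ‖z - y‖ := by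
  refine supp_le hp fun x hx => ?_
  have h1 := re_le_supp hK hx y
  have h2 := re_mul_le (z - y) x
  have h3 : ‖z - y‖ * ‖x‖ ≤ ‖z - y‖ * R := by gcongr; exact hR x hx
  have h4 : (z * x).re = (y * x).re + ((z - y) * x).re := by
    rw [← Complex.add_re]; congr 1; ring
  linarith

lemma supp_smul {K : Set ℂ} (hK : IsCompact K) {p : ℂ} (hp : p ∈ K) {σ : ℝ} (hσ : 0 ≤ σ)
    (z : ℂ) : suppFn K (σ * z) ≤ σ * suppFn K z := by
  refine supp_le hp fun x hx => ?_
  rw [mul_assoc, Complex.re_ofReal_mul]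
  gcongr
  exact re_le_supp hK hx z

noncomputable def wt (K : Set ℂ) (n : ℕ) (z : ℂ) : ℝ := Real.exp (-(suppFn K z) - ‖z‖ / n)

lemma wt_pos (K : Set ℂ) (n : ℕ) (z : ℂ) : 0 < wt K n z := Real.exp_pos _

noncomputable def PP (u w z : ℂ) : ℂ := dslope (fun z => exp (w * z) - exp (u * z)) 0 z

lemma PP_mul (u w z : ℂ) : z * PP u w z = exp (w * z) - exp (u * z) := by
  have := sub_smul_dslope (fun z => exp (w * z) - exp (u * z)) 0 z
  simpa [PP] using this

lemma PP_zero (u w : ℂ) : PP u w 0 = w - u := by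
  unfold PP
  rw [dslope_same]
  have h1 : ∀ a : ℂ, HasDerivAt (fun z => exp (a * z)) a 0 := by
    intro a
    have := ((hasDerivAt_id (0:ℂ)).const_mul a).cexp
    simpa using this
  exact ((h1 w).sub (h1 u)).deriv

lemma PP_diff (u w : ℂ) : Differentiable ℂ (PP u w) := by
  rw [← differentiableOn_univ]
  refine (Complex.differentiableOn_dslope Filter.univ_mem).2 ?_
  fun_prop

lemma PP_deriv_w (u z w : ℂ) : HasDerivAt (fun w => PP u w z) (exp (z * w)) w := by
  by_cases hz : z = 0
  · subst hz
    simp only [PP_zero, zero_mul, exp_zero]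
    exact (hasDerivAt_id w).sub_const u
  · have : (fun w => PP u w z) = fun w => (exp (z * w) - exp (u * z)) / z := by
      ext w
      rw [eq_div_iff hz, mul_comm, PP_mul, mul_comm w z]
    rw [this]
    have h := (((hasDerivAt_id w).const_mul z).cexp.sub_const (exp (u * z))).div_const z
    convert! h using 1
    simp only [id, mul_one]
    field_simp

lemma PP_bound (u w z : ℂ) :
    ‖PP u w z‖ ≤ ‖w - u‖ * Real.exp ((‖u‖ + ‖w - u‖) * ‖z‖) := by
  by_cases hz : z = 0
  · subst hz
    simp [PP_zero]
  have hz' : 0 < ‖z‖ := norm_pos_iff.2 hz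
  have h1 : z * PP u w z = exp (u * z) * (exp ((w - u) * z) - 1) := by
    rw [PP_mul, mul_sub, ← exp_add]; ring_nf
  have h2 := Complex.norm_exp_sub_sum_le_norm_mul_exp ((w - u) * z) 1
  simp only [Finset.range_one, Finset.sum_singleton, pow_zero, Nat.factorial_zero, Nat.cast_one,
    div_one, pow_one, norm_mul] at h2
  have h3 : ‖exp (u * z)‖ ≤ Real.exp (‖u‖ * ‖z‖) := by
    rw [Complex.norm_exp]; exact Real.exp_le_exp.2 (re_mul_le _ _)
  have h4 : ‖z‖ * ‖PP u w z‖ ≤ Real.exp (‖u‖ * ‖z‖) * (‖w - u‖ * ‖z‖ * Real.exp (‖w - u‖ * ‖z‖)) := by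
    rw [← norm_mul, h1, norm_mul]; gcongr
  rw [add_mul, Real.exp_add]
  refine le_of_mul_le_mul_left ?_ hz'
  linarith

def niceSub (u v : ℂ) : Submodule ℂ (ℂ → ℂ) where
  carrier := {d | Differentiable ℂ d ∧ ∃ C : ℝ, 0 ≤ C ∧
    ∀ z, ‖d z‖ * (1 + ‖z‖) ≤ C * Real.exp (max (z * u).re (z * v).re)}
  zero_mem' := ⟨differentiable_const 0, 0, le_rfl, by simp⟩
  add_mem' := by
    rintro a b ⟨ha, A, hA, ha'⟩ ⟨hb, B, hB, hb'⟩
    refine ⟨ha.add hb, A + B, by positivity, fun z => ?_⟩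
    have h := norm_add_le (a z) (b z)
    calc ‖a z + b z‖ * (1 + ‖z‖) ≤ (‖a z‖ + ‖b z‖) * (1 + ‖z‖) := by gcongr
      _ ≤ _ := by rw [add_mul, add_mul]; exact add_le_add (ha' z) (hb' z)
  smul_mem' := by
    rintro c a ⟨ha, A, hA, ha'⟩
    refine ⟨ha.const_smul c, ‖c‖ * A, by positivity, fun z => ?_⟩
    simp only [Pi.smul_apply, norm_smul]
    rw [mul_assoc, mul_assoc]
    exact mul_le_mul_of_nonneg_left (ha' z) (norm_nonneg c)

lemma PP_nice (u v : ℂ) {t : ℝ} (h0 : 0 ≤ t) (h1 : t ≤ 1) :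
    PP u (u + t * (v - u)) ∈ niceSub u v := by
  refine ⟨PP_diff _ _, 4 + 2 * (‖v - u‖ * Real.exp (‖u‖ + ‖v - u‖ + ‖u‖)), by positivity,
    fun z => ?_⟩
  set w := u + t * (v - u) with hw
  set S := max (z * u).re (z * v).re with hS
  have hu : (u * z).re ≤ S := by rw [mul_comm]; exact le_max_left _ _
  have hwS : (w * z).re ≤ S := by
    have e : (w * z).re = (1 - t) * (z * u).re + t * (z * v).re := by
      have : w * z = ((1 - t : ℝ) : ℂ) * (z * u) + (t : ℂ) * (z * v) := by
        rw [hw]; push_cast; ring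
      rw [this, Complex.add_re, Complex.re_ofReal_mul, Complex.re_ofReal_mul]
    have a1 : (1 - t) * (z * u).re ≤ (1 - t) * S :=
      mul_le_mul_of_nonneg_left (le_max_left _ _) (by linarith)
    have a2 : t * (z * v).re ≤ t * S := mul_le_mul_of_nonneg_left (le_max_right _ _) h0
    rw [e]; linarith
  have hwu : ‖w - u‖ ≤ ‖v - u‖ := by
    rw [hw, add_sub_cancel_left, norm_mul, Complex.norm_real, Real.norm_of_nonneg h0]
    exact mul_le_of_le_one_left (norm_nonneg _) h1
  rcases le_or_gt 1 ‖z‖ with hz | hz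
  · have h2 : ‖z‖ * ‖PP u w z‖ ≤ 2 * Real.exp S := by
      rw [← norm_mul, PP_mul]
      refine (norm_sub_le _ _).trans ?_
      rw [Complex.norm_exp, Complex.norm_exp]
      have := Real.exp_le_exp.2 hu
      have := Real.exp_le_exp.2 hwS
      linarith
    have h3 : ‖PP u w z‖ ≤ ‖z‖ * ‖PP u w z‖ := le_mul_of_one_le_left (norm_nonneg _) hz
    have h4 : 0 ≤ 2 * (‖v - u‖ * Real.exp (‖u‖ + ‖v - u‖ + ‖u‖)) * Real.exp S := by positivity
    linarith
  · have h2 : ‖PP u w z‖ ≤ ‖v - u‖ * Real.exp (‖u‖ + ‖v - u‖) := by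
      refine (PP_bound u w z).trans ?_
      gcongr
      calc (‖u‖ + ‖w - u‖) * ‖z‖ ≤ (‖u‖ + ‖w - u‖) * 1 := by gcongr
        _ ≤ _ := by linarith
    have h3 : -‖u‖ ≤ S := by
      have := re_mul_le (-z) u
      rw [norm_neg, neg_mul, Complex.neg_re] at this
      have h' : ‖z‖ * ‖u‖ ≤ 1 * ‖u‖ := by gcongr
      have := le_max_left (z * u).re (z * v).re
      linarith
    have h5 : Real.exp (‖u‖ + ‖v - u‖) ≤ Real.exp (‖u‖ + ‖v - u‖ + ‖u‖) * Real.exp S := by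
      rw [← Real.exp_add]; apply Real.exp_le_exp.2; linarith
    have h6 := Real.exp_pos S
    calc ‖PP u w z‖ * (1 + ‖z‖) ≤ (‖v - u‖ * Real.exp (‖u‖ + ‖v - u‖)) * 2 := by
          gcongr; linarith
      _ ≤ (‖v - u‖ * (Real.exp (‖u‖ + ‖v - u‖ + ‖u‖) * Real.exp S)) * 2 := by gcongr
      _ ≤ _ := by linarith

/-- weighted element -/
noncomputable def wL (K : Set ℂ) (n : ℕ) (g : ℂ → ℂ) : LInf := toL (fun z => g z * (wt K n z : ℂ))

lemma norm_mul_wt (K : Set ℂ) (n : ℕ) (a z : ℂ) : ‖a * (wt K n z : ℂ)‖ = ‖a‖ * wt K n z := by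
  rw [norm_mul, Complex.norm_real, Real.norm_of_nonneg (wt_pos K n z).le]

lemma wL_apply {K : Set ℂ} {n : ℕ} {g : ℂ → ℂ} {M : ℝ} (h : ∀ z, ‖g z‖ * wt K n z ≤ M) (z : ℂ) :
    wL K n g z = g z * (wt K n z : ℂ) :=
  toL_apply (fun z => by rw [norm_mul_wt]; exact h z) z

lemma wL_norm {K : Set ℂ} {n : ℕ} {g : ℂ → ℂ} {M : ℝ} (h : ∀ z, ‖g z‖ * wt K n z ≤ M) :
    ‖wL K n g‖ ≤ M := by
  refine lp.norm_le_of_forall_le' M (fun z => ?_)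
  rw [wL_apply h, norm_mul_wt]; exact h z

lemma wL_analytic {K : Set ℂ} {n : ℕ} {G : ℂ → ℂ → ℂ} {M : ℝ} {U : Set ℂ} (hU : IsOpen U)
    (h : ∀ s ∈ U, ∀ z, ‖G s z‖ * wt K n z ≤ M)
    (hd : ∀ z, DifferentiableOn ℂ (fun s => G s z) U) :
    AnalyticOnNhd ℂ (fun s => wL K n (G s)) U := by
  refine (diffOn_LInf hU (M := M) (fun z => ?_) (fun s hs => wL_norm (h s hs))).analyticOnNhd hU
  refine ((hd z).mul_const (wt K n z : ℂ)).congr ?_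
  intro s hs
  exact wL_apply (h s hs) z

lemma wL_iter {K : Set ℂ} {n : ℕ} {G : ℂ → ℂ → ℂ} {M : ℝ} {U : Set ℂ} (hU : IsOpen U)
    (h : ∀ s ∈ U, ∀ z, ‖G s z‖ * wt K n z ≤ M)
    (hd : ∀ z, DifferentiableOn ℂ (fun s => G s z) U) {c : ℂ} (hc : c ∈ U) (m : ℕ) (z : ℂ) :
    iteratedDeriv m (fun s => wL K n (G s)) c z
      = iteratedDeriv m (fun s => G s z) c * (wt K n z : ℂ) := by
  have h1 := clm_iteratedDeriv (evL z) (wL_analytic hU h hd c hc) m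
  rw [evL_apply] at h1
  rw [← h1]
  have h2 : (fun s => evL z (wL K n (G s))) =ᶠ[nhds c] fun s => (wt K n z : ℂ) * G s z := by
    filter_upwards [hU.mem_nhds hc] with s hs
    rw [evL_apply, wL_apply (h s hs), mul_comm]
  rw [h2.iteratedDeriv_eq, iteratedDeriv_const_mul_field, mul_comm]

noncomputable def wseq (u v : ℂ) (j : ℕ) : ℂ := u + ((1 / ((j : ℝ) + 1) : ℝ) : ℂ) * (v - u)

noncomputable def VV (K : Set ℂ) (n : ℕ) (u v : ℂ) : Submodule ℂ LInf :=
  (Submodule.span ℂ (Set.range fun j : ℕ => wL K n (PP u (wseq u v j)))).topologicalClosure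


lemma PP_wt_bound {K : Set ℂ} (hK : IsCompact K) {R : ℝ} (hR : ∀ x ∈ K, ‖x‖ ≤ R) {n : ℕ}
    (hn : 0 < n) {u : ℂ} (hu : u ∈ K) {w p : ℂ} (hp : p ∈ K) (hwp : ‖w - p‖ ≤ 1 / n) (z : ℂ) :
    ‖PP u w z‖ * wt K n z ≤ 2 + (2 * R + 1) * Real.exp (4 * R + 1) := by
  have hR0 : 0 ≤ R := (norm_nonneg _).trans (hR u hu)
  have hn1 : (1 : ℝ) ≤ n := by exact_mod_cast hn
  have hn2 : (1 : ℝ) / n ≤ 1 := by rw [div_le_one (by linarith)]; exact hn1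
  rcases le_or_gt 1 ‖z‖ with hz | hz
  · have h3 : ‖PP u w z‖ ≤ ‖z‖ * ‖PP u w z‖ := le_mul_of_one_le_left (norm_nonneg _) hz
    have h2 : ‖z‖ * ‖PP u w z‖ ≤ 2 * Real.exp (suppFn K z + ‖z‖ / n) := by
      rw [← norm_mul, PP_mul]
      refine (norm_sub_le _ _).trans ?_
      rw [Complex.norm_exp, Complex.norm_exp]
      have a1 : (u * z).re ≤ suppFn K z + ‖z‖ / n := by
        have := re_le_supp hK hu z
        rw [mul_comm] at this
        have : 0 ≤ ‖z‖ / n := by positivity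
        linarith
      have a2 : (w * z).re ≤ suppFn K z + ‖z‖ / n := by
        have b1 := re_le_supp hK hp z
        have b2 := re_mul_le (w - p) z
        have b3 : ‖w - p‖ * ‖z‖ ≤ 1 / n * ‖z‖ := by gcongr
        have b4 : (w * z).re = (z * p).re + ((w - p) * z).re := by
          rw [← Complex.add_re]; congr 1; ring
        have b5 : 1 / n * ‖z‖ = ‖z‖ / n := by ring
        linarith
      have := Real.exp_le_exp.2 a1
      have := Real.exp_le_exp.2 a2
      linarith
    calc ‖PP u w z‖ * wt K n z ≤ 2 * Real.exp (suppFn K z + ‖z‖ / n) * wt K n z := by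
          gcongr
          · exact (wt_pos _ _ _).le
          · linarith
      _ = 2 := by
          rw [wt, mul_assoc, ← Real.exp_add]
          ring_nf
          simp
      _ ≤ _ := by
          have : 0 ≤ (2 * R + 1) * Real.exp (4 * R + 1) := by positivity
          linarith
  · have hwu : ‖w - u‖ ≤ 2 * R + 1 := by
      have := norm_add_le (w - p) (p - u)
      have h' := norm_sub_le p u
      rw [sub_add_sub_cancel] at this
      have := hR p hp
      have := hR u hu
      linarith
    have hw : wt K n z ≤ Real.exp R := by
      unfold wt
      apply Real.exp_le_exp.2
      have h1 := re_le_supp hK hu z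
      have h2 := re_mul_le (-z) u
      rw [norm_neg, neg_mul, Complex.neg_re] at h2
      have h3 : ‖z‖ * ‖u‖ ≤ 1 * R := by gcongr; exact hR u hu
      have : 0 ≤ ‖z‖ / n := by positivity
      linarith
    calc ‖PP u w z‖ * wt K n z ≤ ((2 * R + 1) * Real.exp (3 * R + 1)) * Real.exp R := by
          gcongr
          · exact (wt_pos _ _ _).le
          · refine (PP_bound u w z).trans ?_
            gcongr
            calc (‖u‖ + ‖w - u‖) * ‖z‖ ≤ (‖u‖ + ‖w - u‖) * 1 := by gcongr
              _ ≤ _ := by have := hR u hu; linarith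
      _ = (2 * R + 1) * Real.exp (4 * R + 1) := by
          rw [mul_assoc, ← Real.exp_add]; ring_nf
      _ ≤ _ := by linarith

lemma iter_PP {K : Set ℂ} (hK : IsCompact K) (hKc : Convex ℝ K) {n : ℕ}
    (hn : 0 < n) {u v : ℂ} (hu : u ∈ K) (hv : v ∈ K) (huv : u ≠ v) (m : ℕ) :
    ∃ x ∈ VV K n u v, ∀ z, x z = z ^ m * exp (u * z) * (wt K n z : ℂ) := by
  obtain ⟨R, hR⟩ := hK.isBounded.exists_norm_le
  have hn0 : (0 : ℝ) < n := by exact_mod_cast hn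
  set U := Metric.thickening (1 / (n : ℝ)) (segment ℝ u v) with hU
  have hUo : IsOpen U := Metric.isOpen_thickening
  have hUc : IsPreconnected U := ((convex_segment u v).thickening _).isPreconnected
  have huU : u ∈ U := Metric.self_subset_thickening (by positivity) _ (left_mem_segment ℝ u v)
  have hb : ∀ w ∈ U, ∀ z, ‖PP u w z‖ * wt K n z ≤ 2 + (2 * R + 1) * Real.exp (4 * R + 1) := by
    intro w hw z
    obtain ⟨p, hp, hwp⟩ := Metric.mem_thickening_iff.1 hw
    rw [dist_eq_norm] at hwp
    exact PP_wt_bound hK hR hn hu (hKc.segment_subset hu hv hp) hwp.le z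
  have hd : ∀ z, DifferentiableOn ℂ (fun w => PP u w z) U := fun z w _ =>
    (PP_deriv_w u z w).differentiableAt.differentiableWithinAt
  have hA := wL_analytic hUo hb hd
  have hVc : IsClosed (VV K n u v : Set LInf) := Submodule.isClosed_topologicalClosure _
  have hmem : ∀ w ∈ U, wL K n (PP u w) ∈ VV K n u v := by
    refine mem_of_freq hVc hUc hA huU ?_
    have ht : Tendsto (wseq u v) atTop (nhdsWithin u {u}ᶜ) := by
      rw [tendsto_nhdsWithin_iff]
      constructor
      · have h1 : Tendsto (fun j : ℕ => ((1 / ((j : ℝ) + 1) : ℝ) : ℂ)) atTop (nhds ((0 : ℝ) : ℂ)) :=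
          (Complex.continuous_ofReal.tendsto 0).comp tendsto_one_div_add_atTop_nhds_zero_nat
        have h2 := (h1.mul_const (v - u)).const_add u
        rw [Complex.ofReal_zero, zero_mul, add_zero] at h2
        exact h2
      · refine Eventually.of_forall fun j => ?_
        simp only [Set.mem_compl_iff, Set.mem_singleton_iff, wseq, add_eq_left, mul_eq_zero, not_or]
        refine ⟨?_, sub_ne_zero.2 huv.symm⟩
        norm_cast
        positivity
    refine ht.frequently (Frequently.of_forall fun j => ?_)
    exact Submodule.le_topologicalClosure _ (Submodule.subset_span ⟨j, rfl⟩)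
  refine ⟨_, iter_mem hVc hA huU hUo hmem (m + 1), fun z => ?_⟩
  rw [wL_iter hUo hb hd huU, iteratedDeriv_succ']
  have : deriv (fun w => PP u w z) = fun w => exp (z * w) := by
    ext w; exact (PP_deriv_w u z w).deriv
  rw [this, iteratedDeriv_cexp_const_mul, mul_comm u z]

lemma density_s1 {K : Set ℂ} (hK : IsCompact K) (hKc : Convex ℝ K) {n : ℕ}
    (hn : 0 < n) {u v : ℂ} (hu : u ∈ K) (hv : v ∈ K) (huv : u ≠ v) {g : ℂ → ℂ}
    (hg : MemExp K g) : wL K n g ∈ VV K n u v := by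
  obtain ⟨R, hR⟩ := hK.isBounded.exists_norm_le
  have hR0 : 0 ≤ R := (norm_nonneg _).trans (hR u hu)
  have hn0 : (0 : ℝ) < n := by exact_mod_cast hn
  have hn1 : (1 : ℝ) ≤ n := by exact_mod_cast hn
  obtain ⟨M, hM⟩ := hg.2 (4 * n) (by omega)
  have hM' : ∀ y, ‖g y‖ ≤ M * Real.exp (suppFn K y + ‖y‖ / (4 * n)) := by
    intro y
    have h : ‖g y‖ * Real.exp (-(suppFn K y) - ‖y‖ / ((4 * n : ℕ) : ℝ)) ≤ M := hM ⟨y, rfl⟩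
    push_cast at h
    have e : ‖g y‖ = ‖g y‖ * Real.exp (-(suppFn K y) - ‖y‖ / (4 * n)) *
        Real.exp (suppFn K y + ‖y‖ / (4 * n)) := by
      rw [mul_assoc, ← Real.exp_add]; ring_nf; simp
    rw [e]
    gcongr
  have hM0 : 0 ≤ M := by
    have := hM' 0
    by_contra hneg
    have h1 := norm_nonneg (g 0)
    have h2 := Real.exp_pos (suppFn K 0 + ‖(0 : ℂ)‖ / (4 * n))
    nlinarith
  set δ : ℝ := 1 / (4 * n * (R + 1)) with hδ
  have hδ0 : 0 < δ := by positivity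
  have hδ1 : δ ≤ 1 := by
    rw [hδ, div_le_one (by positivity)]
    nlinarith
  have hδ2 : 2 * R * δ ≤ 1 / (2 * n) := by
    have : 1 / (2 * n) - 2 * R * δ = 1 / (2 * n * (R + 1)) := by
      rw [hδ]; field_simp; ring
    have : 0 < 1 / (2 * n * (R + 1)) := by positivity
    linarith
  set U := Metric.thickening δ (segment ℝ (0 : ℂ) 1) with hU
  have hUo : IsOpen U := Metric.isOpen_thickening
  have hUc : IsPreconnected U := ((convex_segment _ _).thickening _).isPreconnected
  have h0U : (0 : ℂ) ∈ U := Metric.self_subset_thickening hδ0 _ (left_mem_segment ℝ _ _)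
  have h1U : (1 : ℂ) ∈ U := Metric.self_subset_thickening hδ0 _ (right_mem_segment ℝ _ _)
  set G : ℂ → ℂ → ℂ := fun s z => exp (u * (1 - s) * z) * g (z * s) with hG
  have hb : ∀ s ∈ U, ∀ z, ‖G s z‖ * wt K n z ≤ M := by
    intro s hs z
    obtain ⟨p, hp, hsp⟩ := Metric.mem_thickening_iff.1 hs
    rw [dist_eq_norm] at hsp
    rw [segment_eq_image] at hp
    obtain ⟨σ, ⟨hσ0, hσ1⟩, rfl⟩ := hp
    have hpσ : (1 - σ) • (0 : ℂ) + σ • (1 : ℂ) = (σ : ℂ) := by simp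
    have hsp : ‖s - (σ : ℂ)‖ < δ := by rw [← hpσ]; exact hsp
    have hs2 : ‖s‖ ≤ 2 := by
      have := norm_add_le (s - σ) σ
      rw [sub_add_cancel, Complex.norm_real, Real.norm_of_nonneg hσ0] at this
      linarith
    have e1 : (u * (1 - s) * z).re ≤ (1 - σ) * suppFn K z + R * δ * ‖z‖ := by
      have : u * (1 - s) * z = ((1 - σ : ℝ) : ℂ) * (z * u) + (-(s - σ)) * (u * z) := by
        push_cast; ring
      rw [this, Complex.add_re, Complex.re_ofReal_mul]
      have a1 := re_mul_le (-(s - σ)) (u * z)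
      rw [norm_neg, norm_mul] at a1
      have a2 : ‖s - σ‖ * (‖u‖ * ‖z‖) ≤ δ * (R * ‖z‖) := by gcongr; exact hR u hu
      have a3 : (1 - σ) * (z * u).re ≤ (1 - σ) * suppFn K z :=
        mul_le_mul_of_nonneg_left (re_le_supp hK hu z) (by linarith)
      linarith
    have e2 : suppFn K (z * s) ≤ σ * suppFn K z + R * δ * ‖z‖ := by
      have a1 := supp_le_add hK hu hR (z * s) (σ * z)
      have a2 := supp_smul hK hu hσ0 z
      have a3 : ‖z * s - σ * z‖ ≤ δ * ‖z‖ := by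
        rw [show z * s - σ * z = (s - σ) * z by ring, norm_mul]; gcongr
      have a4 : R * ‖z * s - σ * z‖ ≤ R * (δ * ‖z‖) := by gcongr
      linarith
    have e3 : ‖z * s‖ / (4 * n) ≤ ‖z‖ / (2 * n) := by
      rw [norm_mul, div_le_div_iff₀ (by positivity) (by positivity)]
      have : ‖z‖ * ‖s‖ ≤ ‖z‖ * 2 := by gcongr
      nlinarith
    have e4 : 2 * R * δ * ‖z‖ ≤ ‖z‖ / (2 * n) := by
      calc 2 * R * δ * ‖z‖ ≤ 1 / (2 * n) * ‖z‖ := by gcongr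
        _ = _ := by ring
    have e5 : ‖z‖ / (2 * n) + ‖z‖ / (2 * n) = ‖z‖ / n := by field_simp; ring
    calc ‖G s z‖ * wt K n z
        ≤ Real.exp ((1 - σ) * suppFn K z + R * δ * ‖z‖) *
          (M * Real.exp (suppFn K (z * s) + ‖z * s‖ / (4 * n))) * wt K n z := by
          have := (wt_pos K n z).le
          rw [hG]
          simp only
          rw [norm_mul, Complex.norm_exp]
          gcongr
          exact hM' _
      _ = M * Real.exp ((1 - σ) * suppFn K z + R * δ * ‖z‖ +
          (suppFn K (z * s) + ‖z * s‖ / (4 * n)) + (-(suppFn K z) - ‖z‖ / n)) := by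
          have h : ∀ a b c : ℝ, Real.exp a * (M * Real.exp b) * Real.exp c
              = M * Real.exp (a + b + c) := by
            intro a b c; rw [Real.exp_add, Real.exp_add]; ring
          exact h _ _ _
      _ ≤ M * 1 := by
          gcongr
          rw [Real.exp_le_one_iff]
          linarith
      _ = M := mul_one M
  have hgd := hg.1
  have hd : ∀ z, DifferentiableOn ℂ (fun s => G s z) U := by
    intro z
    refine Differentiable.differentiableOn ?_
    have : Differentiable ℂ (fun s => g (z * s)) := hgd.comp (by fun_prop)
    refine Differentiable.mul ?_ this
    fun_prop
  have hA := wL_analytic hUo hb hd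
  have hVc : IsClosed (VV K n u v : Set LInf) := Submodule.isClosed_topologicalClosure _
  have hfin := mem_of_iter hVc hUc hA h0U (fun m => ?_) 1 h1U
  · have : G 1 = g := by ext z; simp [hG]
    rwa [this] at hfin
  · obtain ⟨x, hx, hxz⟩ := iter_PP hK hKc hn hu hv huv m
    set H : ℂ → ℂ := fun t => exp (-u * t) * g t with hH
    have hHd : Differentiable ℂ H := by
      refine Differentiable.mul ?_ hgd
      fun_prop
    have : iteratedDeriv m (fun s => wL K n (G s)) 0 = iteratedDeriv m H 0 • x := by
      apply lp.ext
      funext z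
      rw [wL_iter hUo hb hd h0U]
      have hGH : (fun s => G s z) = fun s => exp (u * z) * H (z * s) := by
        ext s
        simp only [hG, hH]
        rw [← mul_assoc, ← exp_add]
        congr 2; ring
      rw [hGH, iteratedDeriv_const_mul_field, iteratedDeriv_comp_const_mul hHd.contDiff]
      simp only [lp.coeFn_smul, Pi.smul_apply, hxz, smul_eq_mul, mul_zero]
      ring
    rw [this]
    exact Submodule.smul_mem _ _ hx

lemma span_repr {K : Set ℂ} (hK : IsCompact K) (hKc : Convex ℝ K) {n : ℕ} (hn : 0 < n) {u v : ℂ}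
    (hu : u ∈ K) (hv : v ∈ K) {x : LInf}
    (hx : x ∈ Submodule.span ℂ (Set.range fun j : ℕ => wL K n (PP u (wseq u v j)))) :
    ∃ d ∈ niceSub u v, ∀ z, x z = d z * (wt K n z : ℂ) := by
  obtain ⟨R, hR⟩ := hK.isBounded.exists_norm_le
  induction hx using Submodule.span_induction with
  | mem x h =>
    obtain ⟨j, rfl⟩ := h
    have t0 : (0 : ℝ) ≤ 1 / ((j : ℝ) + 1) := by positivity
    have t1 : 1 / ((j : ℝ) + 1) ≤ 1 := by
      rw [div_le_one (by positivity)]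
      have : (0 : ℝ) ≤ j := by positivity
      linarith
    refine ⟨_, PP_nice u v t0 t1, fun z => ?_⟩
    have hwK : wseq u v j ∈ K := by
      refine hKc.segment_subset hu hv ?_
      rw [segment_eq_image']
      exact ⟨_, ⟨t0, t1⟩, by simp [wseq]⟩
    exact wL_apply (fun z => PP_wt_bound hK hR hn hu hwK (by simp) z) z
  | zero => exact ⟨0, Submodule.zero_mem _, fun z => by simp⟩
  | add x y _ _ hx hy =>
    obtain ⟨a, ha, ha'⟩ := hx
    obtain ⟨b, hb, hb'⟩ := hy
    exact ⟨a + b, Submodule.add_mem _ ha hb, fun z => by simp [ha', hb', add_mul]⟩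
  | smul c x _ hx =>
    obtain ⟨a, ha, ha'⟩ := hx
    exact ⟨c • a, Submodule.smul_mem _ c ha, fun z => by simp [ha', mul_assoc]⟩

lemma dense_one {K : Set ℂ} (hK : IsCompact K) (hKc : Convex ℝ K) {n : ℕ} (hn : 0 < n) {u v : ℂ}
    (hu : u ∈ K) (hv : v ∈ K) (huv : u ≠ v) :
    ∃ D : ℕ → ℂ → ℂ, (∀ i, D i ∈ niceSub u v) ∧ ∀ g, MemExp K g → ∀ ε > 0, ∃ i, ∀ z,
      ‖D i z - g z‖ * wt K n z ≤ ε := by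
  set S : Submodule ℂ LInf :=
    Submodule.span ℂ (Set.range fun j : ℕ => wL K n (PP u (wseq u v j))) with hS
  have hsep : TopologicalSpace.IsSeparable (S : Set LInf) :=
    (Set.countable_range _).isSeparable.span
  obtain ⟨t, htS, htc, hSt⟩ := hsep.exists_countable_dense_subset
  have htn : t.Nonempty := by
    rw [← closure_nonempty_iff]
    exact ⟨0, hSt S.zero_mem⟩
  obtain ⟨e, rfl⟩ := htc.exists_eq_range htn
  have hrep := fun i => span_repr hK hKc hn hu hv (htS ⟨i, rfl⟩ : e i ∈ S)
  choose D hD hDz using hrep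
  refine ⟨D, hD, fun g hg ε hε => ?_⟩
  have hmem : wL K n g ∈ closure (Set.range e) := by
    have h1 : wL K n g ∈ closure (S : Set LInf) := density_s1 hK hKc hn hu hv huv hg
    exact closure_minimal hSt isClosed_closure h1
  obtain ⟨_, ⟨i, rfl⟩, hi⟩ := Metric.mem_closure_iff.1 hmem ε hε
  refine ⟨i, fun z => ?_⟩
  obtain ⟨M, hM⟩ := hg.2 n hn
  have hgz : wL K n g z = g z * (wt K n z : ℂ) := wL_apply (M := M) (fun z => hM ⟨z, rfl⟩) z
  rw [← norm_mul_wt, sub_mul, ← hDz, ← hgz]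
  rw [dist_comm, dist_eq_norm] at hi
  exact (lp.norm_apply_le_norm ENNReal.top_ne_zero (e i - wL K n g) z).trans hi.le

lemma dense_seq {K : Set ℂ} (hK : IsCompact K) (hKc : Convex ℝ K) {u v : ℂ}
    (hu : u ∈ K) (hv : v ∈ K) (huv : u ≠ v) :
    ∃ D : ℕ → ℂ → ℂ, (∀ i, D i ∈ niceSub u v) ∧ ∀ g, MemExp K g → ∀ n : ℕ, 0 < n → ∀ ε > 0,
      ∀ N : ℕ, ∃ i, N ≤ i ∧ ∀ z, ‖D i z - g z‖ * wt K n z ≤ ε := by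
  have h := fun n : ℕ => dense_one hK hKc (n := n + 1) (Nat.succ_pos n) hu hv huv
  choose D hD hDd using h
  refine ⟨fun i => D i.unpair.1 i.unpair.2.unpair.1, fun i => hD _ _,
    fun g hg n hn ε hε N => ?_⟩
  obtain ⟨i, hi⟩ := hDd (n - 1) g hg ε hε
  refine ⟨Nat.pair (n - 1) (Nat.pair i N), ?_, ?_⟩
  · exact (Nat.right_le_pair i N).trans (Nat.right_le_pair _ _)
  · simp only [Nat.unpair_pair]
    rwa [Nat.sub_add_cancel hn] at hi

lemma nice_translate {K : Set ℂ} (hK : IsCompact K) {n : ℕ} (hn : 0 < n) {u v : ℂ}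
    (hu : u ∈ K) (hv : v ∈ K) (hur : u.re = 0) (hvr : v.re = 0) {d : ℂ → ℂ} {C : ℝ} (hC : 0 ≤ C)
    (hd : ∀ z, ‖d z‖ * (1 + ‖z‖) ≤ C * Real.exp (max (z * u).re (z * v).re)) (m : ℝ) (z : ℂ) :
    ‖d (z + m)‖ * wt K n z ≤ n * (C / (1 + |m|)) := by
  have hn1 : (1 : ℝ) ≤ n := by exact_mod_cast hn
  have h1 := hd (z + m)
  have h2 : max ((z + m) * u).re ((z + m) * v).re ≤ suppFn K z := by
    have e : ∀ w : ℂ, w.re = 0 → ((z + m) * w).re = (z * w).re := by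
      intro w hw
      rw [add_mul, Complex.add_re, Complex.re_ofReal_mul, hw]; simp
    rw [e u hur, e v hvr]
    exact max_le (re_le_supp hK hu z) (re_le_supp hK hv z)
  have h3 : wt K n z * (1 + ‖z‖) ≤ n * Real.exp (-suppFn K z) := by
    have a1 : (1 + ‖z‖) ≤ n * Real.exp (‖z‖ / n) := by
      have b1 := Real.add_one_le_exp (‖z‖ / n)
      have b2 : n * (‖z‖ / n + 1) ≤ n * Real.exp (‖z‖ / n) := by gcongr
      have b3 : n * (‖z‖ / n + 1) = ‖z‖ + n := by field_simp
      linarith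
    calc wt K n z * (1 + ‖z‖) ≤ wt K n z * (n * Real.exp (‖z‖ / n)) := by
          gcongr; exact (wt_pos _ _ _).le
      _ = n * (Real.exp (-(suppFn K z) - ‖z‖ / n) * Real.exp (‖z‖ / n)) := by rw [wt]; ring
      _ = _ := by rw [← Real.exp_add]; ring_nf
  have h4 : 1 + |m| ≤ (1 + ‖z‖) * (1 + ‖z + m‖) := by
    have a1 : |m| ≤ ‖z‖ + ‖z + m‖ := by
      have := norm_sub_le (z + m) z
      rw [add_sub_cancel_left, Complex.norm_real, Real.norm_eq_abs] at this
      linarith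
    have : 0 ≤ ‖z‖ * ‖z + m‖ := by positivity
    nlinarith
  rw [← mul_div_assoc, le_div_iff₀ (by positivity)]
  have hw := (wt_pos K n z).le
  calc ‖d (z + m)‖ * wt K n z * (1 + |m|)
      ≤ ‖d (z + m)‖ * wt K n z * ((1 + ‖z‖) * (1 + ‖z + m‖)) := by gcongr
    _ = (‖d (z + m)‖ * (1 + ‖z + m‖)) * (wt K n z * (1 + ‖z‖)) := by ring
    _ ≤ (C * Real.exp (suppFn K z)) * (n * Real.exp (-suppFn K z)) := by
        refine mul_le_mul (h1.trans ?_) h3 (by positivity) (by positivity)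
        gcongr
    _ = n * C * (Real.exp (suppFn K z) * Real.exp (-suppFn K z)) := by ring
    _ = n * C := by rw [← Real.exp_add]; simp

lemma nice_real {u v : ℂ} (hur : u.re = 0) (hvr : v.re = 0) {d : ℂ → ℂ} {C : ℝ}
    (hd : ∀ z, ‖d z‖ * (1 + ‖z‖) ≤ C * Real.exp (max (z * u).re (z * v).re)) (x : ℝ) :
    ‖d x‖ ≤ C / (1 + |x|) := by
  have := hd x
  rw [Complex.re_ofReal_mul, Complex.re_ofReal_mul, hur, hvr, Complex.norm_real,
    Real.norm_eq_abs] at this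
  rw [le_div_iff₀ (by positivity)]
  simpa using this

lemma exists_L (q : ℝ → ℝ) (hq1 : ∀ r : ℝ, 0 ≤ r → 1 ≤ q r) (hq : Tendsto q atTop atTop)
    (C : ℕ → ℝ) (hC : ∀ i, 0 ≤ C i) (j : ℕ) :
    ∃ L : ℕ, ∀ m : ℕ, L ≤ m → (∀ i ≤ j, C i / (1 + (m : ℝ)) ≤ (1 / 4) ^ j) ∧
      ∀ x : ℝ, C j / (1 + |x - m|) ≤ (1 / 4) ^ j * q |x| := by
  obtain ⟨X, hX⟩ := (tendsto_atTop.1 hq (C j * 4 ^ j)).exists_forall_of_atTop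
  set B : ℝ := ∑ i ∈ Finset.range (j + 1), C i with hB
  obtain ⟨L, hL⟩ := exists_nat_ge (X + B * 4 ^ j + B * 4 ^ j)
  have hBC : ∀ i ≤ j, C i ≤ B := fun i hi =>
    Finset.single_le_sum (f := C) (fun i _ => hC i) (Finset.mem_range.2 (by omega))
  have hB0 : 0 ≤ B := (hC j).trans (hBC j le_rfl)
  have key : ∀ a y : ℝ, a ≤ B → B * 4 ^ j ≤ y → 0 ≤ y → a / (1 + y) ≤ (1 / 4) ^ j := by
    intro a y ha hy h0
    rw [div_le_iff₀ (by positivity)]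
    have e : (1 / 4 : ℝ) ^ j * 4 ^ j = 1 := by rw [← mul_pow]; norm_num
    have hp : (0 : ℝ) < (1 / 4) ^ j := by positivity
    have : (1 / 4 : ℝ) ^ j * (B * 4 ^ j) ≤ (1 / 4) ^ j * (1 + y) := by
      gcongr; linarith
    have e2 : (1 / 4 : ℝ) ^ j * (B * 4 ^ j) = B := by linear_combination B * e
    linarith
  have hB4 : 0 ≤ B * 4 ^ j := by positivity
  obtain ⟨L', hL'⟩ := exists_nat_ge (B * 4 ^ j)
  refine ⟨max L L', fun m hm => ⟨fun i hi => ?_, fun x => ?_⟩⟩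
  · refine key _ _ (hBC i hi) ?_ (by positivity)
    refine hL'.trans ?_
    exact_mod_cast (le_max_right _ _).trans hm
  · have hLm : (L : ℝ) ≤ m := by exact_mod_cast (le_max_left _ _).trans hm
    have hp : (0 : ℝ) < (1 / 4) ^ j := by positivity
    rcases le_or_gt X |x| with hx | hx
    · have h1 := hX _ hx
      have e : (1 / 4 : ℝ) ^ j * 4 ^ j = 1 := by rw [← mul_pow]; norm_num
      calc C j / (1 + |x - m|) ≤ C j := by
            apply div_le_self (hC j)
            have := abs_nonneg (x - m)
            linarith
        _ = (1 / 4) ^ j * (C j * 4 ^ j) := by linear_combination -C j * e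
        _ ≤ _ := by gcongr
    · have h1 : B * 4 ^ j ≤ |x - m| := by
        have := neg_abs_le (x - m)
        have := le_abs_self x
        linarith
      refine (key _ _ (hBC j le_rfl) h1 (abs_nonneg _)).trans ?_
      exact le_mul_of_one_le_right hp.le (hq1 _ (abs_nonneg x))

/-- **Theorem 2.** If `K` contains two distinct purely imaginary points, there is a
Birkhoff-hypercyclic function in `Exp(K)` growing like `O(q(|x|))` on the real axis. -/
theorem stmt1 (q : ℝ → ℝ) (hq1 : ∀ r : ℝ, 0 ≤ r → 1 ≤ q r)
    (hq : Tendsto q atTop atTop)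
    (K : Set ℂ) (hKc : IsCompact K) (hKconv : Convex ℝ K)
    (u v : ℂ) (hu : u ∈ K) (hv : v ∈ K) (huv : u ≠ v)
    (hur : u.re = 0) (hvr : v.re = 0) :
    ∃ f : ℂ → ℂ, HCExp K f ∧ ∃ C : ℝ, ∀ x : ℝ, ‖f (x : ℂ)‖ ≤ C * q |x| := by
  obtain ⟨D, hD, hdense⟩ := dense_seq hKc hKconv hu hv huv
  have hDd : ∀ i, Differentiable ℂ (D i) := fun i => (hD i).1
  choose C hC0 hC using fun i => (hD i).2
  choose L hL using exists_L q hq1 hq C hC0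
  obtain ⟨R, hR⟩ := hKc.isBounded.exists_norm_le
  set k : ℕ → ℕ := fun j => ∑ i ∈ Finset.range (j + 1), L i with hk
  have hkL : ∀ j, L j ≤ k j := fun j =>
    Finset.single_le_sum (f := L) (fun _ _ => Nat.zero_le _) (Finset.mem_range.2 (by omega))
  have hkk : ∀ i j, i < j → k i + L j ≤ k j := by
    intro i j hij
    have h1 : k j = ∑ i ∈ Finset.range j, L i + L j := Finset.sum_range_succ L j
    have h2 : k i ≤ ∑ i ∈ Finset.range j, L i := by
      refine Finset.sum_le_sum_of_subset ?_
      intro a ha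
      rw [Finset.mem_range] at *
      omega
    omega
  have hquarter : ∀ j : ℕ, (1 / 4 : ℝ) ^ j = (1 / 2) ^ j * (1 / 2) ^ j := by
    intro j; rw [← mul_pow]; norm_num
  have hhalf : ∀ j : ℕ, (1 / 4 : ℝ) ^ j ≤ (1 / 2) ^ j := by
    intro j; gcongr; norm_num
  -- size of a single term
  have hterm : ∀ n : ℕ, 0 < n → ∀ j z, ‖D j (z - k j)‖ * wt K n z ≤ n * (1 / 2) ^ j := by
    intro n hn j z
    have h1 := nice_translate hKc hn hu hv hur hvr (hC0 j) (hC j) (-(k j : ℝ)) z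
    have h2 := (hL j (k j) (hkL j)).1 j le_rfl
    rw [abs_neg, Nat.abs_cast] at h1
    push_cast at h1
    rw [← sub_eq_add_neg] at h1
    refine h1.trans ?_
    gcongr
    exact h2.trans (hhalf j)
  -- interaction of two terms
  have hpair : ∀ n : ℕ, 0 < n → ∀ i j, j ≠ i → ∀ z,
      ‖D j (z + k i - k j)‖ * wt K n z ≤ n * ((1 / 2) ^ i * (1 / 2) ^ j) := by
    intro n hn i j hij z
    have h1 := nice_translate hKc hn hu hv hur hvr (hC0 j) (hC j) ((k i : ℝ) - k j) z
    push_cast at h1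
    rw [← add_sub_assoc] at h1
    refine h1.trans ?_
    gcongr
    rcases lt_or_gt_of_ne hij with h | h
    · have h2 := hkk j i h
      have h3 := (hL i (k i - k j) (by omega)).1 j h.le
      rw [Nat.cast_sub (by omega)] at h3
      refine (div_le_div_of_nonneg_left (hC0 j) ?_ ?_).trans (h3.trans ?_)
      · have : (k j : ℝ) ≤ k i := by exact_mod_cast (by omega : k j ≤ k i)
        linarith
      · gcongr; exact le_abs_self _
      · rw [hquarter]
        refine mul_le_mul_of_nonneg_left ?_ (by positivity)
        exact pow_le_pow_of_le_one (by norm_num) (by norm_num) h.le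
    · have h2 := hkk i j h
      have h3 := (hL j (k j - k i) (by omega)).1 j le_rfl
      rw [Nat.cast_sub (by omega)] at h3
      refine (div_le_div_of_nonneg_left (hC0 j) ?_ ?_).trans (h3.trans ?_)
      · have : (k i : ℝ) ≤ k j := by exact_mod_cast (by omega : k i ≤ k j)
        linarith
      · gcongr; rw [abs_sub_comm]; exact le_abs_self _
      · rw [hquarter]
        refine mul_le_mul_of_nonneg_right ?_ (by positivity)
        exact pow_le_pow_of_le_one (by norm_num) (by norm_num) h.le
  have hgeo := hasSum_geometric_two
  have hle_of : ∀ (n : ℕ) (a z : ℂ) (B : ℝ), ‖a‖ * wt K n z ≤ B → ‖a‖ ≤ B / wt K n z := by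
    intro n a z B h
    rwa [le_div_iff₀ (wt_pos K n z)]
  have hsumm : ∀ z, Summable fun j => D j (z - k j) := by
    intro z
    refine Summable.of_norm_bounded
      (g := fun j : ℕ => ((1 : ℕ) / wt K 1 z) * (1 / 2 : ℝ) ^ j) (hgeo.summable.mul_left _) ?_
    intro j
    refine (hle_of 1 _ z _ (hterm 1 one_pos j z)).trans (le_of_eq ?_)
    ring
  set f : ℂ → ℂ := fun z => ∑' j, D j (z - k j) with hf
  have hfdiff : Differentiable ℂ f := by
    intro z0
    have hopen : IsOpen (Metric.ball (0 : ℂ) (‖z0‖ + 1)) := Metric.isOpen_ball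
    have hz0 : z0 ∈ Metric.ball (0 : ℂ) (‖z0‖ + 1) := by simp
    have : DifferentiableOn ℂ f (Metric.ball (0 : ℂ) (‖z0‖ + 1)) := by
      refine Complex.differentiableOn_tsum_of_summable_norm
        (u := fun j : ℕ => Real.exp ((R + 1) * (‖z0‖ + 1)) * (1 / 2 : ℝ) ^ j)
        (hgeo.summable.mul_left _) ?_ hopen ?_
      · intro j
        refine Differentiable.differentiableOn ?_
        exact (hDd j).comp (differentiable_id.sub_const _)
      · intro j w hw
        have hR0 : 0 ≤ R := (norm_nonneg _).trans (hR u hu)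
        have hw' : ‖w‖ ≤ ‖z0‖ + 1 := by
          rw [mem_ball_zero_iff] at hw; exact hw.le
        refine (hle_of 1 _ w _ (hterm 1 one_pos j w)).trans ?_
        have h1 : (wt K 1 w)⁻¹ ≤ Real.exp ((R + 1) * (‖z0‖ + 1)) := by
          rw [wt, ← Real.exp_neg]
          apply Real.exp_le_exp.2
          have h2 : suppFn K w ≤ ‖w‖ * R := by
            refine supp_le hu fun x hx => (re_mul_le w x).trans ?_
            gcongr; exact hR x hx
          have h3 : (R + 1) * ‖w‖ ≤ (R + 1) * (‖z0‖ + 1) := by gcongr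
          push_cast
          linarith
        rw [div_eq_mul_inv, mul_comm]
        push_cast
        rw [one_mul]
        gcongr
    exact (this z0 hz0).differentiableAt (hopen.mem_nhds hz0)
  refine ⟨f, ⟨⟨hfdiff, ?_⟩, ?_⟩, 2, ?_⟩
  · intro n hn
    refine ⟨n * 2, ?_⟩
    rintro _ ⟨z, rfl⟩
    change ‖f z‖ * wt K n z ≤ _
    rw [← le_div_iff₀ (wt_pos K n z)]
    have := tsum_of_norm_bounded (hgeo.mul_left ((n : ℝ) / wt K n z))
      (f := fun j => D j (z - k j)) (fun j => by
        refine (hle_of n _ z _ (hterm n hn j z)).trans (le_of_eq ?_)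
        ring)
    refine this.trans (le_of_eq ?_)
    ring
  · intro g hg n hn ε hε
    obtain ⟨N, hN⟩ := exists_pow_lt_of_lt_one (show 0 < ε / (8 * n) by positivity)
      (show (1 / 2 : ℝ) < 1 by norm_num)
    obtain ⟨i, hNi, hi⟩ := hdense g hg n hn (ε / 4) (by positivity) N
    refine ⟨k i, ?_⟩
    have hbound : expNorm K n (fun z => f (z + (k i : ℂ)) - g z) ≤ ε / 2 := by
      refine csSup_le (Set.range_nonempty _) ?_
      rintro _ ⟨z, rfl⟩
      change ‖f (z + (k i : ℂ)) - g z‖ * wt K n z ≤ _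
      have hs := (hsumm (z + k i)).tsum_eq_add_tsum_ite i
      have h1 : ‖∑' j, ite (j = i) 0 (D j (z + k i - k j))‖
          ≤ (n : ℝ) * (1 / 2) ^ i / wt K n z * 2 := by
        refine tsum_of_norm_bounded (hgeo.mul_left _) (fun j => ?_)
        split_ifs with hji
        · rw [norm_zero]
          have := wt_pos K n z
          positivity
        · refine (hle_of n _ z _ (hpair n hn i j hji z)).trans (le_of_eq ?_)
          ring
      have h2 : f (z + k i) - g z
          = (D i z - g z) + ∑' j, ite (j = i) 0 (D j (z + k i - k j)) := by
        rw [hf]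
        simp only
        rw [hs, add_sub_cancel_right]
        ring
      rw [h2]
      have hw := wt_pos K n z
      have hpow : (1 / 2 : ℝ) ^ i ≤ ε / (8 * n) :=
        (pow_le_pow_of_le_one (by norm_num) (by norm_num) hNi).trans hN.le
      calc _ ≤ (‖D i z - g z‖ + ‖∑' j, ite (j = i) 0 (D j (z + k i - k j))‖) * wt K n z := by
            gcongr; exact norm_add_le _ _
        _ ≤ (‖D i z - g z‖ + (n : ℝ) * (1 / 2) ^ i / wt K n z * 2) * wt K n z := by gcongr
        _ = ‖D i z - g z‖ * wt K n z + n * (1 / 2) ^ i * 2 := by field_simp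
        _ ≤ ε / 4 + n * (ε / (8 * n)) * 2 := by
            gcongr; exact hi z
        _ = ε / 2 := by field_simp; ring
    linarith
  · intro x
    have := tsum_of_norm_bounded (hgeo.mul_left (q |x|))
      (f := fun j => D j ((x : ℂ) - k j)) (fun j => by
        have h1 := nice_real hur hvr (hC j) (x - k j)
        push_cast at h1
        refine h1.trans (((hL j (k j) (hkL j)).2 x).trans ?_)
        rw [mul_comm]
        have : 0 ≤ q |x| := zero_le_one.trans (hq1 _ (abs_nonneg x))
        exact mul_le_mul_of_nonneg_left (hhalf j) this)
    refine this.trans (le_of_eq ?_)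
    ring
end
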